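/- There exists an absolute constant C > 0 such that for all integers t, k ≥ 1, every graph with average degree at least C·(tk)² contains t pairwise vertex-disjoint, pairwise isomorphic balanced subdivisions of the complete graph K_k. In particular, average degree O(k²) forces two vertex-disjoint isomorphic K_k-subdivisions, confirming Verstraëte's conjecture. -/

import Mathlib

/-!
Grouping the branch vertices of one balanced `K_{tk}`-subdivision gives `t` disjoint isomorphic
balanced `K_k`-subdivisions, so it suffices to find a balanced `K_k`-subdivision in every graph of
average degree at least `C * k ^ 2`.

Take a densest subgraph, of average degree about `d`, and let `Z` be its set of vertices of degree
at least `64 * d ^ 2`. If `Z` meets a constant proportion of the edges, then many vertices outside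
`Z` have `k` neighbours in `Z`; using them to subdivide pairs in `Z` one obtains a `K_k` subdivided
once, or a 1-subdivision of a denser graph on the smaller set `Z`, which is treated by induction.

Otherwise `Z` can be deleted. In a bipartite subgraph, an induced subgraph that maximises the
average degree times a slowly decreasing function of its order is an expander with logarithmic
loss. If its order is linear in its average degree `D`, dependent random choice gives a `K_k`
subdivided once. If not, the subdivision is embedded greedily: around each branch vertex a core is
set aside in which balls stay large when the paths already built are deleted, and two large balls
are joined through the expander. The core is made of stars and spiders when `D` is at least a power
of the logarithm of the order; for smaller `D` the branch vertices are far apart and local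
expansion suffices. To give all paths the same length they are routed through many adjusters,
pairs of vertices joined by paths of two lengths that differ by two; choosing the branch vertices
in one colour class takes care of the parity.
-/

open scoped BigOperators

/-- The average degree of a graph `G`: `(1/|G|) * sum of degrees`. -/
noncomputable def avgDeg {V : Type*} (G : SimpleGraph V) : Real :=
  (finsum fun v : V => ((G.neighborSet v).ncard : Real)) / (Nat.card V : Real)

/-- `S` is the vertex set of a copy of `TK_t^(l)` in `G`: a balanced subdivision of the
complete graph `K_t` in which each edge is replaced by a path with `l` internal vertices
(i.e. of length `l + 1`); the paths are pairwise internally vertex disjoint. -/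
def IsTK {V : Type*} (G : SimpleGraph V) (t l : Nat) (S : Set V) : Prop :=
  ∃ b : Fin t → V, Function.Injective b ∧
    ∃ P : ∀ i j : Fin t, i < j → G.Walk (b i) (b j),
      (∀ i j (h : i < j), (P i j h).IsPath) ∧
      (∀ i j (h : i < j), (P i j h).length = l + 1) ∧
      (∀ i j (h : i < j), ∀ i' j' (h' : i' < j'), (i, j) ≠ (i', j') →
        ∀ v : V, v ∈ (P i j h).support → v ∈ (P i' j' h').support →
          (v = b i ∨ v = b j) ∧ (v = b i' ∨ v = b j')) ∧
      S = {v : V | ∃ (i j : Fin t) (h : i < j), v ∈ (P i j h).support}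

/-- `G` contains a copy of `TK_t^(l)`. -/
def HasTK {V : Type*} (G : SimpleGraph V) (t l : Nat) : Prop :=
  ∃ S : Set V, IsTK G t l S

namespace BalancedSubdivision

open Finset SimpleGraph
open scoped Classical

/-! ### Balls, boundaries and partial embeddings -/

section Basic

variable {V : Type*} {G H : SimpleGraph V}

/-- The graph `H` with all vertices of `W` isolated; it plays the role of `H - W` while keeping the
vertex type fixed. -/
def isolate (H : SimpleGraph V) (W : Finset V) : SimpleGraph V where
  Adj x y := H.Adj x y ∧ x ∉ W ∧ y ∉ W
  symm := ⟨fun _ _ h => ⟨h.1.symm, h.2.2, h.2.1⟩⟩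
  loopless := ⟨fun _ h => h.1.ne rfl⟩

lemma isolate_le (H : SimpleGraph V) (W : Finset V) : isolate H W ≤ H := fun _ _ h => h.1

lemma isolate_anti {W W' : Finset V} (h : W ⊆ W') : isolate H W' ≤ isolate H W :=
  fun _ _ hxy => ⟨hxy.1, fun hx => hxy.2.1 (h hx), fun hy => hxy.2.2 (h hy)⟩

lemma notMem_of_mem_support_isolate {W : Finset V} {x y : V} (p : (isolate H W).Walk x y)
    (hx : x ∉ W) : ∀ v ∈ p.support, v ∉ W := by
  induction p with
  | nil => simpa using hx
  | cons h p ih =>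
    intro v hv
    rcases List.mem_cons.1 (Walk.support_cons h p ▸ hv) with rfl | hv
    · exact hx
    · exact ih h.2.2 v hv

lemma exists_walk_isolate {W : Finset V} {x y : V} (p : H.Walk x y) (hp : ∀ v ∈ p.support, v ∉ W) :
    ∃ q : (isolate H W).Walk x y, q.length = p.length :=
  ⟨p.transfer _ fun e he => by
    induction e using Sym2.ind with
    | _ v v' => exact ⟨p.adj_of_mem_edges he, hp _ (p.fst_mem_support_of_mem_edges he),
        hp _ (p.snd_mem_support_of_mem_edges he)⟩, Walk.length_transfer ..⟩

/-- A proper two-colouring of a graph, restricted to a subgraph. -/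
def restrictColoring (χ : H.Coloring Bool) (h : G ≤ H) : G.Coloring Bool :=
  χ.comp (Hom.ofLE h)

/-- The vertices `u` and `v` are joined by a path of length `n` inside `I`. -/
def PathIn (G : SimpleGraph V) (u v : V) (n : ℕ) (I : Finset V) : Prop :=
  ∃ p : G.Walk u v, p.IsPath ∧ p.length = n ∧ ∀ x ∈ p.support, x ∈ I

namespace PathIn

variable {u v w : V} {m n : ℕ} {I J : Finset V}

lemma refl (G : SimpleGraph V) (v : V) : PathIn G v v 0 {v} :=
  ⟨Walk.nil, by simp, by simp, by simp⟩

lemma mono (h : PathIn G u v n I) (hG : G ≤ H) (hIJ : I ⊆ J) : PathIn H u v n J := by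
  obtain ⟨p, hp, hl, hs⟩ := h
  exact ⟨p.mapLe hG, (Walk.isPath_mapLe hG).2 hp, by simpa using hl,
    fun x hx => hIJ (hs x (by simpa using hx))⟩

lemma symm (h : PathIn G u v n I) : PathIn G v u n I := by
  obtain ⟨p, hp, hl, hs⟩ := h
  exact ⟨p.reverse, hp.reverse, by simpa using hl, by simpa using hs⟩

lemma trans (h : PathIn G u v n I) (h' : PathIn G v w m J) (hIJ : ∀ x ∈ I, x ∈ J → x = v) :
    PathIn G u w (n + m) (I ∪ J) := by
  obtain ⟨p, hp, hl, hs⟩ := h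
  obtain ⟨q, hq, hl', hs'⟩ := h'
  refine ⟨p.append q, ?_, by simp [hl, hl'], fun x hx => ?_⟩
  · rw [Walk.isPath_def, Walk.support_append, List.nodup_append']
    refine ⟨hp.support_nodup, hq.support_nodup.tail, fun x hx hx' => ?_⟩
    obtain rfl := hIJ x (hs x hx) (hs' x (List.mem_of_mem_tail hx'))
    have hnodup := hq.support_nodup
    rw [← Walk.cons_tail_support, List.nodup_cons] at hnodup
    exact hnodup.1 hx'
  · rcases (Walk.mem_support_append_iff p q).1 hx with hx | hx
    · exact mem_union_left _ (hs x hx)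
    · exact mem_union_right _ (hs' x hx)

end PathIn

/-- A partially embedded balanced subdivision of `K_k` with branch vertices `b`: the edges in `Q`
are already replaced by paths of length `l + 1`, and `I p` contains the interior of the path that
replaces `p`. -/
structure PartialTK {k : ℕ} (G : SimpleGraph V) (b : Fin k → V) (l : ℕ)
    (Q : Finset (Fin k × Fin k)) (I : Fin k × Fin k → Finset V) : Prop where
  branch_notMem : ∀ p ∈ Q, ∀ m, b m ∉ I p
  disjoint : (Q : Set (Fin k × Fin k)).PairwiseDisjoint I
  path : ∀ p ∈ Q, PathIn G (b p.1) (b p.2) (l + 1) (insert (b p.1) (insert (b p.2) (I p)))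

namespace PartialTK

variable {k l : ℕ} {b : Fin k → V} {Q : Finset (Fin k × Fin k)} {I : Fin k × Fin k → Finset V}

lemma insert_update (h : PartialTK G b l Q I) {e : Fin k × Fin k} (he : e ∉ Q) {J : Finset V}
    (hJQ : Disjoint J (Q.biUnion I)) (hJb : ∀ m, b m ∉ J)
    (hJ : PathIn G (b e.1) (b e.2) (l + 1) (insert (b e.1) (insert (b e.2) J))) :
    PartialTK G b l (insert e Q) (Function.update I e J) := by
  have old : ∀ p ∈ Q, Function.update I e J p = I p := fun p hp =>
    Function.update_of_ne (ne_of_mem_of_not_mem hp he) _ _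
  have disj : ∀ p ∈ Q, Disjoint J (I p) := fun p hp =>
    hJQ.mono_right (subset_biUnion_of_mem I hp)
  refine ⟨fun p hp => ?_, ?_, fun p hp => ?_⟩
  · rcases mem_insert.1 hp with rfl | hp
    · simpa using hJb
    · simpa [old p hp] using h.branch_notMem p hp
  · rw [coe_insert, Set.pairwiseDisjoint_insert_of_notMem (mod_cast he), Function.update_self]
    refine ⟨fun p hp q hq hpq => ?_, fun p hp => by simpa [old p hp] using disj p hp⟩
    simpa [Function.onFun, old p hp, old q hq] using h.disjoint hp hq hpq
  · rcases mem_insert.1 hp with rfl | hp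
    · simpa using hJ
    · simpa [old p hp] using h.path p hp

lemma hasTK (hb : Function.Injective b) (h : PartialTK G b l {p | p.1 < p.2} I) :
    HasTK G k l := by
  have hQ {i j : Fin k} (hij : i < j) : (i, j) ∈ ({p | p.1 < p.2} : Finset (Fin k × Fin k)) := by
    simpa using hij
  choose P hpath hlength hsupport using fun i j (hij : i < j) => h.path (i, j) (hQ hij)
  have branch_of_mem {i j i' j'} (hij : i < j) (hij' : i' < j') (hne : (i, j) ≠ (i', j')) {v}
      (hv : v ∈ (P i j hij).support) (hv' : v ∈ (P i' j' hij').support) :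
      v = b i ∨ v = b j := by
    by_contra hcon
    have hvI : v ∈ I (i, j) := by
      have := hsupport i j hij v hv
      simp only [mem_insert] at this
      tauto
    have hvI' := hsupport i' j' hij' v hv'
    simp only [mem_insert] at hvI'
    rcases hvI' with rfl | rfl | hvI'
    · exact h.branch_notMem _ (hQ hij) _ hvI
    · exact h.branch_notMem _ (hQ hij) _ hvI
    · exact disjoint_left.1 (h.disjoint (hQ hij) (hQ hij') hne) hvI hvI'
  exact ⟨_, b, hb, P, hpath, hlength, fun i j hij i' j' hij' hne v hv hv' =>
    ⟨branch_of_mem hij hij' hne hv hv', branch_of_mem hij' hij hne.symm hv' hv⟩, rfl⟩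

end PartialTK

lemma hasTK_of_greedy {k l : ℕ} (b : Fin k → V) (hb : Function.Injective b)
    (Inv : Finset (Fin k × Fin k) → Finset V → Prop) (h0 : Inv ∅ ∅)
    (hstep : ∀ Q U, Inv Q U → ∀ i j : Fin k, i < j → (i, j) ∉ Q →
      ∃ J : Finset V, Disjoint J U ∧ (∀ m, b m ∉ J) ∧
        PathIn G (b i) (b j) (l + 1) (insert (b i) (insert (b j) J)) ∧
        Inv (insert (i, j) Q) (U ∪ J)) : HasTK G k l := by
  have key (Q : Finset (Fin k × Fin k)) (hQ : ∀ p ∈ Q, p.1 < p.2) :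
      ∃ I : Fin k × Fin k → Finset V, Inv Q (Q.biUnion I) ∧ PartialTK G b l Q I := by
    induction Q using Finset.induction_on with
    | empty => exact ⟨fun _ => ∅, by simpa using h0, by simp, by simp, by simp⟩
    | insert e Q he ih =>
      obtain ⟨I, hInv, hI⟩ := ih fun q hq => hQ q (mem_insert_of_mem hq)
      obtain ⟨J, hJQ, hJb, hJ, hInv'⟩ := hstep Q _ hInv e.1 e.2 (hQ _ (mem_insert_self _ _)) he
      refine ⟨Function.update I e J, ?_, hI.insert_update he hJQ hJb hJ⟩
      rwa [biUnion_insert, Function.update_self, union_comm,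
        biUnion_congr rfl fun q hq => Function.update_of_ne (ne_of_mem_of_not_mem hq he) _ _]
  obtain ⟨I, -, hI⟩ := key {p | p.1 < p.2} (by simp)
  exact hI.hasTK hb

end Basic

section Balls

variable {V : Type*} [Fintype V] {A A' H : SimpleGraph V} {X X' W W' : Finset V} {s t : ℕ}
  {x y : V}

/-- The closed ball of radius `t` around the set `X` in the graph `A`. -/
noncomputable def closedBall (A : SimpleGraph V) (X : Finset V) (t : ℕ) : Finset V :=
  {y | ∃ x ∈ X, ∃ p : A.Walk x y, p.length ≤ t}

/-- The external neighbourhood of `X` in `H`. -/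
noncomputable def outerBoundary (H : SimpleGraph V) (X : Finset V) : Finset V :=
  {y | y ∉ X ∧ ∃ x ∈ X, H.Adj x y}

lemma mem_closedBall : y ∈ closedBall A X t ↔ ∃ x ∈ X, ∃ p : A.Walk x y, p.length ≤ t := by
  simp [closedBall]

lemma mem_closedBall_singleton : y ∈ closedBall A {x} t ↔ ∃ p : A.Walk x y, p.length ≤ t := by
  simp [closedBall]

lemma mem_outerBoundary : y ∈ outerBoundary H X ↔ y ∉ X ∧ ∃ x ∈ X, H.Adj x y := by
  simp [outerBoundary]

lemma subset_closedBall (A : SimpleGraph V) (X : Finset V) (t : ℕ) : X ⊆ closedBall A X t :=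
  fun x hx => mem_closedBall.2 ⟨x, hx, Walk.nil, by simp⟩

lemma closedBall_mono (hA : A ≤ A') (hX : X ⊆ X') (hst : s ≤ t) :
    closedBall A X s ⊆ closedBall A' X' t := by
  intro y hy
  obtain ⟨x, hx, p, hp⟩ := mem_closedBall.1 hy
  exact mem_closedBall.2 ⟨x, hX hx, p.mapLe hA, by simpa using hp.trans hst⟩

lemma closedBall_zero (A : SimpleGraph V) (X : Finset V) : closedBall A X 0 = X := by
  refine Subset.antisymm (fun y hy => ?_) (subset_closedBall _ _ _)
  obtain ⟨x, hx, p, hp⟩ := mem_closedBall.1 hy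
  exact Walk.eq_of_length_eq_zero (Nat.le_zero.1 hp) ▸ hx

lemma mem_closedBall_succ (hx : x ∈ closedBall A X t) (h : A.Adj x y) :
    y ∈ closedBall A X (t + 1) := by
  obtain ⟨z, hz, p, hp⟩ := mem_closedBall.1 hx
  exact mem_closedBall.2 ⟨z, hz, p.concat h, by simpa using hp⟩

lemma mem_closedBall_add (hx : x ∈ closedBall A X s) (hy : y ∈ closedBall A {x} t) :
    y ∈ closedBall A X (s + t) := by
  obtain ⟨z, hz, p, hp⟩ := mem_closedBall.1 hx
  obtain ⟨q, hq⟩ := mem_closedBall_singleton.1 hy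
  exact mem_closedBall.2 ⟨z, hz, p.append q, by rw [Walk.length_append]; omega⟩

lemma mem_closedBall_singleton_symm (hx : x ∈ closedBall A {y} t) : y ∈ closedBall A {x} t := by
  obtain ⟨p, hp⟩ := mem_closedBall_singleton.1 hx
  exact mem_closedBall_singleton.2 ⟨p.reverse, by simpa using hp⟩

lemma exists_geodesic_of_mem_closedBall (h : y ∈ closedBall A {x} t) :
    ∃ p : A.Walk x y, p.IsPath ∧ p.length = A.dist x y ∧ p.length ≤ t := by
  obtain ⟨q, hq⟩ := mem_closedBall_singleton.1 h
  obtain ⟨p, hp, hl⟩ := q.reachable.exists_path_of_dist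
  exact ⟨p, hp, hl, hl.trans_le ((dist_le q).trans hq)⟩

lemma disjoint_closedBall_isolate (t : ℕ) (h : Disjoint X W) :
    Disjoint (closedBall (isolate H W) X t) W := by
  refine disjoint_left.2 fun y hy => ?_
  obtain ⟨x, hx, p, -⟩ := mem_closedBall.1 hy
  exact notMem_of_mem_support_isolate p (disjoint_left.1 h hx) y p.end_mem_support

lemma disjoint_outerBoundary (H : SimpleGraph V) (X : Finset V) :
    Disjoint X (outerBoundary H X) :=
  disjoint_left.2 fun _ hx h => (mem_outerBoundary.1 h).1 hx

lemma closedBall_union_outerBoundary_subset (t : ℕ) (h : Disjoint X W) :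
    closedBall (isolate H W) X t ∪ outerBoundary H (closedBall (isolate H W) X t) ⊆
      closedBall (isolate H W) X (t + 1) ∪ W := by
  intro y hy
  rcases mem_union.1 hy with hy | hy
  · exact mem_union_left _ (closedBall_mono le_rfl subset_rfl (Nat.le_succ t) hy)
  · obtain ⟨-, x, hx, hxy⟩ := mem_outerBoundary.1 hy
    by_cases hw : y ∈ W
    · exact mem_union_right _ hw
    · have hxW : x ∉ W := disjoint_left.1 (disjoint_closedBall_isolate t h) hx
      exact mem_union_left _ (mem_closedBall_succ hx ⟨hxy, hxW, hw⟩)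

end Balls

/-! ### Growth of balls in expanders -/

lemma two_mul_le_of_growth {a : ℕ → ℕ} {M : ℕ} (hM : 1 ≤ M)
    (h : ∀ t < 2 * M, (2 * M + 1) * a t ≤ 2 * M * a (t + 1)) : 2 * a 0 ≤ a (2 * M) := by
  have linear : ∀ t ≤ 2 * M, (2 * M + t) * a 0 ≤ 2 * M * a t := by
    intro t
    induction t with
    | zero => simp
    | succ t ih =>
      intro ht
      have ha : a 0 ≤ a t := by
        have := ih (by omega)
        exact Nat.le_of_mul_le_mul_left ((Nat.mul_le_mul_right _ (by omega)).trans this)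
          (show 0 < 2 * M by omega)
      linarith [ih (by omega), h t (by omega)]
  have := linear (2 * M) le_rfl
  exact Nat.le_of_mul_le_mul_left (by linarith) (show 0 < 2 * M by omega)

lemma two_pow_mul_le_of_growth {a : ℕ → ℕ} {M : ℕ} (hM : 1 ≤ M) (L : ℕ)
    (h : ∀ t < 2 * M * L, (2 * M + 1) * a t ≤ 2 * M * a (t + 1)) :
    2 ^ L * a 0 ≤ a (2 * M * L) := by
  induction L with
  | zero => simp
  | succ L ih =>
    have hdouble := two_mul_le_of_growth (a := fun t => a (2 * M * L + t)) hM fun t ht =>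
      h _ (by rw [mul_add_one]; omega)
    have := ih fun t ht => h t (by rw [mul_add_one]; omega)
    calc 2 ^ (L + 1) * a 0 = 2 * (2 ^ L * a 0) := by ring
      _ ≤ 2 * a (2 * M * L + 0) := by simpa using this
      _ ≤ a (2 * M * (L + 1)) := by simpa [mul_add_one] using hdouble

lemma two_thirds_le_of_growth {a : ℕ → ℕ} {M L ρ D n : ℕ} (hM : 1 ≤ M) (hρ : 2 * M * L ≤ ρ)
    (hn : n ≤ D * 2 ^ L) (hmono : Monotone a) (ha0 : D ≤ a 0)
    (hstep : ∀ t, 2 * n ≤ 3 * a (t + 1) ∨ (2 * M + 1) * a t ≤ 2 * M * a (t + 1)) :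
    2 * n ≤ 3 * a ρ := by
  by_contra! hcon
  have hgrow : ∀ t < 2 * M * L, (2 * M + 1) * a t ≤ 2 * M * a (t + 1) := by
    intro t ht
    have := hmono (show t + 1 ≤ ρ by omega)
    exact (hstep t).resolve_left (by omega)
  have : n ≤ a ρ := calc
    n ≤ 2 ^ L * a 0 := hn.trans (by rw [mul_comm]; gcongr)
    _ ≤ a (2 * M * L) := two_pow_mul_le_of_growth hM L hgrow
    _ ≤ a ρ := hmono hρ
  omega

section Expansion

variable {V : Type*} [Fintype V] {H : SimpleGraph V} {D L M ρ : ℕ}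

/-- Vertex expansion by a factor `1 + 1 / M` up to three quarters of the vertices, in a graph on at
most `D * 2 ^ L` vertices; then `ρ ≥ 2 * M * L` steps take a set of size `D` to two thirds of the
graph. -/
structure Expander (H : SimpleGraph V) (D L M ρ : ℕ) : Prop where
  one_le_M : 1 ≤ M
  le_rho : 2 * M * L ≤ ρ
  card_le : Fintype.card V ≤ D * 2 ^ L
  card_pos : 0 < Fintype.card V
  card_le_mul_card_outerBoundary : ∀ X : Finset V,
    4 * (X ∪ outerBoundary H X).card ≤ 3 * Fintype.card V → X.card ≤ M * (outerBoundary H X).card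

namespace Expander

variable {ι : Type*} (hE : Expander H D L M ρ)

include hE

lemma growth_step {X Y U : Finset V} {w : ℕ} (hXY : X ∪ outerBoundary H X ⊆ Y ∪ U)
    (hU : U.card ≤ w) (hX : 2 * M * w ≤ X.card) (hw : 12 * w ≤ Fintype.card V) :
    2 * Fintype.card V ≤ 3 * Y.card ∨ (2 * M + 1) * X.card ≤ 2 * M * Y.card := by
  have hcard := (card_le_card hXY).trans (card_union_le _ _)
  by_cases hlarge : 4 * (X ∪ outerBoundary H X).card ≤ 3 * Fintype.card V
  · have hexp := hE.card_le_mul_card_outerBoundary X hlarge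
    rw [card_union_of_disjoint (disjoint_outerBoundary H X)] at hcard
    right
    nlinarith
  · left
    omega

lemma two_thirds_le_card_biUnion (J : Finset ι) (E O : ι → Finset V) (W : Finset V) (w : ℕ)
    (hdisj : ∀ j ∈ J, Disjoint (E j) (W ∪ O j))
    (hw : (W ∪ J.biUnion O).card ≤ w) (hEw : 2 * M * w ≤ (J.biUnion E).card)
    (hED : D ≤ (J.biUnion E).card) (hwV : 12 * w ≤ Fintype.card V) :
    2 * Fintype.card V ≤
      3 * (J.biUnion fun j => closedBall (isolate H (W ∪ O j)) (E j) ρ).card := by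
  set B : ℕ → Finset V := fun t => J.biUnion fun j => closedBall (isolate H (W ∪ O j)) (E j) t
    with hB
  have hB0 : B 0 = J.biUnion E := by simp only [hB, closedBall_zero]
  have hmono : Monotone fun t => (B t).card := fun s t hst =>
    card_le_card (biUnion_mono fun j _ => closedBall_mono le_rfl subset_rfl hst)
  have hsub (t : ℕ) : B t ∪ outerBoundary H (B t) ⊆ B (t + 1) ∪ (W ∪ J.biUnion O) := by
    intro y hy
    obtain ⟨j, hj, hy⟩ : ∃ j ∈ J, y ∈ closedBall (isolate H (W ∪ O j)) (E j) t ∪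
        outerBoundary H (closedBall (isolate H (W ∪ O j)) (E j) t) := by
      rcases mem_union.1 hy with hy | hy
      · obtain ⟨j, hj, hy⟩ := mem_biUnion.1 hy
        exact ⟨j, hj, mem_union_left _ hy⟩
      · obtain ⟨hyB, x, hx, hxy⟩ := mem_outerBoundary.1 hy
        obtain ⟨j, hj, hx⟩ := mem_biUnion.1 hx
        exact ⟨j, hj, mem_union_right _ (mem_outerBoundary.2
          ⟨fun h => hyB (mem_biUnion.2 ⟨j, hj, h⟩), x, hx, hxy⟩)⟩
    have := closedBall_union_outerBoundary_subset t (hdisj j hj) hy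
    simp only [mem_union, mem_biUnion, hB] at this ⊢
    rcases this with h | h | h
    · exact Or.inl ⟨j, hj, h⟩
    · exact Or.inr (Or.inl h)
    · exact Or.inr (Or.inr ⟨j, hj, h⟩)
  exact two_thirds_le_of_growth hE.one_le_M hE.le_rho hE.card_le hmono (hB0 ▸ hED)
    fun t => hE.growth_step (hsub t) hw ((hB0 ▸ hEw).trans (hmono (Nat.zero_le t))) hwV

lemma exists_large_closedBall (J : Finset ι) (E O : ι → Finset V) (W : Finset V) (w : ℕ)
    (hdisj : ∀ j ∈ J, Disjoint (E j) (W ∪ O j))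
    (hw : (W ∪ J.biUnion O).card ≤ w) (hEw : 2 * M * w ≤ (J.biUnion E).card)
    (hED : D ≤ (J.biUnion E).card) (hwV : 12 * w ≤ Fintype.card V) :
    ∃ j ∈ J, 2 * Fintype.card V ≤
      3 * J.card * (closedBall (isolate H (W ∪ O j)) (E j) ρ).card := by
  have hunion := hE.two_thirds_le_card_biUnion J E O W w hdisj hw hEw hED hwV
  have hJ : J.Nonempty := by
    by_contra hne
    have := hE.card_pos
    simp only [not_nonempty_iff_eq_empty.1 hne, biUnion_empty, card_empty] at hunion
    omega
  refine exists_le_of_sum_le hJ (f := fun _ => 2 * Fintype.card V) ?_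
  calc ∑ _j ∈ J, 2 * Fintype.card V = J.card * (2 * Fintype.card V) := by
        rw [sum_const, smul_eq_mul]
    _ ≤ J.card * (3 * ∑ j ∈ J, (closedBall (isolate H (W ∪ O j)) (E j) ρ).card) := by
        exact Nat.mul_le_mul_left _ (hunion.trans (Nat.mul_le_mul_left _ card_biUnion_le))
    _ = _ := by rw [← mul_sum]; ring

lemma two_thirds_le_card_closedBall {E W : Finset V} {w : ℕ} (hdisj : Disjoint E W)
    (hw : W.card ≤ w) (hEw : 2 * M * w ≤ E.card) (hED : D ≤ E.card)
    (hwV : 12 * w ≤ Fintype.card V) :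
    2 * Fintype.card V ≤ 3 * (closedBall (isolate H W) E ρ).card := by
  simpa using hE.two_thirds_le_card_biUnion ({()} : Finset Unit) (fun _ => E) (fun _ => ∅) W w
    (by simpa using hdisj) (by simpa using hw) (by simpa using hEw) (by simpa using hED) hwV

lemma exists_mem_closedBall {E E' W : Finset V} {w : ℕ} (hw : W.card ≤ w)
    (hwV : 12 * w ≤ Fintype.card V)
    (hdisj : Disjoint E W) (hEw : 2 * M * w ≤ E.card) (hED : D ≤ E.card)
    (hdisj' : Disjoint E' W) (hEw' : 2 * M * w ≤ E'.card) (hED' : D ≤ E'.card) :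
    ∃ x ∈ E, ∃ y ∈ E', y ∈ closedBall (isolate H W) {x} (2 * ρ) := by
  have hcard := hE.two_thirds_le_card_closedBall hdisj hw hEw hED hwV
  have hcard' := hE.two_thirds_le_card_closedBall hdisj' hw hEw' hED' hwV
  have hmeet :
      ¬ Disjoint (closedBall (isolate H W) E ρ) (closedBall (isolate H W) E' ρ) := by
    intro hd
    have := card_le_univ (closedBall (isolate H W) E ρ ∪ closedBall (isolate H W) E' ρ)
    have := hE.card_pos
    rw [card_union_of_disjoint hd] at *
    omega
  obtain ⟨z, hz, hz'⟩ := not_disjoint_iff.1 hmeet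
  obtain ⟨x, hx, p, hp⟩ := mem_closedBall.1 hz
  obtain ⟨y, hy, q, hq⟩ := mem_closedBall.1 hz'
  refine ⟨x, hx, y, hy, mem_closedBall_singleton.2 ⟨p.append q.reverse, ?_⟩⟩
  rw [Walk.length_append, Walk.length_reverse]
  omega

end Expander

/-- After deleting `W`, which does not contain `b`, the ball of radius `R` around `b` still has at
least `β` vertices. -/
def HasLargeBall (H : SimpleGraph V) (β R : ℕ) (b : V) (W : Finset V) : Prop :=
  b ∉ W ∧ β ≤ (closedBall (isolate H W) {b} R).card

section HasLargeBall

variable {β R w : ℕ} {b b' : V} {W W' : Finset V}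

lemma HasLargeBall.anti (h : HasLargeBall H β R b W) (hW : W' ⊆ W) : HasLargeBall H β R b W' :=
  ⟨fun hb => h.1 (hW hb),
    h.2.trans (card_le_card (closedBall_mono (isolate_anti hW) subset_rfl le_rfl))⟩

lemma HasLargeBall.disjoint (h : HasLargeBall H β R b W) (t : ℕ) :
    Disjoint (closedBall (isolate H W) {b} t) W :=
  disjoint_closedBall_isolate t (by simpa using h.1)

lemma Expander.card_unreached_lt (hE : Expander H D L M ρ) (hβ : 2 * M * w ≤ β) (hβD : D ≤ β)
    (hwV : 12 * w ≤ Fintype.card V) (hb : HasLargeBall H β R b W) (hw : W.card ≤ w) :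
    ({v | v ∉ W ∧ v ∉ closedBall (isolate H W) {b} (R + 2 * ρ)} : Finset V).card < β := by
  by_contra! hcon
  obtain ⟨x, hx, y, hy, hxy⟩ := hE.exists_mem_closedBall hw hwV (hb.disjoint R)
    (hβ.trans hb.2) (hβD.trans hb.2)
    (disjoint_left.2 fun v hv => (mem_filter.1 hv).2.1) (hβ.trans hcon) (hβD.trans hcon)
  exact (mem_filter.1 hy).2.2 (mem_closedBall_add hx hxy)

lemma Expander.mem_closedBall_of_hasLargeBall (hE : Expander H D L M ρ) (hβ : 2 * M * w ≤ β)
    (hβD : D ≤ β) (hwV : 12 * w ≤ Fintype.card V) (hb : HasLargeBall H β R b W)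
    (hb' : HasLargeBall H β R b' W) (hw : W.card ≤ w) :
    b' ∈ closedBall (isolate H W) {b} (R + 2 * ρ + R) := by
  obtain ⟨x, hx, y, hy, hxy⟩ := hE.exists_mem_closedBall hw hwV (hb.disjoint R)
    (hβ.trans hb.2) (hβD.trans hb.2) (hb'.disjoint R) (hβ.trans hb'.2) (hβD.trans hb'.2)
  exact mem_closedBall_add (mem_closedBall_add hx hxy) (mem_closedBall_singleton_symm hy)

end HasLargeBall

end Expansion

/-! ### Adjusters -/

section Geodesics

variable {V : Type*} {A : SimpleGraph V} {b u v x y z : V}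

lemma dist_le_length_of_mem_support (p : A.Walk u v) (hx : x ∈ p.support) :
    A.dist u x ≤ p.length :=
  (dist_le (p.takeUntil x hx)).trans (p.length_takeUntil_le_length hx)

lemma getVert_dist_of_mem_support {p : A.Walk u v} (hp : p.length = A.dist u v)
    (hx : x ∈ p.support) : p.getVert (A.dist u x) = x := by
  rw [← length_eq_dist_of_subwalk hp (p.isSubwalk_takeUntil hx)]
  exact p.getVert_length_takeUntil hx

lemma dist_add_one_eq_of_adj (χ : A.Coloring Bool) (hz : A.Reachable b z) (hzy : A.Adj z y)
    (hle : A.dist b y ≤ A.dist b z) : A.dist b y + 1 = A.dist b z := by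
  obtain ⟨p, hp⟩ := hz.exists_walk_length_eq_dist
  obtain ⟨q, hq⟩ := (hz.trans hzy.reachable).exists_walk_length_eq_dist
  have hle' : A.dist b z ≤ A.dist b y + 1 := by
    simpa [hq] using dist_le (q.concat hzy.symm)
  have hne : A.dist b y ≠ A.dist b z := by
    intro heq
    have hparity := χ.even_length_iff_congr p
    rw [hp, ← heq, ← hq, χ.even_length_iff_congr q] at hparity
    have := χ.valid hzy
    revert hparity this
    cases χ b <;> cases χ y <;> cases χ z <;> simp
  omega

lemma card_level_le_two {p : A.Walk b y} {q : A.Walk b x} (hp : p.length = A.dist b y)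
    (hq : q.length = A.dist b x) (hxz : A.dist b x < A.dist b z) {O : Finset V}
    (hO : ∀ v ∈ O, v = z ∨ v ∈ p.support ∨ v ∈ q.support) (d : ℕ) :
    (O.filter fun v => A.dist b v = d).card ≤ 2 := by
  have hsub : (O.filter fun v => A.dist b v = d) ⊆
      {p.getVert d, if d = A.dist b z then z else q.getVert d} := by
    intro v hv
    obtain ⟨hvO, rfl⟩ := mem_filter.1 hv
    rw [mem_insert, mem_singleton]
    rcases hO v hvO with rfl | hv | hv
    · simp
    · exact Or.inl (getVert_dist_of_mem_support hp hv).symm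
    · have := dist_le_length_of_mem_support q hv
      rw [if_neg (by omega)]
      exact Or.inr (getVert_dist_of_mem_support hq hv).symm
  exact (card_le_card hsub).trans card_le_two

/-- An adjuster from `b` to `y`: inside `insert y O` there are a geodesic from `b` to `y` and a path
that is longer by two, so that a path through it has two possible lengths of the same parity. The
set `O` has at most two vertices at each distance from `b`. -/
structure Adjuster (A : SimpleGraph V) (b y : V) (O : Finset V) : Prop where
  short_path : PathIn A b y (A.dist b y) (insert y O)
  long_path : PathIn A b y (A.dist b y + 2) (insert y O)
  source_mem : b ∈ O
  target_notMem : y ∉ O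
  reachable : ∀ x ∈ O, A.Reachable b x
  dist_le : ∀ x ∈ O, A.dist b x ≤ A.dist b y + 1
  card_level_le : ∀ d, (O.filter fun x => A.dist b x = d).card ≤ 2

lemma exists_adjuster_of_two_parents (hne : y ≠ x) (hzy : A.Adj z y) (hzx : A.Adj z x)
    (hz : A.Reachable b z) (hdy : A.dist b y + 1 = A.dist b z)
    (hdx : A.dist b x + 1 = A.dist b z) (hby : b ≠ y) :
    ∃ O, Adjuster A b y O := by
  obtain ⟨p, hp, hpl⟩ := (hz.trans hzy.reachable).exists_path_of_dist
  obtain ⟨q, hq, hql⟩ := (hz.trans hzx.reachable).exists_path_of_dist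
  set O : Finset V := (insert z (p.support.toFinset ∪ q.support.toFinset)).erase y with hO
  have mem_O {v : V} : v ∈ O ↔ v ≠ y ∧ (v = z ∨ v ∈ p.support ∨ v ∈ q.support) := by
    simp [hO]
  have hyq : y ∉ q.support := by
    intro h
    have := getVert_dist_of_mem_support hql h
    rw [show A.dist b y = q.length by omega, Walk.getVert_length] at this
    exact hne this.symm
  have hzq : z ∉ q.support := by
    intro h
    have := dist_le_length_of_mem_support q h
    omega
  refine ⟨O, ⟨p, hp, hpl, fun v hv => ?_⟩, ⟨(q.concat hzx.symm).concat hzy, ?_, ?_, ?_⟩,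
    mem_O.2 ⟨hby, Or.inr (Or.inl p.start_mem_support)⟩, fun h => (mem_O.1 h).1 rfl, ?_, ?_,
    card_level_le_two hpl hql (by omega) fun v hv => (mem_O.1 hv).2⟩
  · by_cases h : v = y <;> simp [mem_O, h, hv]
  · refine (hq.concat hzq hzx.symm).concat ?_ hzy
    rw [Walk.support_concat, List.mem_append]
    simp [hyq, hzy.ne.symm]
  · simp only [Walk.length_concat]
    omega
  · intro v hv
    simp only [Walk.support_concat, List.mem_append, List.mem_singleton] at hv
    rw [mem_insert, mem_O]
    tauto
  · intro v hv
    rcases (mem_O.1 hv).2 with rfl | hv | hv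
    · exact hz
    · exact (p.takeUntil v hv).reachable
    · exact (q.takeUntil v hv).reachable
  · intro v hv
    rcases (mem_O.1 hv).2 with rfl | hv | hv
    · omega
    · have := dist_le_length_of_mem_support p hv; omega
    · have := dist_le_length_of_mem_support q hv; omega

namespace Adjuster

variable {O : Finset V} (h : Adjuster A b y O)

include h

lemma source_ne_target : b ≠ y := fun hby => h.target_notMem (hby ▸ h.source_mem)

lemma reachable_target : A.Reachable b y :=
  h.short_path.choose.reachable

lemma dist_pos : 0 < A.dist b y :=
  h.reachable_target.pos_dist_of_ne h.source_ne_target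

lemma card_le : O.card ≤ 2 * A.dist b y + 4 := by
  have := card_le_mul_card_image_of_maps_to (s := O) (t := range (A.dist b y + 2))
    (f := A.dist b) (fun x hx => by simpa [Nat.lt_succ_iff] using h.dist_le x hx) 2
    (fun d _ => h.card_level_le d)
  rw [card_range] at this
  omega

end Adjuster

lemma Adjuster.disjoint {H : SimpleGraph V} {W : Finset V} (h : Adjuster (isolate H W) b y O)
    (hb : b ∉ W) : Disjoint O W := by
  refine disjoint_left.2 fun x hx => ?_
  obtain ⟨q⟩ := h.reachable x hx
  exact notMem_of_mem_support_isolate q hb x q.end_mem_support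

end Geodesics

section Adjusters

variable {V : Type*} [Fintype V] {A H : SimpleGraph V} {W W' O S : Finset V} {b y : V}

/-- A vertex of `S` farthest from `b` has two neighbours in `S`, both closer to `b` since the graph
is bipartite. -/
lemma exists_adjuster (χ : A.Coloring Bool) (hS : S.Nonempty) (hb : b ∉ S) {T : ℕ}
    (hT : S ⊆ closedBall A {b} T) (hdeg : ∀ v ∈ S, 2 ≤ (S.filter fun y => A.Adj v y).card) :
    ∃ y ∈ S, ∃ O, Adjuster A b y O ∧ A.dist b y + 1 ≤ T := by
  obtain ⟨z, hz, hmax⟩ := exists_max_image S (fun v => A.dist b v) hS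
  obtain ⟨q, hq⟩ := mem_closedBall_singleton.1 (hT hz)
  obtain ⟨y, hy, x, hx, hne⟩ := one_lt_card.1 (hdeg z hz)
  rw [mem_filter] at hy hx
  have hdy := dist_add_one_eq_of_adj χ q.reachable hy.2 (hmax _ hy.1)
  have hdx := dist_add_one_eq_of_adj χ q.reachable hx.2 (hmax _ hx.1)
  obtain ⟨O, hO⟩ := exists_adjuster_of_two_parents hne hy.2 hx.2 q.reachable hdy hdx
    fun hby => hb (hby ▸ hy.1)
  exact ⟨y, hy.1, O, hO, hdy.trans_le ((dist_le q).trans hq)⟩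

/-- The obstacle `O` is thin as seen from `y`: a vertex of `O` next to the ball of radius `t` around
`y` has one of `t + 3` distances from `b`. -/
lemma Adjuster.card_inter_outerBoundary_le (h : Adjuster (isolate H W) b y O)
    (hO : Disjoint O W) (hW' : W ∪ O ⊆ W') (hy : y ∉ W') (t : ℕ) :
    (O ∩ outerBoundary H (closedBall (isolate H W') {y} t)).card ≤ 2 * (t + 3) := by
  set A := isolate H W
  have maps_to : ∀ x ∈ O ∩ outerBoundary H (closedBall (isolate H W') {y} t),
      A.dist b x ∈ Ico (A.dist b y - (t + 1)) (A.dist b y + 2) := by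
    intro x hx
    obtain ⟨hxO, hx⟩ := mem_inter.1 hx
    obtain ⟨-, v, hv, hvx⟩ := mem_outerBoundary.1 hx
    have hvW' : v ∉ W' :=
      disjoint_left.1 (disjoint_closedBall_isolate t (disjoint_singleton_left.2 hy)) hv
    obtain ⟨q, hq⟩ := mem_closedBall_singleton.1 hv
    have hadj : A.Adj v x :=
      ⟨hvx, fun hvW => hvW' (hW' (mem_union_left _ hvW)), disjoint_left.1 hO hxO⟩
    have hdist : A.dist y x ≤ t + 1 := by
      have := SimpleGraph.dist_le (G := A)
        ((q.mapLe (isolate_anti (subset_union_left.trans hW'))).concat hadj)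
      simp only [Walk.length_concat, Walk.length_map] at this
      omega
    have htriangle := (h.reachable x hxO).dist_triangle_left y
    rw [SimpleGraph.dist_comm (u := x)] at htriangle
    have := h.dist_le x hxO
    rw [mem_Ico]
    omega
  have := card_le_mul_card_image_of_maps_to maps_to 2 fun d _ =>
    (card_le_card (filter_subset_filter _ inter_subset_left)).trans (h.card_level_le d)
  rw [Nat.card_Ico] at this
  omega

/-- From every `b` with a large ball outside `W` starts an adjuster of size at most `A` that avoids
`W` and whose end still has a large ball outside the adjuster, `W` and the prescribed set `F`. -/
def HasAdjusters (H : SimpleGraph V) (w A β R : ℕ) : Prop :=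
  ∀ (b : V) (W F : Finset V), (W ∪ F).card ≤ w → HasLargeBall H β R b W →
    ∃ (y : V) (O : Finset V), Adjuster (isolate H W) b y O ∧
      Disjoint O W ∧ O.card ≤ A ∧ (isolate H W).dist b y ≤ A ∧ HasLargeBall H β R y (W ∪ F ∪ O)

/-- After the removal of any `ω` vertices there is still a nonempty induced subgraph of minimum
degree at least `d`. -/
def RobustMinDegree (H : SimpleGraph V) (d ω : ℕ) : Prop :=
  ∀ W : Finset V, W.card ≤ ω → ∃ S : Finset V, S.Nonempty ∧ Disjoint S W ∧
    ∀ v ∈ S, d ≤ (S.filter fun y => H.Adj v y).card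

end Adjusters

/-! ### Assembling the subdivision -/

section FlexiblePath

variable {V : Type*} {A H : SimpleGraph V} {O U : Finset V} {b v y : V} {n r : ℕ}

/-- Inside `insert b U` there are paths from `v` to `b` of all lengths `n, n + 2, …, n + 2 * r`. -/
def FlexiblePath (H : SimpleGraph V) (v b : V) (n r : ℕ) (U : Finset V) : Prop :=
  ∀ i ≤ r, PathIn H v b (n + 2 * i) (insert b U)

lemma FlexiblePath.refl (H : SimpleGraph V) (v : V) : FlexiblePath H v v 0 0 ∅ := by
  intro i hi
  obtain rfl := Nat.le_zero.1 hi
  exact PathIn.refl H v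

lemma FlexiblePath.append (h : FlexiblePath H v b n r U) (hA : A ≤ H) (hO : Adjuster A b y O)
    (hOU : Disjoint O U) (hyU : y ∉ U) :
    FlexiblePath H v y (n + A.dist b y) (r + 1) (U ∪ O) := by
  have meet : ∀ x ∈ insert b U, x ∈ insert y O → x = b := by
    intro x hx hx'
    rcases mem_insert.1 hx with rfl | hx
    · rfl
    · rcases mem_insert.1 hx' with rfl | hx'
      · exact absurd hx hyU
      · exact absurd hx (disjoint_left.1 hOU hx')
  have hsub : insert b U ∪ insert y O ⊆ insert y (U ∪ O) := by
    have := hO.source_mem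
    grind
  intro i hi
  rcases Nat.le_succ_iff.1 hi with hi | rfl
  · have := ((h i hi).trans (hO.short_path.mono hA subset_rfl) meet).mono le_rfl hsub
    rwa [show n + A.dist b y + 2 * i = n + 2 * i + A.dist b y by ring]
  · have := ((h r le_rfl).trans (hO.long_path.mono hA subset_rfl) meet).mono le_rfl hsub
    rwa [show n + A.dist b y + 2 * (r + 1) = n + 2 * r + (A.dist b y + 2) by ring]

end FlexiblePath

section Connection

variable {V : Type*} {G H : SimpleGraph V}

lemma PathIn.even_iff (χ : H.Coloring Bool) {u v : V} {n : ℕ} {I : Finset V}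
    (h : PathIn H u v n I) : Even n ↔ (χ u ↔ χ v) := by
  obtain ⟨p, -, rfl, -⟩ := h
  exact χ.even_length_iff_congr p

/-- `S` is the vertex set of a geodesic of `G` of length at most `A` that starts at `u`. -/
def IsShortGeodesic (G : SimpleGraph V) (A : ℕ) (u : V) (S : Finset V) : Prop :=
  ∃ (x : V) (p : G.Walk u x), p.length = G.dist u x ∧ p.length ≤ A ∧ p.support.toFinset = S

lemma IsShortGeodesic.card_le {A : ℕ} {u : V} {S : Finset V} (h : IsShortGeodesic G A u S) :
    S.card ≤ A + 1 := by
  obtain ⟨x, p, -, hA, rfl⟩ := h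
  have := List.toFinset_card_le p.support
  rw [Walk.length_support] at this
  omega

lemma IsShortGeodesic.disjoint {A : ℕ} {u : V} {S W : Finset V}
    (h : IsShortGeodesic (isolate H W) A u S) (hu : u ∉ W) : Disjoint S W := by
  obtain ⟨x, p, -, -, rfl⟩ := h
  exact disjoint_left.2 fun v hv =>
    notMem_of_mem_support_isolate p hu v (List.mem_toFinset.1 hv)

lemma FlexiblePath.connect {u v : V} {Sg Sp O U : Finset V} {b y : V} {a n r c d : ℕ}
    (hU : FlexiblePath H y b n r U) (hg : PathIn H u b a Sg) (hp : PathIn H v y d Sp)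
    (hc : c ≤ r) (hSg : Disjoint Sg (O ∪ U)) (hSp : Sp ⊆ insert y O)
    (hUO : Disjoint (insert b U) O) :
    PathIn H u v (a + (n + 2 * c) + d) (Sg ∪ insert b U ∪ Sp) := by
  refine (hg.trans (hU c hc).symm fun x hx hx' => ?_).trans hp.symm fun x hx hx' => ?_
  · exact (mem_insert.1 hx').resolve_right fun h =>
      disjoint_left.1 hSg hx (mem_union_right _ h)
  · refine (mem_insert.1 (hSp hx')).resolve_right fun h => ?_
    rcases mem_union.1 hx with hx | hx
    · exact disjoint_left.1 hSg hx (mem_union_left _ h)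
    · exact disjoint_left.1 hUO hx h

lemma PathIn.exists_isShortGeodesic {A : ℕ} {u x : V} {I : Finset V}
    (h : PathIn G u x (G.dist u x) I) (hA : G.dist u x ≤ A) :
    ∃ S ⊆ I, IsShortGeodesic G A u S ∧ PathIn G u x (G.dist u x) S := by
  obtain ⟨p, hp, hl, hI⟩ := h
  exact ⟨p.support.toFinset, fun x hx => hI x (List.mem_toFinset.1 hx),
    ⟨x, p, hl, hl.trans_le hA, rfl⟩, p, hp, hl, by simp⟩

lemma exists_add_two_mul_add_eq (χ : H.Coloring Bool) {u v b y : V} {I I' I'' : Finset V}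
    {a n d ℓ : ℕ} (hg : PathIn H u b a I) (hU : PathIn H y b n I') (hp : PathIn H v y d I'')
    (hχ : χ u = χ v) (hℓ : Even ℓ) (hle : a + n + d ≤ ℓ) : ∃ c, a + (n + 2 * c) + d = ℓ := by
  have hg := hg.even_iff χ
  have hU := hU.even_iff χ
  have hp := hp.even_iff χ
  obtain ⟨c, hc⟩ : Even (ℓ - (a + n + d)) := by
    rw [Nat.even_sub hle]
    grind
  exact ⟨c, by omega⟩

variable [Fintype V] {w A β R D L M ρ : ℕ} {u v : V} {W W' : Finset V}

lemma HasAdjusters.exists_flexiblePath (hS : HasAdjusters H w A β R) (hv : HasLargeBall H β R v W)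
    (s : ℕ) (hw : W.card + s * A ≤ w) :
    ∃ (b : V) (U : Finset V) (n r : ℕ), FlexiblePath H v b n r U ∧ HasLargeBall H β R b (W ∪ U) ∧
      Disjoint U W ∧ U.card ≤ s * A ∧ s ≤ n ∧ n ≤ s + A ∧ n ≤ A * r := by
  induction s with
  | zero => exact ⟨v, ∅, 0, 0, FlexiblePath.refl H v, by simpa using hv, by simp⟩
  | succ s ih =>
    rw [Nat.succ_mul] at hw ⊢
    obtain ⟨b, U, n, r, hpath, hb, hUW, hU, hsn, hns, hnr⟩ := ih (by omega)
    rcases hsn.lt_or_eq with hsn | rfl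
    · exact ⟨b, U, n, r, hpath, hb, hUW, by omega, hsn, by omega, hnr⟩
    have hcard := card_union_le W U
    obtain ⟨y, O, hO, hOd, hOA, hdist, hy⟩ := hS b (W ∪ U) ∅ (by simp only [union_empty]; omega) hb
    rw [union_empty, union_assoc] at hy
    have hOU : Disjoint O U := hOd.mono_right subset_union_right
    have hdist_pos := hO.dist_pos
    refine ⟨y, U ∪ O, s + (isolate H (W ∪ U)).dist b y, r + 1,
      hpath.append (isolate_le _ _) hO hOU fun h => hy.1 (by simp [h]), hy,
      disjoint_union_left.2 ⟨hUW, hOd.mono_right subset_union_left⟩, ?_, by omega, by omega, ?_⟩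
    · exact (card_union_le U O).trans (by omega)
    · rw [Nat.mul_succ]
      omega

/-- The common length of all replacing paths, when adjusters have size at most `A`: a flexible path
of length about `2 * A ^ 2` is made of at least `2 * A` adjusters, which suffices to absorb the
unknown lengths of the other pieces, at most `3 * A` altogether. -/
def pathLength (A : ℕ) : ℕ := 2 * A * A + 3 * A

lemma exists_pathIn_pathLength (χ : H.Coloring Bool) (hE : Expander H D L M ρ)
    (hβ : 2 * M * w ≤ β) (hβD : D ≤ β) (hwV : 12 * w ≤ Fintype.card V)
    (hA : R + 2 * ρ + R ≤ A) (hAe : Even A) (hA2 : 2 ≤ A) (hS : HasAdjusters H w A β R)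
    (hχ : χ u = χ v) (hw : (W' ∪ W).card + pathLength A * A ≤ w) (hv : HasLargeBall H β R v W')
    (hu : ∀ Z, Disjoint Z W' → Z.card ≤ pathLength A * A → HasLargeBall H β R u (W ∪ Z)) :
    ∃ Z I Sg Sp : Finset V, Disjoint Z W' ∧ Z.card ≤ pathLength A * A ∧ Disjoint I (W' ∪ W) ∧
      IsShortGeodesic (isolate H (W ∪ Z)) A u Sg ∧ IsShortGeodesic (isolate H W') A v Sp ∧
      PathIn H u v (pathLength A) (Sg ∪ I ∪ Sp) ∧
      (Sg ∪ I ∪ Sp).card ≤ pathLength A * A := by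
  have hℓ : pathLength A = 2 * A * A + 3 * A := rfl
  have hℓA : 2 * A * A * A + 2 * (A * A) + A * A = pathLength A * A := by rw [hℓ]; ring
  have hAA : 2 * A ≤ A * A := Nat.mul_le_mul_right A hA2
  obtain ⟨y, O, hO, hOW', hOA, hd, hy⟩ := hS v W' W (by omega) hv
  have hOcard := card_union_le (W' ∪ W) O
  obtain ⟨b, U, n, r, hU, hb, hUd, hUcard, hsn, hns, hnr⟩ :=
    hS.exists_flexiblePath hy (2 * A * A) (by omega)
  have hZ : (O ∪ U).card ≤ pathLength A * A := (card_union_le _ _).trans (by omega)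
  have hZW' : Disjoint (O ∪ U) W' := disjoint_union_left.2
    ⟨hOW', hUd.mono_right (subset_union_left.trans subset_union_left)⟩
  have hu := hu _ hZW' hZ
  have hsub : W ∪ (O ∪ U) ⊆ W' ∪ W ∪ O ∪ U := by grind
  have hWZ : (W ∪ (O ∪ U)).card ≤ w :=
    (card_le_card hsub).trans ((card_union_le _ _).trans (by omega))
  obtain ⟨g, hg, hgd, hgA⟩ := exists_geodesic_of_mem_closedBall <|
    hE.mem_closedBall_of_hasLargeBall hβ hβD hwV hu (hb.anti hsub) hWZ
  obtain ⟨Sg, -, hSg, hgPath⟩ :=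
    PathIn.exists_isShortGeodesic (A := A) ⟨g, hg, hgd, fun _ => List.mem_toFinset.2⟩ (by omega)
  obtain ⟨Sp, hSpO, hSp, hpPath⟩ := hO.short_path.exists_isShortGeodesic hd
  replace hgPath := hgPath.mono (isolate_le _ _) subset_rfl
  replace hpPath := hpPath.mono (isolate_le _ _) subset_rfl
  obtain ⟨c, hc⟩ := exists_add_two_mul_add_eq χ hgPath (hU 0 (Nat.zero_le r)) hpPath hχ
    (ℓ := pathLength A) (by rw [hℓ]; grind) (by omega)
  have hAr : 2 * A ≤ r := Nat.le_of_mul_le_mul_left (c := A) (by linarith) (by omega)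
  have hbd : Disjoint (insert b U) (W' ∪ W ∪ O) :=
    disjoint_insert_left.2 ⟨fun h => hb.1 (mem_union_left _ h), hUd⟩
  refine ⟨O ∪ U, insert b U, Sg, Sp, hZW', hZ, hbd.mono_right subset_union_left, hSg, hSp, ?_, ?_⟩
  · rw [← hc]
    exact hU.connect hgPath hpPath (by omega)
      ((hSg.disjoint hu.1).mono_right subset_union_right) hSpO (hbd.mono_right subset_union_right)
  · have := hSg.card_le
    have := hSp.card_le
    have := card_insert_le b U
    exact (card_union_le _ _).trans ((Nat.add_le_add_right (card_union_le _ _) _).trans (by omega))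

end Connection

section Ports

/-- The number of pairs in `Q` that involve the index `m`. -/
def incidence {k : ℕ} (Q : Finset (Fin k × Fin k)) (m : Fin k) : ℕ :=
  (Q.filter fun p => p.1 = m ∨ p.2 = m).card

variable {k : ℕ} {Q : Finset (Fin k × Fin k)}

lemma incidence_le (Q : Finset (Fin k × Fin k)) (m : Fin k) : incidence Q m ≤ 2 * k := by
  have hsub : (Q.filter fun p => p.1 = m ∨ p.2 = m) ⊆ ({m} ×ˢ univ) ∪ (univ ×ˢ {m}) := by
    intro p hp
    have := (mem_filter.1 hp).2
    grind
  refine (card_le_card hsub).trans ((card_union_le _ _).trans ?_)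
  simp only [card_product, card_singleton, card_univ, Fintype.card_fin]
  omega

lemma incidence_insert {i j : Fin k} (h : (i, j) ∉ Q) (m : Fin k) :
    incidence (insert (i, j) Q) m = incidence Q m + if i = m ∨ j = m then 1 else 0 := by
  unfold incidence
  rw [filter_insert]
  split_ifs with hm
  · rw [card_insert_of_notMem fun hmem => h (mem_filter.1 hmem).1]
  · rfl

variable {V : Type*} [Fintype V] {H : SimpleGraph V} {χ : H.Coloring Bool} {w₁ w A β R : ℕ}

/-- The future branch vertices of a `K_k`-subdivision, each with a protected core around it.
`State m q S` expresses that the branch vertex `m` is still usable after `q` geodesics have left it,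
where `S` is the part of its core that is occupied. -/
structure Ports (H : SimpleGraph V) (χ : H.Coloring Bool) (k w₁ w A β R : ℕ) where
  branch : Fin k → V
  core : Fin k → Finset V
  State : Fin k → ℕ → Finset V → Prop
  branch_mem_core : ∀ m, branch m ∈ core m
  disjoint_core : ∀ m m', m ≠ m' → Disjoint (core m) (core m')
  color_branch : ∀ m, χ (branch m) = true
  card_core_le : (univ.biUnion core).card + w₁ ≤ w
  state_zero : ∀ m, State m 0 ∅
  hasLargeBall : ∀ m q W, State m q (W ∩ core m) → q ≤ 2 * k → branch m ∉ W →
    (W \ univ.biUnion core).card ≤ w₁ → HasLargeBall H β R (branch m) W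
  state_succ : ∀ m q W S, State m q (W ∩ core m) → branch m ∉ W →
    IsShortGeodesic (isolate H W) A (branch m) S →
    State m (q + 1) (W ∩ core m ∪ (S ∩ core m).erase (branch m))

namespace Ports

variable {D L M ρ : ℕ} (P : Ports H χ k w₁ w A β R) {U Z S T : Finset V} {i j m m' : Fin k} {q : ℕ}

/-- The union of all cores except that of `m`. -/
noncomputable def otherCores (m : Fin k) : Finset V := (univ.erase m).biUnion P.core

lemma core_subset_otherCores (h : m ≠ m') : P.core m ⊆ P.otherCores m' :=
  subset_biUnion_of_mem P.core (by simp [h])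

lemma otherCores_subset (m : Fin k) : P.otherCores m ⊆ univ.biUnion P.core :=
  biUnion_subset_biUnion_of_subset_left _ (subset_univ _)

lemma disjoint_otherCores (m : Fin k) : Disjoint (P.otherCores m) (P.core m) :=
  (disjoint_biUnion_left _ _ _).2 fun m' hm' => P.disjoint_core m' m (by simpa using hm')

lemma branch_notMem_core (h : m ≠ m') : P.branch m ∉ P.core m' :=
  disjoint_left.1 (P.disjoint_core m m' h) (P.branch_mem_core m)

lemma branch_injective : Function.Injective P.branch := fun m m' h => by
  by_contra hne
  exact P.branch_notMem_core hne (h ▸ P.branch_mem_core m')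

lemma union_inter_core (hZ : Disjoint Z (P.core m)) :
    (U ∪ P.otherCores m ∪ Z) ∩ P.core m = U ∩ P.core m := by
  rw [union_assoc, union_inter_distrib_right, disjoint_iff_inter_eq_empty.1
    (disjoint_union_left.2 ⟨P.disjoint_otherCores m, hZ⟩), union_empty]

lemma branch_notMem_union (hZ : Disjoint Z (P.core m)) (hU : P.branch m ∉ U) :
    P.branch m ∉ U ∪ P.otherCores m ∪ Z := fun h => hU <| by
  have := mem_inter.2 ⟨h, P.branch_mem_core m⟩
  rw [P.union_inter_core hZ] at this
  exact (mem_inter.1 this).1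

lemma hasLargeBall_union (hZ : Disjoint Z (P.core m)) (hU : P.branch m ∉ U)
    (hState : P.State m q (U ∩ P.core m)) (hq : q ≤ 2 * k) (hcard : U.card + Z.card ≤ w₁) :
    HasLargeBall H β R (P.branch m) (U ∪ P.otherCores m ∪ Z) := by
  refine P.hasLargeBall m q _ (by rwa [P.union_inter_core hZ]) hq (P.branch_notMem_union hZ hU) ?_
  have hsub : (U ∪ P.otherCores m ∪ Z) \ univ.biUnion P.core ⊆ U ∪ Z := by
    have := P.otherCores_subset m
    grind
  exact (card_le_card hsub).trans ((card_union_le _ _).trans hcard)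

lemma state_succ_union (hZ : Disjoint Z (P.core m)) (hU : P.branch m ∉ U)
    (hState : P.State m q (U ∩ P.core m))
    (hS : IsShortGeodesic (isolate H (U ∪ P.otherCores m ∪ Z)) A (P.branch m) S)
    (hT : Disjoint T (P.core m)) :
    P.State m (q + 1) (U ∩ P.core m ∪ ((S ∪ T) ∩ P.core m).erase (P.branch m)) := by
  rw [union_inter_distrib_right S, disjoint_iff_inter_eq_empty.1 hT, union_empty]
  rw [← P.union_inter_core hZ (U := U)] at hState ⊢
  exact P.state_succ m q _ S hState (P.branch_notMem_union hZ hU) hS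

/-- The invariant of the greedy embedding: `U` is the set of interior vertices of the paths that
replace the pairs in `Q`. -/
structure Invariant (Q : Finset (Fin k × Fin k)) (U : Finset V) : Prop where
  state : ∀ m, P.State m (incidence Q m) (U ∩ P.core m)
  branch_notMem : ∀ m, P.branch m ∉ U
  card_le : U.card ≤ Q.card * (pathLength A * A)

lemma exists_route (hE : Expander H D L M ρ) (hβ : 2 * M * w ≤ β) (hβD : D ≤ β)
    (hwV : 12 * w ≤ Fintype.card V) (hA : R + 2 * ρ + R ≤ A) (hAe : Even A) (hA2 : 2 ≤ A)
    (hS : HasAdjusters H w A β R) (hij : i ≠ j) (hU : U.card + 2 * (pathLength A * A) ≤ w₁)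
    (hQ : P.Invariant Q U) :
    ∃ T : Finset V, PathIn H (P.branch i) (P.branch j) (pathLength A) T ∧
      T.card ≤ pathLength A * A ∧ Disjoint T U ∧
      (∀ m, m ≠ i → m ≠ j → Disjoint T (P.core m)) ∧
      ∀ m, m = i ∨ m = j → P.State m (incidence Q m + 1)
        (U ∩ P.core m ∪ (T ∩ P.core m).erase (P.branch m)) := by
  have hj := P.hasLargeBall_union (disjoint_empty_left _) (hQ.branch_notMem j) (hQ.state j)
    (incidence_le Q j) (by simp only [card_empty]; omega)
  have hi : ∀ Z, Disjoint Z (U ∪ P.otherCores j) → Z.card ≤ pathLength A * A →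
      HasLargeBall H β R (P.branch i) (U ∪ P.otherCores i ∪ Z) := fun Z hZ hZcard =>
    P.hasLargeBall_union
      (hZ.mono_right ((P.core_subset_otherCores hij).trans subset_union_right))
      (hQ.branch_notMem i) (hQ.state i) (incidence_le Q i) (by omega)
  have hcard : (U ∪ P.otherCores j ∪ (U ∪ P.otherCores i)).card + pathLength A * A ≤ w := by
    have hsub : U ∪ P.otherCores j ∪ (U ∪ P.otherCores i) ⊆ U ∪ univ.biUnion P.core := by
      have := P.otherCores_subset i
      have := P.otherCores_subset j
      grind
    have := (card_le_card hsub).trans (card_union_le _ _)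
    have := P.card_core_le
    omega
  rw [union_empty] at hj
  obtain ⟨Z, I, Si, Sj, hZ, -, hI, hSi, hSj, hpath, hTcard⟩ := exists_pathIn_pathLength χ hE hβ hβD
    hwV hA hAe hA2 hS ((P.color_branch i).trans (P.color_branch j).symm) hcard hj hi
  have hZi : Disjoint Z (P.core i) :=
    hZ.mono_right ((P.core_subset_otherCores hij).trans subset_union_right)
  have hSi' := (hSi.disjoint (P.branch_notMem_union hZi (hQ.branch_notMem i))).mono_right
    subset_union_left
  have hSj' : Disjoint Sj (U ∪ P.otherCores j) := hSj.disjoint hj.1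
  have hT {X : Finset V} (hXi : X ⊆ U ∪ P.otherCores i) (hXj : X ⊆ U ∪ P.otherCores j) :
      Disjoint (Si ∪ I ∪ Sj) X :=
    disjoint_union_left.2 ⟨disjoint_union_left.2 ⟨hSi'.mono_right hXi,
      hI.mono_right (hXi.trans subset_union_right)⟩, hSj'.mono_right hXj⟩
  refine ⟨_, hpath, hTcard, hT subset_union_left subset_union_left, fun m hmi hmj =>
    hT ((P.core_subset_otherCores hmi).trans subset_union_right)
      ((P.core_subset_otherCores hmj).trans subset_union_right), ?_⟩
  rintro m (rfl | rfl)
  · have hcore := (P.core_subset_otherCores hij).trans (subset_union_right (s₁ := U))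
    rw [union_assoc]
    exact P.state_succ_union hZi (hQ.branch_notMem m) (hQ.state m) hSi <|
      disjoint_union_left.2
        ⟨hI.mono_right (hcore.trans subset_union_left), hSj'.mono_right hcore⟩
  · have hcore := (P.core_subset_otherCores hij.symm).trans (subset_union_right (s₁ := U))
    rw [union_comm (Si ∪ I)]
    exact P.state_succ_union (disjoint_empty_left _) (hQ.branch_notMem m) (hQ.state m)
      (by rwa [union_empty]) <|
      disjoint_union_left.2
        ⟨hSi'.mono_right hcore, hI.mono_right (hcore.trans subset_union_right)⟩

lemma Invariant.insert (hQ : P.Invariant Q U) (hij : i ≠ j) (hmem : (i, j) ∉ Q)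
    (hTcard : T.card ≤ pathLength A * A)
    (hTcore : ∀ m, m ≠ i → m ≠ j → Disjoint T (P.core m))
    (hTstate : ∀ m, m = i ∨ m = j → P.State m (incidence Q m + 1)
        (U ∩ P.core m ∪ (T ∩ P.core m).erase (P.branch m))) :
    P.Invariant (insert (i, j) Q) (U ∪ (T.erase (P.branch i)).erase (P.branch j)) := by
  set J := (T.erase (P.branch i)).erase (P.branch j)
  have hJT : J ⊆ T := (erase_subset _ _).trans (erase_subset _ _)
  refine ⟨fun m => ?_, fun m => ?_, ?_⟩
  · rw [incidence_insert hmem, union_inter_distrib_right]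
    by_cases hm : m = i ∨ m = j
    · have hJm : J ∩ P.core m = (T ∩ P.core m).erase (P.branch m) := by
        have hi := P.branch_notMem_core hij
        have hj := P.branch_notMem_core hij.symm
        grind
      rw [if_pos (hm.imp Eq.symm Eq.symm), hJm]
      exact hTstate m hm
    · have hJm : J ∩ P.core m = ∅ := disjoint_iff_inter_eq_empty.1
        ((hTcore m (hm ∘ Or.inl) (hm ∘ Or.inr)).mono_left hJT)
      rw [if_neg (by tauto), hJm, union_empty]
      exact hQ.state m
  · have hU := hQ.branch_notMem m
    have hT := fun hmi hmj => disjoint_right.1 (hTcore m hmi hmj) (P.branch_mem_core m)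
    grind
  · rw [card_insert_of_notMem hmem, Nat.succ_mul]
    exact (card_union_le _ _).trans
      (Nat.add_le_add hQ.card_le ((card_le_card hJT).trans hTcard))

include P in
theorem hasTK (hE : Expander H D L M ρ) (hβ : 2 * M * w ≤ β) (hβD : D ≤ β)
    (hwV : 12 * w ≤ Fintype.card V) (hA : R + 2 * ρ + R ≤ A) (hAe : Even A) (hA2 : 2 ≤ A)
    (hS : HasAdjusters H w A β R) (hw₁ : (k * k + 2) * (pathLength A * A) ≤ w₁) :
    HasTK H k (pathLength A - 1) := by
  have hℓ : pathLength A - 1 + 1 = pathLength A := Nat.sub_add_cancel (by unfold pathLength; omega)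
  refine hasTK_of_greedy P.branch P.branch_injective P.Invariant
    ⟨fun m => by simpa [incidence] using P.state_zero m, by simp, by simp⟩ ?_
  intro Q U hQ i j hij hmem
  have hQcard : Q.card ≤ k * k := by simpa using card_le_univ Q
  have hU : U.card + 2 * (pathLength A * A) ≤ w₁ := by
    have := hQ.card_le.trans (Nat.mul_le_mul_right _ hQcard)
    linarith
  obtain ⟨T, hpath, hTcard, hTU, hTcore, hTstate⟩ :=
    P.exists_route hE hβ hβD hwV hA hAe hA2 hS hij.ne hU hQ
  have hinsert := hQ.insert P hij.ne hmem hTcard hTcore hTstate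
  refine ⟨(T.erase (P.branch i)).erase (P.branch j),
    hTU.mono_left ((erase_subset _ _).trans (erase_subset _ _)),
    fun m hm => hinsert.branch_notMem m (mem_union_right _ hm), ?_, hinsert⟩
  rw [hℓ]
  exact hpath.mono le_rfl fun x _ => by grind

end Ports

end Ports

/-! ### Adjusters in graphs of robustly large minimum degree -/

section Disjoint

variable {V α : Type*}

lemma exists_fin_pairwise {p : α → Prop} {r : α → α → Prop} (hr : ∀ a b, r a b → r b a) {N : ℕ}
    (h : ∀ n < N, ∀ f : Fin n → α, (∀ j, p (f j)) → ∃ a, p a ∧ ∀ j, r a (f j)) :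
    ∃ f : Fin N → α, (∀ j, p (f j)) ∧ Pairwise fun i j => r (f i) (f j) := by
  induction N with
  | zero => exact ⟨Fin.elim0, fun j => j.elim0, fun i => i.elim0⟩
  | succ N ih =>
    obtain ⟨f, hf, hfr⟩ := ih fun n hn => h n (by omega)
    obtain ⟨a, ha, har⟩ := h N (by omega) f hf
    refine ⟨Fin.cons a f, Fin.cases ha hf, fun i j => ?_⟩
    induction i using Fin.cases <;> induction j using Fin.cases
    · simp
    · exact fun _ => har _
    · exact fun _ => hr _ _ (har _)
    · exact fun hij => hfr fun h => hij (congrArg Fin.succ h)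

lemma exists_fin_pairwise_disjoint {p : α → Prop} {E : α → Finset V} {c N : ℕ}
    (hE : ∀ a, p a → (E a).card ≤ c)
    (h : ∀ B : Finset V, B.card ≤ N * c → ∃ a, p a ∧ Disjoint (E a) B) :
    ∃ f : Fin N → α, (∀ j, p (f j)) ∧ Pairwise fun i j => Disjoint (E (f i)) (E (f j)) := by
  refine exists_fin_pairwise (r := fun a b => Disjoint (E a) (E b)) (fun _ _ h => h.symm)
    fun n hn f hf => ?_
  obtain ⟨a, ha, hdisj⟩ := h (univ.biUnion fun j => E (f j)) <|
    (card_biUnion_le_card_mul _ _ c fun j _ => hE _ (hf j)).trans <| by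
      simpa using Nat.mul_le_mul_right c hn.le
  exact ⟨a, ha, fun j => (disjoint_biUnion_right _ _ _).1 hdisj j (mem_univ _)⟩

lemma card_biUnion_of_card_eq {J : Finset α} {E : α → Finset V} {e : ℕ}
    (hdisj : (J : Set α).PairwiseDisjoint E) (hE : ∀ j ∈ J, (E j).card = e) :
    (J.biUnion E).card = J.card * e := by
  rw [card_biUnion hdisj, sum_const_nat hE]

lemma filter_isolate_adj {H : SimpleGraph V} {S W : Finset V} (h : Disjoint S W) {v : V}
    (hv : v ∈ S) :
    (S.filter fun y => (isolate H W).Adj v y) = S.filter fun y => H.Adj v y :=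
  filter_congr fun _ hy =>
    ⟨fun h => h.1, fun hvy => ⟨hvy, disjoint_left.1 h hv, disjoint_left.1 h hy⟩⟩

end Disjoint

section DenseAdjusters

variable {V : Type*} [Fintype V] {H : SimpleGraph V} {D L M ρ w A β R d e ω N : ℕ} {b y : V}
  {W B E O : Finset V}

lemma RobustMinDegree.exists_adjuster (hrob : RobustMinDegree H d ω) (χ : H.Coloring Bool)
    (hE : Expander H D L M ρ) (hd : 2 ≤ d) (hβ : 2 * M * w ≤ β) (hβD : D ≤ β)
    (hwV : 12 * w ≤ Fintype.card V) (hA : 2 * (R + 2 * ρ) + 2 ≤ A) (hb : HasLargeBall H β R b W)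
    (hW : W.card ≤ w) (hWB : W ⊆ B) (hB : B.card + 1 + β ≤ ω) :
    ∃ S : Finset V, Disjoint S B ∧ (∀ v ∈ S, d ≤ (S.filter fun y => H.Adj v y).card) ∧
      ∃ y ∈ S, ∃ O : Finset V, Adjuster (isolate H W) b y O ∧ Disjoint O W ∧ O.card ≤ A ∧
        (isolate H W).dist b y ≤ A := by
  set unreached : Finset V := {v | v ∉ W ∧ v ∉ closedBall (isolate H W) {b} (R + 2 * ρ)}
    with hunreached
  have hcard : unreached.card < β := hE.card_unreached_lt hβ hβD hwV hb hW
  obtain ⟨S, hS, hdisj, hdeg⟩ := hrob (insert b (B ∪ unreached)) <| by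
    have := card_insert_le b (B ∪ unreached)
    have := card_union_le B unreached
    omega
  have hSB : Disjoint S B := hdisj.mono_right (subset_union_left.trans (subset_insert _ _))
  have hSW : Disjoint S W := hSB.mono_right hWB
  have hbS : b ∉ S := fun h => disjoint_left.1 hdisj h (mem_insert_self _ _)
  have hreached : S ⊆ closedBall (isolate H W) {b} (R + 2 * ρ) := by
    intro v hv
    by_contra hcon
    have hvun : v ∈ unreached := by simpa [hunreached, hcon] using disjoint_left.1 hSW hv
    exact disjoint_left.1 hdisj hv (mem_insert_of_mem (mem_union_right _ hvun))
  obtain ⟨y, hy, O, hO, hdist⟩ := BalancedSubdivision.exists_adjuster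
    (restrictColoring χ (isolate_le H W)) hS hbS hreached fun v hv => by
      rw [filter_isolate_adj hSW hv]
      exact hd.trans (hdeg v hv)
  have := hO.card_le
  exact ⟨S, hSB, hdeg, y, hy, O, hO, hO.disjoint hb.1, by omega, by omega⟩

/-- The pair `(y, O)` is an adjuster from `b` of size at most `A` avoiding `W`, whose end `y` has
the `e` neighbours `E` outside the adjuster and the set `B`. -/
structure IsSpike (H : SimpleGraph V) (A e : ℕ) (b : V) (W B : Finset V) (y : V)
    (O E : Finset V) : Prop where
  adjuster : Adjuster (isolate H W) b y O
  disjoint : Disjoint O W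
  card_le : O.card ≤ A
  dist_le : (isolate H W).dist b y ≤ A
  notMem : y ∉ B
  disjoint_leaves : Disjoint E (B ∪ O)
  card_leaves : E.card = e
  adj : ∀ x ∈ E, H.Adj y x

lemma RobustMinDegree.exists_isSpike (hrob : RobustMinDegree H d ω) (χ : H.Coloring Bool)
    (hE : Expander H D L M ρ) (hd : 2 ≤ d) (hβ : 2 * M * w ≤ β) (hβD : D ≤ β)
    (hwV : 12 * w ≤ Fintype.card V) (hA : 2 * (R + 2 * ρ) + 2 ≤ A) (he : e + A ≤ d)
    (hb : HasLargeBall H β R b W) (hW : W.card ≤ w) (hWB : W ⊆ B) (B' : Finset V)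
    (hB : (B ∪ B').card + 1 + β ≤ ω) :
    ∃ y O E, IsSpike H A e b W B y O E ∧ Disjoint E B' := by
  obtain ⟨S, hSB, hdeg, y, hy, O, hO, hOW, hOA, hdist⟩ := hrob.exists_adjuster χ hE hd hβ hβD hwV
    hA hb hW (hWB.trans subset_union_left) hB
  have hcard : e ≤ ((S.filter fun x => H.Adj y x) \ O).card := by
    have := le_card_sdiff O (S.filter fun x => H.Adj y x)
    have := hdeg y hy
    omega
  obtain ⟨E, hEsub, hEcard⟩ := exists_subset_card_eq hcard
  have hES : E ⊆ S := hEsub.trans (sdiff_subset.trans (filter_subset _ _))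
  rw [disjoint_union_right] at hSB
  exact ⟨y, O, E, ⟨hO, hOW, hOA, hdist, disjoint_left.1 hSB.1 hy,
    disjoint_union_right.2 ⟨hSB.1.mono_left hES, disjoint_of_subset_left hEsub sdiff_disjoint⟩,
    hEcard, fun x hx => (mem_filter.1 (mem_sdiff.1 (hEsub hx)).1).2⟩, hSB.2.mono_left hES⟩

lemma IsSpike.closedBall_subset (h : IsSpike H A e b W B y O E) (hR : ρ + 1 ≤ R) :
    closedBall (isolate H (B ∪ O)) E ρ ⊆ closedBall (isolate H (B ∪ O)) {y} R := by
  intro x hx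
  obtain ⟨v, hv, q, hq⟩ := mem_closedBall.1 hx
  have hadj : (isolate H (B ∪ O)).Adj y v :=
    ⟨h.adj v hv, by simp [h.notMem, h.adjuster.target_notMem], disjoint_left.1 h.disjoint_leaves hv⟩
  exact mem_closedBall_singleton.2 ⟨Walk.cons hadj q, by rw [Walk.length_cons]; omega⟩

/-- Choose `N` adjusters with disjoint sets of `e` leaves; together these leaves expand, so one of
the adjusters ends in a large ball. -/
lemma RobustMinDegree.hasAdjusters (hrob : RobustMinDegree H d ω) (χ : H.Coloring Bool)
    (hE : Expander H D L M ρ) (hd : 2 ≤ d) (hβ : 2 * M * w ≤ β) (hβD : D ≤ β)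
    (hwV : 12 * (w + N * A) ≤ Fintype.card V) (hA : 2 * (R + 2 * ρ) + 2 ≤ A) (hR : ρ + 1 ≤ R)
    (he : e + A ≤ d) (hω : w + N * e + 1 + β ≤ ω) (hM : 2 * M * (w + N * A) ≤ N * e)
    (hDN : D ≤ N * e) (hN : 3 * N * β ≤ 2 * Fintype.card V) (hN0 : 0 < N) :
    HasAdjusters H w A β R := by
  intro b W F hWF hb
  obtain ⟨f, hf, hdisj⟩ := exists_fin_pairwise_disjoint (α := V × Finset V × Finset V) (N := N)
    (p := fun a => IsSpike H A e b W (W ∪ F) a.1 a.2.1 a.2.2) (E := fun a => a.2.2)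
    (fun a ha => ha.card_leaves.le) fun B' hB' => by
      have := card_union_le (W ∪ F) B'
      obtain ⟨y, O, E, hspike, hEB'⟩ := hrob.exists_isSpike χ hE hd hβ hβD (by omega) hA he hb
        ((card_le_card subset_union_left).trans hWF) (B := W ∪ F) subset_union_left B' (by omega)
      exact ⟨(y, O, E), hspike, hEB'⟩
  have hcard : (univ.biUnion fun j => (f j).2.2).card = N * e := by
    rw [card_biUnion_of_card_eq (hdisj.set_pairwise _) fun j _ => (hf j).card_leaves, card_univ,
      Fintype.card_fin]
  have hobst : (univ.biUnion fun j => (f j).2.1).card ≤ N * A := by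
    simpa using card_biUnion_le_card_mul univ _ A fun j _ => (hf j).card_le
  obtain ⟨j, -, hj⟩ := hE.exists_large_closedBall univ (fun j => (f j).2.2) (fun j => (f j).2.1)
    (W ∪ F) (w + N * A) (fun j _ => (hf j).disjoint_leaves)
    ((card_union_le _ _).trans (Nat.add_le_add hWF hobst)) (hcard ▸ hM) (hcard ▸ hDN) hwV
  rw [card_univ, Fintype.card_fin] at hj
  have hspike := hf j
  refine ⟨(f j).1, (f j).2.1, hspike.adjuster, hspike.disjoint, hspike.card_le, hspike.dist_le,
    fun h => (mem_union.1 h).elim hspike.notMem hspike.adjuster.target_notMem,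
    le_trans ?_ (card_le_card (hspike.closedBall_subset hR))⟩
  exact Nat.le_of_mul_le_mul_left (hN.trans hj) (by omega)

end DenseAdjusters

/-! ### Stars and spiders -/

section Stars

variable {V ι κ : Type*} {H : SimpleGraph V} {e : ℕ} {c : ι → V} {E : ι → Finset V}

/-- Vertex-disjoint stars in `H` with centres `c i` and sets `E i` of `e` leaves each. -/
structure IsStarFamily (H : SimpleGraph V) (e : ℕ) (c : ι → V) (E : ι → Finset V) : Prop where
  card_leaves : ∀ i, (E i).card = e
  adj : ∀ i, ∀ x ∈ E i, H.Adj (c i) x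
  disjoint : Pairwise fun i j => Disjoint (insert (c i) (E i)) (insert (c j) (E j))

namespace IsStarFamily

lemma comp (h : IsStarFamily H e c E) {f : κ → ι} (hf : Function.Injective f) :
    IsStarFamily H e (fun i => c (f i)) (fun i => E (f i)) :=
  ⟨fun _ => h.card_leaves _, fun _ => h.adj _, fun _ _ hij => h.disjoint (hf.ne hij)⟩

lemma disjoint_leaves (h : IsStarFamily H e c E) : Pairwise fun i j => Disjoint (E i) (E j) :=
  fun _ _ hij => (h.disjoint hij).mono (subset_insert _ _) (subset_insert _ _)

lemma center_injective (h : IsStarFamily H e c E) : Function.Injective c := by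
  intro i j hij
  by_contra hne
  exact disjoint_left.1 (h.disjoint hne) (mem_insert_self _ _) (hij ▸ mem_insert_self _ _)

lemma center_notMem (h : IsStarFamily H e c E) (i j : ι) : c i ∉ E j := by
  intro hi
  obtain rfl | hij := eq_or_ne i j
  · exact (h.adj _ _ hi).ne rfl
  · exact disjoint_left.1 (h.disjoint hij) (mem_insert_self _ _) (mem_insert_of_mem hi)

lemma disjoint_leaves_centers [Fintype ι] (h : IsStarFamily H e c E) (j : ι) :
    Disjoint (E j) (univ.image c) := by
  simpa [disjoint_right] using fun i => h.center_notMem i j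

lemma card_biUnion_leaves (h : IsStarFamily H e c E) (J : Finset ι) :
    (J.biUnion E).card = J.card * e :=
  card_biUnion_of_card_eq (h.disjoint_leaves.set_pairwise _) fun j _ => h.card_leaves j

end IsStarFamily

variable {d ω N : ℕ}

lemma RobustMinDegree.exists_star (hrob : RobustMinDegree H d ω) (χ : H.Coloring Bool)
    (hd : 1 ≤ d) (he : e ≤ d) {B : Finset V} (hB : B.card ≤ ω) :
    ∃ (c : V) (E : Finset V), χ c = true ∧ E.card = e ∧ (∀ x ∈ E, H.Adj c x) ∧
      Disjoint (insert c E) B := by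
  obtain ⟨S, ⟨v, hv⟩, hSB, hdeg⟩ := hrob B hB
  obtain ⟨c, hc, hχ⟩ : ∃ c ∈ S, χ c = true := by
    obtain ⟨y, hy⟩ := card_pos.1 (hd.trans (hdeg v hv))
    obtain ⟨hyS, hvy⟩ := mem_filter.1 hy
    by_cases h : χ v = true
    · exact ⟨v, hv, h⟩
    · exact ⟨y, hyS, by simpa [h] using χ.valid hvy⟩
  obtain ⟨E, hE, hEcard⟩ := exists_subset_card_eq (he.trans (hdeg c hc))
  exact ⟨c, E, hχ, hEcard, fun x hx => (mem_filter.1 (hE hx)).2,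
    hSB.mono_left (insert_subset hc (hE.trans (filter_subset _ _)))⟩

lemma RobustMinDegree.exists_isStarFamily (hrob : RobustMinDegree H d ω) (χ : H.Coloring Bool)
    (hd : 1 ≤ d) (he : e ≤ d) {W : Finset V} (hω : W.card + N * (e + 1) ≤ ω) :
    ∃ (c : Fin N → V) (E : Fin N → Finset V), IsStarFamily H e c E ∧ (∀ j, χ (c j) = true) ∧
      ∀ j, Disjoint (insert (c j) (E j)) W := by
  obtain ⟨f, hf, hdisj⟩ := exists_fin_pairwise_disjoint (α := V × Finset V) (N := N)
    (p := fun a => χ a.1 = true ∧ a.2.card = e ∧ (∀ x ∈ a.2, H.Adj a.1 x) ∧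
      Disjoint (insert a.1 a.2) W) (E := fun a => insert a.1 a.2)
    (fun a ha => ha.2.1 ▸ card_insert_le _ _) fun B hB => by
      have := card_union_le W B
      obtain ⟨c, E, hχ, hcard, hadj, hE⟩ := hrob.exists_star χ hd he (B := W ∪ B) (by omega)
      rw [disjoint_union_right] at hE
      exact ⟨(c, E), ⟨hχ, hcard, hadj, hE.1⟩, hE.2⟩
  exact ⟨fun j => (f j).1, fun j => (f j).2, ⟨fun j => (hf j).2.1, fun j => (hf j).2.2.1, hdisj⟩,
    fun j => (hf j).1, fun j => (hf j).2.2.2⟩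

end Stars

section Legs

variable {V ι κ : Type*} [Fintype V] {H : SimpleGraph V} {D L M ρ ℓ e e' w p : ℕ}
  {X : Finset V} {c : ι → V} {c' : κ → V} {E : ι → Finset V} {E' : κ → Finset V}

/-- The set `I` contains `v` and the inner vertices of a walk of length at most `ℓ` from `u` to
`v`, and avoids `X` apart from `v`. -/
structure IsLeg (H : SimpleGraph V) (ℓ : ℕ) (X : Finset V) (u v : V) (I : Finset V) : Prop where
  mem : v ∈ I
  card_le : I.card ≤ ℓ
  disjoint : Disjoint (I.erase v) X
  exists_walk : ∃ q : H.Walk u v, q.length ≤ ℓ ∧ ∀ x ∈ q.support, x = u ∨ x ∈ I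

namespace Expander

lemma exists_isLeg [Fintype ι] (hE : Expander H D L M ρ) (hc : IsStarFamily H e c E)
    (hc' : IsStarFamily H e' c' E') (hEX : ∀ i, Disjoint (E i) X) (hEX' : ∀ j, Disjoint (E' j) X)
    (J : Finset κ) (U : Finset V) (hw : (X ∪ U).card ≤ w) (hwV : 12 * w ≤ Fintype.card V)
    (hDw : D ≤ w) (hι : 2 * M * w + U.card ≤ Fintype.card ι * e)
    (hJ : 2 * M * w + U.card ≤ J.card * e') :
    ∃ i, ∃ j ∈ J, ∃ I, IsLeg H (2 * ρ + 2) X (c i) (c' j) I ∧ Disjoint (I.erase (c' j)) U := by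
  have hwM : w ≤ 2 * M * w := Nat.le_mul_of_pos_left _ (by have := hE.one_le_M; omega)
  set F := univ.biUnion E \ U with hF
  set F' := J.biUnion E' \ U with hF'
  have hFcard : 2 * M * w ≤ F.card := by
    have := le_card_sdiff U (univ.biUnion E)
    rw [hc.card_biUnion_leaves, card_univ, ← hF] at this
    omega
  have hFcard' : 2 * M * w ≤ F'.card := by
    have := le_card_sdiff U (J.biUnion E')
    rw [hc'.card_biUnion_leaves, ← hF'] at this
    omega
  have hFX : Disjoint F (X ∪ U) := disjoint_union_right.2
    ⟨disjoint_of_subset_left sdiff_subset <| (disjoint_biUnion_left _ _ _).2 fun i _ => hEX i,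
      sdiff_disjoint⟩
  have hFX' : Disjoint F' (X ∪ U) := disjoint_union_right.2
    ⟨disjoint_of_subset_left sdiff_subset <| (disjoint_biUnion_left _ _ _).2 fun j _ => hEX' j,
      sdiff_disjoint⟩
  obtain ⟨x, hx, y, hy, hxy⟩ := hE.exists_mem_closedBall hw hwV hFX hFcard
    (by omega) hFX' hFcard' (by omega)
  obtain ⟨q, hq⟩ := mem_closedBall_singleton.1 hxy
  obtain ⟨i, -, hxi⟩ := mem_biUnion.1 (mem_sdiff.1 hx).1
  obtain ⟨j, hj, hyj⟩ := mem_biUnion.1 (mem_sdiff.1 hy).1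
  have hqXU : Disjoint q.support.toFinset (X ∪ U) := disjoint_left.2 fun v hv =>
    notMem_of_mem_support_isolate q (disjoint_left.1 hFX hx) v (List.mem_toFinset.1 hv)
  have hsub : (insert (c' j) q.support.toFinset).erase (c' j) ⊆ q.support.toFinset :=
    erase_insert_subset _ _
  refine ⟨i, j, hj, insert (c' j) q.support.toFinset, ⟨mem_insert_self _ _, ?_,
    hqXU.mono hsub subset_union_left, Walk.cons (hc.adj i x hxi)
      ((q.mapLe (isolate_le _ _)).concat (hc'.adj j y hyj).symm), ?_, fun v hv => ?_⟩,
    hqXU.mono hsub subset_union_right⟩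
  · have := (card_insert_le (c' j) q.support.toFinset).trans
      (Nat.succ_le_succ (List.toFinset_card_le _))
    rw [Walk.length_support] at this
    omega
  · simp only [Walk.length_cons, Walk.length_concat, Walk.mapLe, Walk.length_map]
    omega
  · simp only [Walk.support_cons, Walk.support_concat, Walk.support_mapLe_eq_support,
      List.mem_cons, List.mem_append, List.not_mem_nil, or_false] at hv
    simp only [mem_insert, List.mem_toFinset]
    tauto

lemma exists_isLeg_family [Fintype ι] [Fintype κ] (hE : Expander H D L M ρ)
    (hc : IsStarFamily H e c E) (hc' : IsStarFamily H e' c' E') (hEX : ∀ i, Disjoint (E i) X)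
    (hEX' : ∀ j, Disjoint (E' j) X) (hX : ∀ j, c' j ∈ X) (hw : X.card + p * (2 * ρ + 2) ≤ w)
    (hwV : 12 * w ≤ Fintype.card V) (hDw : D ≤ w) (hp : 2 * p ≤ Fintype.card κ)
    (hι : 2 * M * w + p * (2 * ρ + 2) ≤ Fintype.card ι * e)
    (hκ : 2 * (2 * M * w + p * (2 * ρ + 2)) ≤ Fintype.card κ * e') :
    ∃ f : Fin p → ι × κ × Finset V,
      (∀ a, IsLeg H (2 * ρ + 2) X (c (f a).1) (c' (f a).2.1) (f a).2.2) ∧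
      Pairwise fun a b => Disjoint (f a).2.2 (f b).2.2 := by
  refine exists_fin_pairwise (α := ι × κ × Finset V) (r := fun a b => Disjoint a.2.2 b.2.2)
    (p := fun a => IsLeg H (2 * ρ + 2) X (c a.1) (c' a.2.1) a.2.2) (fun _ _ h => h.symm)
    fun n hn f hf => ?_
  set U := univ.biUnion fun a => (f a).2.2
  set J := univ \ univ.image fun a => (f a).2.1
  have hUcard : U.card ≤ p * (2 * ρ + 2) :=
    (card_biUnion_le_card_mul _ _ _ fun a _ => (hf a).card_le).trans <| by
      simpa only [card_univ, Fintype.card_fin] using Nat.mul_le_mul_right _ hn.le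
  have hJcard : Fintype.card κ ≤ 2 * J.card := by
    have : _ ≤ J.card := le_card_sdiff (univ.image fun a => (f a).2.1) univ
    have himage := card_image_le (s := univ) (f := fun a => (f a).2.1)
    simp only [card_univ, Fintype.card_fin] at this himage
    omega
  have hκJ : Fintype.card κ * e' ≤ 2 * (J.card * e') := by
    rw [← mul_assoc]
    exact Nat.mul_le_mul_right _ hJcard
  obtain ⟨i, j, hj, I, hI, hIU⟩ := hE.exists_isLeg hc hc' hEX hEX' J U
    ((card_union_le _ _).trans ((Nat.add_le_add_left hUcard _).trans hw)) hwV hDw (by omega)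
    (by omega)
  refine ⟨(i, j, I), hI, fun a => ?_⟩
  have hfoot : c' j ∉ (f a).2.2 := by
    intro h
    by_cases heq : c' j = c' (f a).2.1
    · exact (mem_sdiff.1 hj).2 (mem_image.2 ⟨a, mem_univ _, (hc'.center_injective heq).symm⟩)
    · exact disjoint_left.1 (hf a).disjoint (mem_erase.2 ⟨heq, h⟩) (hX j)
  rw [← insert_erase hI.mem, disjoint_insert_left]
  exact ⟨hfoot, hIU.mono_right (subset_biUnion_of_mem (fun a => (f a).2.2) (mem_univ a))⟩

end Expander

end Legs

section Spiders

variable {V ι : Type*}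

lemma card_filter_not_disjoint_le {J : Finset ι} {A : ι → Finset V} {W : Finset V}
    (hA : (J : Set ι).PairwiseDisjoint A) :
    (J.filter fun i => ¬ Disjoint (A i) W).card ≤ (W ∩ J.biUnion A).card := by
  have hsub : (J.filter fun i => ¬ Disjoint (A i) W).biUnion (fun i => W ∩ A i) ⊆
      W ∩ J.biUnion A := by
    rw [inter_biUnion]
    exact biUnion_subset_biUnion_of_subset_left _ (filter_subset _ _)
  refine le_trans ?_ (card_le_card hsub)
  refine card_le_card_biUnion (fun i hi j hj hij => ?_) fun i hi => ?_
  · exact (hA (filter_subset _ _ hi) (filter_subset _ _ hj) hij).mono inter_subset_right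
      inter_subset_right
  · rw [inter_comm]
    exact not_disjoint_iff_nonempty_inter.1 (mem_filter.1 hi).2

lemma card_filter_lt_card_inter_mul_le {J : Finset ι} {E : ι → Finset V} {W : Finset V}
    (hE : (J : Set ι).PairwiseDisjoint E) (z : ℕ) :
    (J.filter fun i => z < 2 * (W ∩ E i).card).card * z ≤ 2 * W.card := by
  set K := J.filter fun i => z < 2 * (W ∩ E i).card
  calc K.card * z = ∑ _i ∈ K, z := by rw [sum_const, smul_eq_mul]
    _ ≤ ∑ i ∈ K, 2 * (W ∩ E i).card := sum_le_sum fun i hi => (mem_filter.1 hi).2.le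
    _ = 2 * (K.biUnion fun i => W ∩ E i).card := by
        rw [← mul_sum, card_biUnion fun i hi j hj hij =>
          (hE (filter_subset _ _ hi) (filter_subset _ _ hj) hij).mono inter_subset_right
            inter_subset_right]
    _ ≤ 2 * W.card := by
        gcongr
        exact biUnion_subset.2 fun i _ => inter_subset_left

/-- A vertex `u` joined by walks of length at most `ℓ`, inside disjoint sets `leg i`, to the centres
`foot i` of disjoint stars with `z` leaves. The legs may meet the leaves. -/
structure IsSpider (H : SimpleGraph V) (ℓ z : ℕ) (u : V) (foot : ι → V)
    (leg leaves : ι → Finset V) : Prop where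
  isStarFamily : IsStarFamily H z foot leaves
  foot_mem : ∀ i, foot i ∈ leg i
  disjoint_leg : Pairwise fun i j => Disjoint (leg i) (leg j)
  exists_walk : ∀ i, ∃ q : H.Walk u (foot i), q.length ≤ ℓ ∧ ∀ x ∈ q.support, x = u ∨ x ∈ leg i

namespace IsSpider

variable {H : SimpleGraph V} {ℓ z w β R s : ℕ} {u : V} {foot : ι → V} {leg leaves : ι → Finset V}
  {W : Finset V}

variable [Fintype V]

lemma leaves_sdiff_subset (h : IsSpider H ℓ z u foot leg leaves) (hR : ℓ + 1 ≤ R) (hu : u ∉ W)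
    {i : ι} (hi : Disjoint (leg i) W) :
    leaves i \ W ⊆ closedBall (isolate H W) {u} R := by
  intro x hx
  obtain ⟨hx, hxW⟩ := mem_sdiff.1 hx
  obtain ⟨q, hq, hsupp⟩ := h.exists_walk i
  obtain ⟨q', hq'⟩ := exists_walk_isolate (W := W) q fun v hv =>
    (hsupp v hv).elim (fun hvu => hvu ▸ hu) fun hv => disjoint_left.1 hi hv
  have hadj : (isolate H W).Adj (foot i) x :=
    ⟨h.isStarFamily.adj i x hx, disjoint_left.1 hi (h.foot_mem i), hxW⟩
  exact mem_closedBall_singleton.2 ⟨q'.concat hadj, by rw [Walk.length_concat]; omega⟩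

lemma hasLargeBall [Fintype ι] (h : IsSpider H ℓ z u foot leg leaves) (hz : 1 ≤ z)
    (hs : 4 * s ≤ Fintype.card ι) (hw : 8 * w ≤ Fintype.card ι * z)
    (hβ : 4 * β ≤ Fintype.card ι * z) (hR : ℓ + 1 ≤ R) (hu : u ∉ W)
    (hWleg : (W ∩ univ.biUnion leg).card ≤ s) (hW : W.card ≤ w) : HasLargeBall H β R u W := by
  refine ⟨hu, ?_⟩
  have hdisj := h.isStarFamily.disjoint_leaves
  set hit : Finset ι := {i | ¬ Disjoint (leg i) W} with hhit
  set lost : Finset ι := {i | z < 2 * (W ∩ leaves i).card} with hlost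
  have hhitcard : hit.card ≤ s :=
    (card_filter_not_disjoint_le (h.disjoint_leg.set_pairwise _)).trans hWleg
  have hlostcard : 4 * lost.card ≤ Fintype.card ι := by
    have : lost.card * z ≤ 2 * W.card :=
      card_filter_lt_card_inter_mul_le (hdisj.set_pairwise _) z
    exact Nat.le_of_mul_le_mul_right (by rw [mul_assoc]; omega) hz
  set good := univ \ (hit ∪ lost) with hgood
  have hgoodcard : Fintype.card ι ≤ 2 * good.card := by
    have : _ ≤ good.card := le_card_sdiff (hit ∪ lost) univ
    have := card_union_le hit lost
    simp only [card_univ] at *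
    omega
  have hmem {i : ι} (hi : i ∈ good) : Disjoint (leg i) W ∧ z ≤ 2 * (leaves i \ W).card := by
    have := card_sdiff_add_card_inter (leaves i) W
    rw [h.isStarFamily.card_leaves, inter_comm] at this
    simp only [hgood, hhit, hlost, mem_sdiff, mem_union, mem_filter, mem_univ, true_and, not_or,
      not_not, not_lt] at hi
    exact ⟨hi.1, by omega⟩
  have hsub : (good.biUnion fun i => leaves i \ W) ⊆ closedBall (isolate H W) {u} R :=
    biUnion_subset.2 fun i hi => h.leaves_sdiff_subset hR hu (hmem hi).1
  refine le_trans ?_ (card_le_card hsub)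
  rw [card_biUnion fun i _ j _ hij => (hdisj hij).mono sdiff_subset sdiff_subset]
  have hsum : good.card * z ≤ 2 * ∑ i ∈ good, (leaves i \ W).card := by
    rw [mul_sum, ← smul_eq_mul]
    exact card_nsmul_le_sum _ _ _ fun i hi => (hmem hi).2
  have := Nat.mul_le_mul_right z hgoodcard
  rw [mul_assoc] at this
  omega

end IsSpider

end Spiders

section Cores

variable {V ι κ : Type*} [Fintype V] {H : SimpleGraph V} {D L M ρ d ω e z w w' β R s q : ℕ}
  {X W : Finset V}

lemma Expander.exists_isSpider [Fintype ι] [Nonempty ι] [Fintype κ] {c : ι → V} {c' : κ → V}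
    {E : ι → Finset V} {E' : κ → Finset V} (hE : Expander H D L M ρ) (hc : IsStarFamily H e c E)
    (hc' : IsStarFamily H z c' E') (hEX : ∀ i, Disjoint (E i) X) (hEX' : ∀ j, Disjoint (E' j) X)
    (hX : ∀ j, c' j ∈ X) (hw : X.card + Fintype.card ι * q * (2 * ρ + 2) ≤ w)
    (hwV : 12 * w ≤ Fintype.card V) (hDw : D ≤ w)
    (hκ : Fintype.card κ = 2 * (Fintype.card ι * q))
    (he : 2 * M * w + Fintype.card ι * q * (2 * ρ + 2) ≤ Fintype.card ι * e)
    (hz : 2 * M * w + Fintype.card ι * q * (2 * ρ + 2) ≤ Fintype.card ι * q * z) :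
    ∃ (i : ι) (target : Fin q → κ) (leg : Fin q → Finset V),
      IsSpider H (2 * ρ + 2) z (c i) (fun a => c' (target a)) leg (fun a => E' (target a)) ∧
      ∀ a, (leg a).card ≤ 2 * ρ + 2 ∧ Disjoint ((leg a).erase (c' (target a))) X := by
  obtain ⟨f, hf, hdisj⟩ := hE.exists_isLeg_family hc hc' hEX hEX' hX hw hwV hDw hκ.ge he
    (by rw [hκ]; linarith)
  obtain ⟨i, hi⟩ := Fintype.exists_le_card_fiber_of_mul_le_card (fun a => (f a).1) (n := q)
    (by rw [Fintype.card_fin])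
  set g := orderEmbOfCardLe _ hi
  have hg (a : Fin q) : (f (g a)).1 = i := (mem_filter.1 (orderEmbOfCardLe_mem _ hi a)).2
  have htarget : Function.Injective fun a => (f (g a)).2.1 := by
    intro a b hab
    by_contra hne
    refine disjoint_left.1 (hdisj (g.injective.ne hne)) (hf (g a)).mem ?_
    have := (hf (g b)).mem
    dsimp only at hab
    rwa [← hab] at this
  exact ⟨i, fun a => (f (g a)).2.1, fun a => (f (g a)).2.2, ⟨hc'.comp htarget, fun a => (hf _).mem,
    fun a b hab => hdisj (g.injective.ne hab), fun a => hg a ▸ (hf (g a)).exists_walk⟩,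
    fun a => ⟨(hf _).card_le, (hf _).disjoint⟩⟩

lemma RobustMinDegree.exists_isSpider (hrob : RobustMinDegree H d ω) (χ : H.Coloring Bool)
    (hE : Expander H D L M ρ) (hd : 1 ≤ d) (hed : e ≤ d) (hzd : z ≤ d) {m : ℕ} (hm : 0 < m)
    (hω : W.card + m * (e + 1) + 2 * (m * q) * (z + 1) ≤ ω)
    (hw : W.card + 2 * (m * q) + m * q * (2 * ρ + 2) ≤ w)
    (hwV : 12 * w ≤ Fintype.card V) (hDw : D ≤ w)
    (he : 2 * M * w + m * q * (2 * ρ + 2) ≤ m * e)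
    (hz : 2 * M * w + m * q * (2 * ρ + 2) ≤ m * q * z) :
    ∃ (u : V) (foot : Fin q → V) (leg leaves : Fin q → Finset V), χ u = true ∧ u ∉ W ∧
      IsSpider H (2 * ρ + 2) z u foot leg leaves ∧
      ∀ a, (leg a).card ≤ 2 * ρ + 2 ∧ Disjoint (leg a) W := by
  obtain ⟨c, E, hc, hχ, hcW⟩ := hrob.exists_isStarFamily χ hd hed (N := m) (W := W) (by omega)
  set Y := W ∪ univ.biUnion fun j => insert (c j) (E j)
  have hYcard : Y.card ≤ W.card + m * (e + 1) := by
    refine (card_union_le _ _).trans (Nat.add_le_add_left ?_ _)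
    simpa using card_biUnion_le_card_mul univ (fun j => insert (c j) (E j)) (e + 1) fun j _ =>
      hc.card_leaves j ▸ card_insert_le _ _
  obtain ⟨c', E', hc', -, hcY⟩ := hrob.exists_isStarFamily χ hd hzd (N := 2 * (m * q)) (W := Y)
    (by omega)
  set X := W ∪ univ.image c'
  have hXcard : X.card ≤ W.card + 2 * (m * q) := by
    refine (card_union_le _ _).trans (Nat.add_le_add_left ?_ _)
    simpa using card_image_le (s := univ) (f := c')
  have hcW' (j) : Disjoint (insert (c' j) (E' j)) W := (hcY j).mono_right subset_union_left
  have hEX (i) : Disjoint (E i) X := by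
    refine disjoint_union_right.2 ⟨(hcW i).mono_left (subset_insert _ _), ?_⟩
    refine disjoint_right.2 fun x hx hxE => ?_
    obtain ⟨j, -, rfl⟩ := mem_image.1 hx
    exact disjoint_left.1 (hcY j) (mem_insert_self _ _)
      (mem_union_right _ (mem_biUnion.2 ⟨i, mem_univ _, mem_insert_of_mem hxE⟩))
  have hEX' (j) : Disjoint (E' j) X :=
    disjoint_union_right.2 ⟨(hcW' j).mono_left (subset_insert _ _), hc'.disjoint_leaves_centers j⟩
  have : Nonempty (Fin m) := ⟨⟨0, hm⟩⟩
  obtain ⟨i, target, leg, hspider, hleg⟩ := hE.exists_isSpider hc hc' hEX hEX' (q := q) (w := w)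
    (fun j => mem_union_right _ (mem_image_of_mem _ (mem_univ _))) (by rw [Fintype.card_fin]; omega)
    hwV hDw (by simp) (by simpa using he) (by simpa using hz)
  refine ⟨c i, _, leg, _, hχ i, disjoint_left.1 (hcW i) (mem_insert_self _ _), hspider,
    fun a => ⟨(hleg a).1, ?_⟩⟩
  rw [← insert_erase (hspider.foot_mem a), disjoint_insert_left]
  exact ⟨disjoint_left.1 (hcW' _) (mem_insert_self _ _), (hleg a).2.mono_right subset_union_left⟩

/-- The vertex `u` lies in the set `C` of at most `n` vertices, and its ball of radius `R` keeps
`β` vertices when any `w` vertices other than `u`, at most `s` of them in `C`, are deleted. -/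
structure IsRobustCore (H : SimpleGraph V) (n s w β R : ℕ) (u : V) (C : Finset V) : Prop where
  mem : u ∈ C
  card_le : C.card ≤ n
  hasLargeBall : ∀ W : Finset V, u ∉ W → (W ∩ C).card ≤ s → W.card ≤ w → HasLargeBall H β R u W

lemma IsSpider.isRobustCore {ℓ : ℕ} {u : V} {foot : Fin q → V} {leg leaves : Fin q → Finset V}
    (h : IsSpider H ℓ z u foot leg leaves) (hleg : ∀ a, (leg a).card ≤ ℓ) (hz : 1 ≤ z)
    (hs : 4 * s ≤ q) (hw : 8 * w ≤ q * z) (hβ : 4 * β ≤ q * z) (hR : ℓ + 1 ≤ R) :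
    IsRobustCore H (q * ℓ + 1) s w β R u (insert u (univ.biUnion leg)) where
  mem := mem_insert_self _ _
  card_le := by
    refine (card_insert_le _ _).trans (Nat.succ_le_succ ?_)
    simpa using card_biUnion_le_card_mul univ leg ℓ fun a _ => hleg a
  hasLargeBall W hu hWC hW := h.hasLargeBall hz (by simpa using hs) (by simpa using hw)
    (by simpa using hβ) hR hu
    ((card_le_card (inter_subset_inter_left (subset_insert _ _))).trans hWC) hW

lemma nonempty_ports_of_isRobustCore {χ : H.Coloring Bool} {k n w₁ A : ℕ}
    (h : ∀ B : Finset V, B.card ≤ k * n → ∃ u C, χ u = true ∧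
      IsRobustCore H n (2 * k * (A + 1)) w β R u C ∧ Disjoint C B)
    (hw : k * n + w₁ ≤ w) : Nonempty (Ports H χ k w₁ w A β R) := by
  obtain ⟨f, hf, hdisj⟩ := exists_fin_pairwise_disjoint (α := V × Finset V) (N := k) (c := n)
    (p := fun a => χ a.1 = true ∧ IsRobustCore H n (2 * k * (A + 1)) w β R a.1 a.2)
    (E := fun a => a.2) (fun a ha => ha.2.card_le) fun B hB => by
      obtain ⟨u, C, hu, hC, hCB⟩ := h B hB
      exact ⟨(u, C), ⟨hu, hC⟩, hCB⟩
  have hcard : (univ.biUnion fun m => (f m).2).card ≤ k * n := by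
    simpa using card_biUnion_le_card_mul univ (fun m => (f m).2) n fun m _ => (hf m).2.card_le
  refine ⟨⟨fun m => (f m).1, fun m => (f m).2, fun _ q S => S.card ≤ q * (A + 1),
    fun m => (hf m).2.mem, fun m m' hm => hdisj hm, fun m => (hf m).1, by omega, by simp,
    fun m q W hS hq hu hW => (hf m).2.hasLargeBall W hu (hS.trans (Nat.mul_le_mul_right _ hq)) ?_,
    fun m q W S hS _ hshort => (card_union_le _ _).trans ?_⟩⟩
  · have := le_card_sdiff (univ.biUnion fun m => (f m).2) W
    omega
  · have := card_le_card ((erase_subset (f m).1 (S ∩ (f m).2)).trans inter_subset_left)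
    have := hshort.card_le
    rw [add_one_mul]
    omega

lemma RobustMinDegree.nonempty_ports (hrob : RobustMinDegree H d ω) (χ : H.Coloring Bool)
    (hE : Expander H D L M ρ) (hd : 1 ≤ d) (hed : e ≤ d) (hzd : z ≤ d) (hz1 : 1 ≤ z)
    {k m n w₁ A : ℕ} (hm : 0 < m) (hn : q * (2 * ρ + 2) + 1 = n)
    (hω : k * n + m * (e + 1) + 2 * (m * q) * (z + 1) ≤ ω)
    (hw' : k * n + 2 * (m * q) + m * q * (2 * ρ + 2) ≤ w')
    (hwV : 12 * w' ≤ Fintype.card V) (hDw : D ≤ w')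
    (he : 2 * M * w' + m * q * (2 * ρ + 2) ≤ m * e)
    (hz : 2 * M * w' + m * q * (2 * ρ + 2) ≤ m * q * z)
    (hs : 4 * (2 * k * (A + 1)) ≤ q) (hw : 8 * w ≤ q * z) (hβ : 4 * β ≤ q * z)
    (hR : 2 * ρ + 3 ≤ R) (hkw : k * n + w₁ ≤ w) :
    Nonempty (Ports H χ k w₁ w A β R) := by
  refine nonempty_ports_of_isRobustCore (n := n) (fun B hB => ?_) hkw
  obtain ⟨u, foot, leg, leaves, hu, huB, hspider, hleg⟩ := hrob.exists_isSpider χ hE hd hed hzd hm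
    (W := B) (q := q) (w := w') (by omega) (by omega) hwV hDw he hz
  refine ⟨u, insert u (univ.biUnion leg), hu,
    hn ▸ hspider.isRobustCore (fun a => (hleg a).1) hz1 hs hw hβ hR, ?_⟩
  rw [disjoint_insert_left, disjoint_biUnion_left]
  exact ⟨huB, fun a _ => (hleg a).2⟩

end Cores

section DegreeSums

variable {V : Type*} {H : SimpleGraph V} {S T : Finset V}

/-- The number of neighbours of `v` inside `S`. -/
noncomputable def degIn (H : SimpleGraph V) (S : Finset V) (v : V) : ℕ :=
  (S.filter fun y => H.Adj v y).card

/-- The sum of the degrees of the subgraph induced on `S`, that is, twice its number of edges. -/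
noncomputable def degSum (H : SimpleGraph V) (S : Finset V) : ℕ :=
  ∑ v ∈ S, degIn H S v

lemma degIn_union (h : Disjoint S T) (v : V) :
    degIn H (S ∪ T) v = degIn H S v + degIn H T v := by
  rw [degIn, filter_union, card_union_of_disjoint (disjoint_filter_filter h), degIn, degIn]

lemma degIn_mono (h : S ⊆ T) (v : V) : degIn H S v ≤ degIn H T v :=
  card_le_card (filter_subset_filter _ h)

lemma degIn_le_card (S : Finset V) (v : V) : degIn H S v ≤ S.card :=
  card_filter_le _ _

lemma degIn_self (v : V) : degIn H {v} v = 0 := by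
  simp [degIn, filter_singleton]

lemma sum_degIn_comm (S T : Finset V) : ∑ v ∈ S, degIn H T v = ∑ v ∈ T, degIn H S v := by
  simpa only [degIn, bipartiteAbove, bipartiteBelow, H.adj_comm] using
    sum_card_bipartiteAbove_eq_sum_card_bipartiteBelow (s := S) (t := T) H.Adj

lemma degSum_empty : degSum H ∅ = 0 := by
  simp [degSum]

lemma degSum_union (h : Disjoint S T) :
    degSum H (S ∪ T) = degSum H S + degSum H T + 2 * ∑ v ∈ S, degIn H T v := by
  simp only [degSum, sum_union h, degIn_union h, sum_add_distrib, sum_degIn_comm T S]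
  ring

lemma degSum_erase {v : V} (hv : v ∈ S) :
    degSum H S = degSum H (S.erase v) + 2 * degIn H S v := by
  have hd : Disjoint {v} (S.erase v) := by simp
  have hS : S = {v} ∪ S.erase v := by rw [← insert_eq, insert_erase hv]
  have hsum := degSum_union (H := H) hd
  have hdeg := degIn_union (H := H) hd v
  rw [← hS] at hsum hdeg
  rw [hsum, hdeg]
  simp [degSum, degIn_self]

lemma exists_subset_half_le_degIn {D : ℕ} (h : D * S.card < degSum H S) :
    ∃ T ⊆ S, T.Nonempty ∧ ∀ v ∈ T, D / 2 ≤ degIn H T v := by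
  induction S using Finset.strongInduction with
  | H S ih =>
    by_cases hS : ∀ v ∈ S, D / 2 ≤ degIn H S v
    · refine ⟨S, Subset.rfl, nonempty_iff_ne_empty.2 fun hempty => ?_, hS⟩
      simp [hempty, degSum_empty] at h
    · push Not at hS
      obtain ⟨v, hv, hlt⟩ := hS
      have hsum := degSum_erase (H := H) hv
      have hcard : D * S.card = D * (S.erase v).card + D := by
        rw [← card_erase_add_one hv, mul_add_one]
      obtain ⟨T, hTS, hT⟩ := ih (S.erase v) (erase_ssubset hv) (by omega)
      exact ⟨T, hTS.trans (erase_subset _ _), hT⟩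

lemma degSum_univ_le_compl_add [Fintype V] (W : Finset V) :
    degSum H univ ≤ degSum H Wᶜ + 2 * ∑ v ∈ W, degIn H univ v := by
  have hd : Disjoint W Wᶜ := disjoint_compl_right
  have hsplit := degSum_union (H := H) hd
  have hdeg : degSum H W + ∑ v ∈ W, degIn H Wᶜ v = ∑ v ∈ W, degIn H univ v := by
    rw [degSum, ← sum_add_distrib]
    exact sum_congr rfl fun v _ => by rw [← degIn_union hd, union_compl]
  rw [union_compl] at hsplit
  omega

lemma exists_disjoint_half_le_degIn [Fintype V] {D : ℕ}
    (hsum : 2 * D * Fintype.card V ≤ degSum H univ) {W : Finset V}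
    (hW : 2 * ∑ v ∈ W, degIn H univ v < D * Fintype.card V) :
    ∃ S : Finset V, S.Nonempty ∧ Disjoint S W ∧ ∀ v ∈ S, D / 2 ≤ degIn H S v := by
  have hcard : D * (Wᶜ).card ≤ D * Fintype.card V := Nat.mul_le_mul_left _ (card_le_univ _)
  have hlarge : D * (Wᶜ).card < degSum H Wᶜ := by
    have := degSum_univ_le_compl_add (H := H) W
    rw [mul_assoc] at hsum
    omega
  obtain ⟨S, hS, hne, hmin⟩ := exists_subset_half_le_degIn hlarge
  exact ⟨S, hne, (disjoint_compl_left.mono_left hS), hmin⟩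

end DegreeSums

/-! ### Dependent random choice -/

section DependentRandomChoice

variable {V : Type*} [Fintype V] {G : SimpleGraph V} {k : ℕ}

lemma hasTK_one_of_commonNeighbors {T : Finset V} (hk : k ≤ T.card)
    (hT : ∀ x ∈ T, ∀ y ∈ T, x ≠ y →
      2 * k * k ≤ (univ.filter fun z => G.Adj x z ∧ G.Adj y z).card) : HasTK G k 1 := by
  obtain ⟨T', hT', hc⟩ := exists_subset_card_eq hk
  let b : Fin k → V := fun i => (T'.equivFinOfCardEq hc).symm i
  have hinj : Function.Injective b := Subtype.val_injective.comp (Equiv.injective _)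
  have hbT (i) : b i ∈ T := hT' (Subtype.prop _)
  refine hasTK_of_greedy b hinj (fun Q U => U.card ≤ Q.card) (by simp) ?_
  intro Q U hU i j hij hQ
  have hQcard : Q.card < k * k := by
    have := card_le_univ (insert (i, j) Q)
    rw [card_insert_of_notMem hQ, Fintype.card_prod, Fintype.card_fin] at this
    omega
  have hfew : (U ∪ univ.image b).card <
      (univ.filter fun z => G.Adj (b i) z ∧ G.Adj (b j) z).card := by
    have hcodeg := hT (b i) (hbT i) (b j) (hbT j) (hinj.ne hij.ne)
    have hunion := card_union_le U (univ.image b)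
    have himage : (univ.image b).card ≤ k := card_image_le.trans (card_fin k).le
    have hkk : k ≤ k * k := Nat.le_mul_self k
    rw [mul_assoc] at hcodeg
    omega
  obtain ⟨z, hz, hz'⟩ := exists_mem_notMem_of_card_lt_card hfew
  obtain ⟨hiz, hjz⟩ := (mem_filter.1 hz).2
  obtain ⟨hzU, hzb⟩ := not_or.1 (mem_union.not.1 hz')
  have hbz (m) : b m ≠ z := fun h => hzb (h ▸ mem_image_of_mem b (mem_univ m))
  refine ⟨{z}, by simpa using hzU, by simpa using hbz,
    ⟨Walk.cons hiz (Walk.cons hjz.symm Walk.nil), ?_, by simp, ?_⟩, ?_⟩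
  · simp [hbz, (hbz j).symm, hinj.ne hij.ne]
  · simp +contextual [or_imp]
  · rw [card_insert_of_notMem hQ]
    exact (card_union_le _ _).trans (by simpa using hU)

lemma sum_card_filter_forall {α : Type*} (r : α → V → Prop) (P : Finset α) (t : ℕ) :
    ∑ σ : Fin t → V, (P.filter fun a => ∀ i, r a (σ i)).card =
      ∑ a ∈ P, (univ.filter fun z => r a z).card ^ t := by
  refine (sum_card_bipartiteAbove_eq_sum_card_bipartiteBelow
    (s := (univ : Finset (Fin t → V))) (t := P) fun σ a => ∀ i, r a (σ i)).trans ?_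
  refine sum_congr rfl fun a _ => ?_
  have : bipartiteBelow (fun σ a => ∀ i, r a (σ i)) univ a =
      Fintype.piFinset fun _ : Fin t => univ.filter fun z => r a z := by
    ext σ
    simp [bipartiteBelow]
  simp [this]

lemma hasTK_one_of_le_sum_pow [Nonempty V] (W : Finset V) (t : ℕ)
    (h : k * Fintype.card V ^ t + W.card ^ 2 * (2 * k * k) ^ t ≤ ∑ w ∈ W, degIn G univ w ^ t) :
    HasTK G k 1 := by
  let codeg (p : V × V) : Finset V := univ.filter fun z => G.Adj p.1 z ∧ G.Adj p.2 z
  let bad : Finset (V × V) := (W ×ˢ W).filter fun p => (codeg p).card < 2 * k * k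
  let common (σ : Fin t → V) : Finset V := W.filter fun w => ∀ i, G.Adj w (σ i)
  let badIn (σ : Fin t → V) : Finset (V × V) :=
    bad.filter fun p => ∀ i, G.Adj p.1 (σ i) ∧ G.Adj p.2 (σ i)
  have hcommon : ∑ σ, (common σ).card = ∑ w ∈ W, degIn G univ w ^ t :=
    sum_card_filter_forall G.Adj W t
  have hbad : ∑ σ, (badIn σ).card ≤ W.card ^ 2 * (2 * k * k) ^ t := by
    have hpow : ∀ p ∈ bad, (codeg p).card ^ t ≤ (2 * k * k) ^ t := fun p hp =>
      Nat.pow_le_pow_left (mem_filter.1 hp).2.le t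
    calc ∑ σ, (badIn σ).card = ∑ p ∈ bad, (codeg p).card ^ t :=
          by convert sum_card_filter_forall (fun p z => G.Adj p.1 z ∧ G.Adj p.2 z) bad t
      _ ≤ bad.card * (2 * k * k) ^ t := by simpa using sum_le_card_nsmul _ _ _ hpow
      _ ≤ W.card ^ 2 * (2 * k * k) ^ t := by
          gcongr
          exact (card_filter_le _ _).trans (by rw [card_product, sq])
  obtain ⟨σ, hσ⟩ : ∃ σ, k + (badIn σ).card ≤ (common σ).card := by
    by_contra! hcon
    have hlt : ∑ σ, (common σ).card < ∑ σ, (k + (badIn σ).card) :=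
      sum_lt_sum_of_nonempty univ_nonempty fun σ _ => hcon σ
    rw [sum_add_distrib, sum_const, card_univ, Fintype.card_fun, Fintype.card_fin, smul_eq_mul,
      mul_comm] at hlt
    omega
  let removed : Finset V := ((badIn σ).filter fun p => p.1 ≠ p.2).image Prod.fst
  refine hasTK_one_of_commonNeighbors (T := common σ \ removed) ?_ fun x hx y hy hxy => ?_
  · have hle : removed.card ≤ (badIn σ).card := card_image_le.trans (card_filter_le _ _)
    have := le_card_sdiff removed (common σ)
    omega
  · by_contra! hlt
    obtain ⟨hx, hxr⟩ := mem_sdiff.1 hx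
    obtain ⟨hxW, hxσ⟩ := mem_filter.1 hx
    obtain ⟨hyW, hyσ⟩ := mem_filter.1 (mem_sdiff.1 hy).1
    have hxy_bad : (x, y) ∈ bad := mem_filter.2 ⟨mem_product.2 ⟨hxW, hyW⟩, hlt⟩
    have hxy_badIn : (x, y) ∈ badIn σ := mem_filter.2 ⟨hxy_bad, fun i => ⟨hxσ i, hyσ i⟩⟩
    exact hxr (mem_image_of_mem Prod.fst (mem_filter.2 ⟨hxy_badIn, hxy⟩))

lemma card_mul_card_pow_le {P : ℕ} {W : Finset V} (hW : 0 < W.card)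
    (h : W.card * Fintype.card V ≤ P * ∑ w ∈ W, degIn G univ w) (t : ℕ) :
    W.card * Fintype.card V ^ (t + 1) ≤ P ^ (t + 1) * ∑ w ∈ W, degIn G univ w ^ (t + 1) := by
  refine Nat.le_of_mul_le_mul_left ?_ (pow_pos hW t)
  calc W.card ^ t * (W.card * Fintype.card V ^ (t + 1))
      = (W.card * Fintype.card V) ^ (t + 1) := by ring
    _ ≤ (P * ∑ w ∈ W, degIn G univ w) ^ (t + 1) := Nat.pow_le_pow_left h _
    _ = P ^ (t + 1) * (∑ w ∈ W, degIn G univ w) ^ (t + 1) := mul_pow _ _ _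
    _ ≤ P ^ (t + 1) * (W.card ^ t * ∑ w ∈ W, degIn G univ w ^ (t + 1)) := by
        gcongr
        exact pow_sum_le_card_mul_sum_pow (fun _ _ => Nat.zero_le _) t
    _ = W.card ^ t * (P ^ (t + 1) * ∑ w ∈ W, degIn G univ w ^ (t + 1)) := by ring

lemma hasTK_one_of_dense {P : ℕ} (hP : 2 ≤ P) {W : Finset V} (hW : 1 ≤ W.card)
    (hdense : W.card * Fintype.card V ≤ P * ∑ w ∈ W, degIn G univ w)
    (hV : 2 * k * k * P ^ 9 ≤ Fintype.card V) (hWk : 2 * (2 * k * P) ^ 8 ≤ W.card ^ 7) :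
    HasTK G k 1 := by
  obtain ⟨t, hlow, hupp⟩ :=
    exists_nat_pow_near (x := 2 * W.card) (by omega) (Nat.one_lt_pow (n := 8) (by norm_num) hP)
  have : Nonempty V := (card_pos.1 hW).to_type
  have hkP : 2 * (k * P ^ (t + 1)) ≤ W.card := by
    refine le_of_pow_le_pow_left₀ (n := 8) (by norm_num) (Nat.zero_le _) ?_
    calc (2 * (k * P ^ (t + 1))) ^ 8 = (2 * k * P) ^ 8 * (P ^ 8) ^ t := by ring
      _ ≤ (2 * k * P) ^ 8 * (2 * W.card) := by gcongr
      _ = 2 * (2 * k * P) ^ 8 * W.card := by ring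
      _ ≤ W.card ^ 7 * W.card := by gcongr
      _ = W.card ^ 8 := by ring
  have hpow : 2 * W.card * (2 * k * k * P) ^ (t + 1) ≤ Fintype.card V ^ (t + 1) := by
    calc 2 * W.card * (2 * k * k * P) ^ (t + 1)
        ≤ (P ^ 8) ^ (t + 1) * (2 * k * k * P) ^ (t + 1) := by gcongr
      _ = (2 * k * k * P ^ 9) ^ (t + 1) := by rw [← mul_pow]; ring
      _ ≤ Fintype.card V ^ (t + 1) := Nat.pow_le_pow_left hV _
  refine hasTK_one_of_le_sum_pow W (t + 1) (Nat.le_of_mul_le_mul_left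
    (le_trans ?_ (card_mul_card_pow_le hW hdense t)) (show 0 < P ^ (t + 1) by positivity))
  refine Nat.le_of_mul_le_mul_left ?_ two_pos
  calc 2 * (P ^ (t + 1) * (k * Fintype.card V ^ (t + 1) + W.card ^ 2 * (2 * k * k) ^ (t + 1)))
      = 2 * (k * P ^ (t + 1)) * Fintype.card V ^ (t + 1) +
          W.card * (2 * W.card * (2 * k * k * P) ^ (t + 1)) := by
        rw [mul_pow (2 * k * k) P]; ring
    _ ≤ W.card * Fintype.card V ^ (t + 1) + W.card * Fintype.card V ^ (t + 1) := by gcongr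
    _ = 2 * (W.card * Fintype.card V ^ (t + 1)) := by ring

end DependentRandomChoice

/-! ### Graphs that are dense compared to their order -/

section Dense

variable {V : Type*} [Fintype V] {H : SimpleGraph V} {D L k a b : ℕ}

lemma scale_mul_pow_le (hL : 10 ^ 6 ≤ L) (c : ℕ) (h : a < b) : 10 ^ 6 * (c * L ^ a) ≤ c * L ^ b :=
  calc 10 ^ 6 * (c * L ^ a) ≤ L * (c * L ^ a) := Nat.mul_le_mul_right _ hL
    _ = c * L ^ (a + 1) := by ring
    _ ≤ c * L ^ b := Nat.mul_le_mul_left _ (Nat.pow_le_pow_right (by omega) h)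

lemma scale_pow_le (hL : 10 ^ 6 ≤ L) (h : a < b) : 10 ^ 6 * L ^ a ≤ L ^ b := by
  simpa using scale_mul_pow_le hL 1 h

lemma le_four_mul_sqrt_mul_sqrt (D : ℕ) : D ≤ 4 * (D.sqrt * D.sqrt) := by
  rcases D.eq_zero_or_pos with rfl | hD
  · simp
  · have hlt := Nat.lt_succ_sqrt D
    have hpos := Nat.sqrt_pos.2 hD
    rw [Nat.succ_eq_add_one] at hlt
    nlinarith

lemma scale_sqrt_mul_pow_le (hL : 10 ^ 6 ≤ L) (hDL : L ^ 250 ≤ D) (h : a < 125) :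
    10 ^ 6 * (D.sqrt * L ^ a) ≤ D :=
  calc 10 ^ 6 * (D.sqrt * L ^ a) ≤ D.sqrt * L ^ 125 := scale_mul_pow_le hL _ h
    _ ≤ D.sqrt * D.sqrt := Nat.mul_le_mul_left _ (Nat.le_sqrt.2 (by rwa [← pow_add]))
    _ ≤ D := Nat.sqrt_le D

set_option exponentiation.threshold 1000 in
lemma scale_mul_pow_le_card (hL : 10 ^ 6 ≤ L) (hL2 : L ^ 600 ≤ 2 ^ L)
    (hn : D * 2 ^ L ≤ 2 * Fintype.card V) (h : a < 600) :
    10 ^ 6 * (D * L ^ a) ≤ 2 * Fintype.card V :=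
  (scale_mul_pow_le hL D h).trans ((Nat.mul_le_mul_left D hL2).trans hn)

set_option exponentiation.threshold 1000 in
lemma hasTK_one_of_sum_degIn (hkD : k * k ≤ D) (hL : 10 ^ 6 ≤ L) (hL2 : L ^ 600 ≤ 2 ^ L)
    (hDL : L ^ 250 ≤ D) (hn : D * 2 ^ L ≤ 2 * Fintype.card V) {W : Finset V}
    (hW : W.card ≤ D * L ^ 60) (hsum : D * Fintype.card V ≤ 2 * ∑ v ∈ W, degIn H univ v) :
    HasTK H k 1 := by
  have hpos (i : ℕ) : 0 < L ^ i := Nat.pow_pos (by omega)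
  have hDW : D ≤ 2 * W.card := by
    have hcard : 0 < Fintype.card V := by
      have : 0 < D * 2 ^ L := Nat.mul_pos ((hpos 250).trans_le hDL) (by positivity)
      omega
    have hdeg : ∑ v ∈ W, degIn H univ v ≤ W.card * Fintype.card V :=
      sum_le_card_nsmul _ _ _ fun v _ => degIn_le_card univ v
    exact Nat.le_of_mul_le_mul_right (by linarith) hcard
  refine hasTK_one_of_dense (P := 2 * L ^ 60) (W := W) ?_ ?_ ?_ ?_ ?_
  · linarith [hpos 60]
  · have := hpos 250
    omega
  · calc W.card * Fintype.card V ≤ D * L ^ 60 * Fintype.card V := Nat.mul_le_mul_right _ hW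
      _ = L ^ 60 * (D * Fintype.card V) := by ring
      _ ≤ L ^ 60 * (2 * ∑ v ∈ W, degIn H univ v) := Nat.mul_le_mul_left _ hsum
      _ = 2 * L ^ 60 * ∑ v ∈ W, degIn H univ v := by ring
  · refine Nat.le_of_mul_le_mul_left ?_ two_pos
    calc 2 * (2 * k * k * (2 * L ^ 60) ^ 9) = k * k * (2048 * L ^ 540) := by ring
      _ ≤ D * (2048 * L ^ 540) := Nat.mul_le_mul_right _ hkD
      _ ≤ 2 * Fintype.card V := by
        linarith [scale_mul_pow_le_card hL hL2 hn (show 540 < 600 by norm_num)]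
  · refine Nat.le_of_mul_le_mul_left (c := 2 ^ 7) ?_ (by norm_num)
    calc 2 ^ 7 * (2 * (2 * k * (2 * L ^ 60)) ^ 8) = (k * k) ^ 4 * (2 ^ 24 * L ^ 480) := by ring
      _ ≤ D ^ 4 * (2 ^ 24 * L ^ 480) := by gcongr
      _ ≤ D ^ 4 * L ^ 750 := by
        gcongr
        have h480 := scale_pow_le hL (show 480 < 481 by norm_num)
        have h481 := scale_pow_le hL (show 481 < 750 by norm_num)
        omega
      _ = D ^ 4 * (L ^ 250) ^ 3 := by ring
      _ ≤ D ^ 4 * D ^ 3 := by gcongr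
      _ = D ^ 7 := by ring
      _ ≤ (2 * W.card) ^ 7 := Nat.pow_le_pow_left hDW 7
      _ = 2 ^ 7 * W.card ^ 7 := by ring

lemma robustMinDegree_of_not_hasTK_one (hkD : k * k ≤ D) (hL : 10 ^ 6 ≤ L)
    (hL2 : L ^ 600 ≤ 2 ^ L) (hDL : L ^ 250 ≤ D) (hn : D * 2 ^ L ≤ 2 * Fintype.card V)
    (hsum : 2 * D * Fintype.card V ≤ degSum H univ) (hno : ¬ HasTK H k 1) :
    RobustMinDegree H (D / 2) (D * L ^ 60) := by
  intro W hW
  by_contra hcon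
  refine hno (hasTK_one_of_sum_degIn hkD hL hL2 hDL hn hW ?_)
  by_contra! hlt
  exact hcon (exists_disjoint_half_le_degIn hsum hlt)

lemma hasAdjusters_of_dense (χ : H.Coloring Bool) (hL : 10 ^ 6 ≤ L) (hL2 : L ^ 600 ≤ 2 ^ L)
    (hDL : L ^ 250 ≤ D) (hn : D * 2 ^ L ≤ 2 * Fintype.card V)
    (hE : Expander H D L (L ^ 3) (L ^ 5)) (hrob : RobustMinDegree H (D / 2) (D * L ^ 60)) :
    HasAdjusters H (D * L ^ 19) (12 * L ^ 5) (D * L ^ 23) (3 * L ^ 5) := by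
  have hpow (i : ℕ) : D ≤ D * L ^ i := Nat.le_mul_of_pos_right _ (Nat.pow_pos (by omega))
  have hV {a : ℕ} (h : a < 600) := scale_mul_pow_le_card hL hL2 hn h
  have hL5 : 10 ^ 6 ≤ L ^ 5 := hL.trans (Nat.le_self_pow (by norm_num) L)
  have hLD {a : ℕ} (h : a < 250) := (scale_pow_le hL h).trans hDL
  have hD : 10 ^ 6 ≤ D := hL.trans ((Nat.le_self_pow (by norm_num) L).trans hDL)
  have h5 := hLD (show 5 < 250 by norm_num)
  have hquarter (a : ℕ) : D * L ^ a ≤ 5 * (D / 4 * L ^ a) := by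
    rw [← mul_assoc]
    exact Nat.mul_le_mul_right _ (by omega)
  have hquarter' : D / 4 * L ^ 22 ≤ D * L ^ 22 := Nat.mul_le_mul_right _ (by omega)
  have hmul {a b : ℕ} (h : a < b) := scale_mul_pow_le hL D h
  refine hrob.hasAdjusters (N := 16 * L ^ 22) (e := D / 4) χ hE
    (by omega) ?_ (hpow _) ?_ (by linarith) (by linarith) (by omega) ?_ ?_ ?_ ?_ ?_
  · linarith [hmul (show 22 < 23 by norm_num), hpow 22]
  · linarith [hV (show 19 < 600 by norm_num), hLD (show 27 < 250 by norm_num), hpow 590,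
      hV (show 590 < 600 by norm_num)]
  · linarith [hmul (show 19 < 60 by norm_num), hmul (show 23 < 60 by norm_num),
      hmul (show 22 < 60 by norm_num), hpow 60, hmul (show 0 < 60 by norm_num)]
  · linarith [hquarter 22, hLD (show 30 < 250 by norm_num), hpow 22]
  · linarith [hquarter 22, hpow 22]
  · linarith [hV (show 45 < 600 by norm_num)]
  · positivity

lemma mul_core_card_le {s : ℕ} (hL : 10 ^ 6 ≤ L) (hks : k ≤ s) (hsD : s * s ≤ D) :
    k * (s * L ^ 8 * (2 * L ^ 5 + 2) + 1) ≤ D + 4 * (D * L ^ 13) := by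
  have hss (a : ℕ) : s * s * L ^ a ≤ D * L ^ a := Nat.mul_le_mul_right _ hsD
  calc k * (s * L ^ 8 * (2 * L ^ 5 + 2) + 1) ≤ s * (s * L ^ 8 * (2 * L ^ 5 + 2) + 1) :=
        Nat.mul_le_mul_right _ hks
    _ = s + 2 * (s * s * L ^ 13) + 2 * (s * s * L ^ 8) := by ring
    _ ≤ D + 4 * (D * L ^ 13) := by
        linarith [Nat.le_mul_self s, hss 13, hss 8,
          scale_mul_pow_le hL D (show 8 < 13 by norm_num), hsD,
          Nat.le_mul_of_pos_right D (Nat.pow_pos (show 0 < L by omega) : 0 < L ^ 13)]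

lemma nonempty_ports_of_dense (χ : H.Coloring Bool) (hkD : k * k ≤ D) (hL : 10 ^ 6 ≤ L)
    (hL2 : L ^ 600 ≤ 2 ^ L) (hDL : L ^ 250 ≤ D) (hn : D * 2 ^ L ≤ 2 * Fintype.card V)
    (hE : Expander H D L (L ^ 3) (L ^ 5)) (hrob : RobustMinDegree H (D / 2) (D * L ^ 60)) :
    Nonempty (Ports H χ k (D * L ^ 18) (D * L ^ 19) (12 * L ^ 5) (D * L ^ 23) (3 * L ^ 5)) := by
  have hpos (i : ℕ) : 0 < L ^ i := Nat.pow_pos (by omega)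
  have hpow (i : ℕ) : D ≤ D * L ^ i := Nat.le_mul_of_pos_right _ (hpos i)
  have hV := scale_mul_pow_le_card hL hL2 hn (show 14 < 600 by norm_num)
  have hL5 : 10 ^ 6 ≤ L ^ 5 := hL.trans (Nat.le_self_pow (by norm_num) L)
  have hLD {a : ℕ} (h : a < 250) := (scale_pow_le hL h).trans hDL
  have hD : 10 ^ 6 ≤ D := hL.trans ((Nat.le_self_pow (by norm_num) L).trans hDL)
  have h24 := hLD (show 24 < 250 by norm_num)
  have hquarter : D * L ^ 24 ≤ 5 * (D / 4 * L ^ 24) := by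
    rw [← mul_assoc]
    exact Nat.mul_le_mul_right _ (by omega)
  have hquarter' : D / 4 * L ^ 24 ≤ D * L ^ 24 := Nat.mul_le_mul_right _ (by omega)
  have hmul {a b : ℕ} (h : a < b) := scale_mul_pow_le hL D h
  set s := D.sqrt
  have hks : k ≤ s := Nat.le_sqrt.2 hkD
  have hsD : s * s ≤ D := Nat.sqrt_le D
  have hsL {a : ℕ} (h : a < 125) : 10 ^ 6 * (s * L ^ a) ≤ D := scale_sqrt_mul_pow_le hL hDL h
  have hss (a : ℕ) : s * s * L ^ a ≤ D * L ^ a := Nat.mul_le_mul_right _ hsD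
  have hss' (a : ℕ) : D * L ^ a ≤ 4 * (s * s * L ^ a) := by
    rw [← mul_assoc]
    exact Nat.mul_le_mul_right _ (le_four_mul_sqrt_mul_sqrt D)
  have hkn := mul_core_card_le hL hks hsD
  have hs0 : 0 < s := Nat.sqrt_pos.2 (by omega)
  have h18 := hsL (show 18 < 125 by norm_num)
  have h32 := hsL (show 32 < 125 by norm_num)
  have h37 := hsL (show 37 < 125 by norm_num)
  refine hrob.nonempty_ports (e := D / 4) (m := L ^ 24) (q := s * L ^ 8) (z := s * L ^ 18)
    (w' := D * L ^ 14) χ hE (by omega) (by omega) (by omega) (Nat.mul_pos hs0 (hpos 18)) (hpos 24)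
    rfl ?_ ?_ (by linarith) (hpow _) ?_ ?_ ?_ ?_ ?_ (by linarith) ?_
  · linarith [hmul (show 13 < 60 by norm_num), hmul (show 24 < 60 by norm_num), hpow 60,
      hmul (show 0 < 60 by norm_num), hss 50, hmul (show 50 < 60 by norm_num)]
  · linarith [hmul (show 13 < 14 by norm_num), hmul (show 0 < 14 by norm_num)]
  · linarith [hmul (show 17 < 24 by norm_num), hmul (show 0 < 24 by norm_num)]
  · linarith [hmul (show 17 < 50 by norm_num), hss' 50, hmul (show 0 < 50 by norm_num)]
  · calc 4 * (2 * k * (12 * L ^ 5 + 1)) = k * (8 * (12 * L ^ 5 + 1)) := by ring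
      _ ≤ s * (8 * (12 * L ^ 5 + 1)) := Nat.mul_le_mul_right _ hks
      _ ≤ s * L ^ 8 := Nat.mul_le_mul_left _ (by
          linarith [scale_pow_le hL (show 5 < 8 by norm_num),
            scale_pow_le hL (show 0 < 8 by norm_num)])
  · linarith [hss' 26, hmul (show 19 < 26 by norm_num), hpow 19]
  · linarith [hss' 26, hmul (show 23 < 26 by norm_num), hpow 23]
  · linarith [hmul (show 13 < 19 by norm_num), hmul (show 18 < 19 by norm_num),
      hmul (show 0 < 19 by norm_num)]

lemma exists_hasTK_of_dense (χ : H.Coloring Bool) (hkD : k * k ≤ D) (hL : 10 ^ 6 ≤ L)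
    (hL2 : L ^ 600 ≤ 2 ^ L) (hDL : L ^ 250 ≤ D) (hn : D * 2 ^ L ≤ 2 * Fintype.card V)
    (hE : Expander H D L (L ^ 3) (L ^ 5)) (hsum : 2 * D * Fintype.card V ≤ degSum H univ) :
    ∃ l, HasTK H k l := by
  by_cases hno : HasTK H k 1
  · exact ⟨1, hno⟩
  have hrob := robustMinDegree_of_not_hasTK_one hkD hL hL2 hDL hn hsum hno
  have hadj := hasAdjusters_of_dense χ hL hL2 hDL hn hE hrob
  obtain ⟨P⟩ := nonempty_ports_of_dense χ hkD hL hL2 hDL hn hE hrob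
  have hpow (i : ℕ) : D ≤ D * L ^ i := Nat.le_mul_of_pos_right _ (Nat.pow_pos (by omega))
  have hmul {a b : ℕ} (h : a < b) := scale_mul_pow_le hL D h
  have hV := scale_mul_pow_le_card hL hL2 hn (show 19 < 600 by norm_num)
  have hL5 : 10 ^ 6 ≤ L ^ 5 := hL.trans (Nat.le_self_pow (by norm_num) L)
  have hD : 10 ^ 6 ≤ D := hL.trans ((Nat.le_self_pow (by norm_num) L).trans hDL)
  refine ⟨_, P.hasTK hE ?_ (hpow _) ?_ ?_ ?_ ?_ hadj ?_⟩
  · linarith [hmul (show 22 < 23 by norm_num), hpow 22]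
  · linarith
  · linarith
  · exact ⟨6 * L ^ 5, by ring⟩
  · linarith
  · calc (k * k + 2) * (pathLength (12 * L ^ 5) * (12 * L ^ 5))
        ≤ 2 * D * (pathLength (12 * L ^ 5) * (12 * L ^ 5)) :=
          Nat.mul_le_mul_right _ (by omega)
      _ ≤ D * L ^ 18 := by
          rw [pathLength]
          linarith [hmul (show 15 < 18 by norm_num), hmul (show 10 < 18 by norm_num), hpow 15,
            hpow 10]

end Dense

/-! ### Ports in a sparse local expander -/

section LocalGrowth

/-- A time by which balls in a local expander of minimum degree `D` reach `2 ^ i * D / 4` vertices;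
the increment `32 * (i + 4) ^ 2` is the time needed to double the `i`-th size. -/
def radius : ℕ → ℕ
  | 0 => 1
  | i + 1 => radius i + 32 * (i + 4) ^ 2

lemma radius_le (i : ℕ) : radius i ≤ 33 * (i + 4) ^ 3 := by
  induction i with
  | zero => simp [radius]
  | succ i ih =>
    rw [radius]
    nlinarith [sq_nonneg (i + 4)]

lemma radius_mono : Monotone radius :=
  monotone_nat_of_le_succ fun _ => Nat.le_add_right _ _

lemma radius_pos (i : ℕ) : 0 < radius i :=
  Nat.one_pos.trans_le (radius_mono (Nat.zero_le i))

variable {V : Type*} [Fintype V] {H : SimpleGraph V} {D Δ i j R β : ℕ} {u : V} {W : Finset V}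

/-- Sets of size about `2 ^ i * D` expand at a rate of order `1 / (i + 4) ^ 2`, which depends on
their size relative to `D` but not on the number of vertices. -/
def LocalExpander (H : SimpleGraph V) (D : ℕ) : Prop :=
  ∀ (i : ℕ) (X : Finset V), D ≤ 4 * X.card → X.card ≤ 2 ^ i * D → 4 * X.card ≤ Fintype.card V →
    X.card ≤ 16 * (i + 4) ^ 2 * (outerBoundary H X).card

lemma LocalExpander.double (hLE : LocalExpander H D) {X : ℕ → Finset V} {loss : ℕ → ℕ} {a : ℕ}
    (hmono : ∀ t, (X t).card ≤ (X (t + 1)).card)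
    (hX : ∀ t < a + 32 * (i + 4) ^ 2,
      (X t).card + (outerBoundary H (X t)).card ≤ (X (t + 1)).card + loss t)
    (hloss : ∀ t < a + 32 * (i + 4) ^ 2, 128 * (i + 4) ^ 2 * loss t ≤ 2 ^ i * D)
    (hstart : 2 ^ i * D ≤ 4 * (X a).card) (hn : 2 ^ (i + 1) * D ≤ Fintype.card V) :
    2 ^ (i + 1) * D ≤ 4 * (X (a + 32 * (i + 4) ^ 2)).card := by
  rw [pow_succ', mul_assoc] at hn ⊢
  have hDE : D ≤ 2 ^ i * D := Nat.le_mul_of_pos_left _ (by positivity)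
  have hexp (Y : Finset V) := hLE i Y
  have hc : 1 ≤ (i + 4) ^ 2 := Nat.one_le_pow _ _ (by omega)
  generalize 2 ^ i * D = E at *
  generalize (i + 4) ^ 2 = c at *
  have linear_growth : ∀ s ≤ 32 * c, 2 * E ≤ 4 * (X (a + s)).card ∨
      32 * c * E + s * E ≤ 128 * c * (X (a + s)).card := by
    intro s
    induction s with
    | zero =>
      intro _
      have := Nat.mul_le_mul_left (32 * c) hstart
      exact Or.inr (by simpa [mul_assoc] using by linarith)
    | succ s ih =>
      intro hs
      have hstep := hmono (a + s)
      rw [← Nat.add_assoc]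
      by_cases hbig : 2 * E ≤ 4 * (X (a + s)).card
      · exact Or.inl (by omega)
      have hlin := (ih (by omega)).resolve_left hbig
      have hlow : E ≤ 4 * (X (a + s)).card :=
        Nat.le_of_mul_le_mul_left (show 32 * c * E ≤ 32 * c * _ by linarith [Nat.zero_le (s * E)])
          (by omega)
      have hexp := hexp (X (a + s)) (by omega) (by omega) (by omega)
      have hgrow := Nat.mul_le_mul_left (128 * c) (hX (a + s) (by omega))
      have hloss := hloss (a + s) (by omega)
      exact Or.inr (by nlinarith)
  refine (linear_growth (32 * c) le_rfl).elim id fun h => ?_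
  exact Nat.le_of_mul_le_mul_left (show 32 * c * (2 * E) ≤ 32 * c * _ by linarith) (by omega)

lemma card_add_card_outerBoundary_le (hu : u ∉ W) (t : ℕ) :
    (closedBall (isolate H W) {u} t).card +
        (outerBoundary H (closedBall (isolate H W) {u} t)).card ≤
      (closedBall (isolate H W) {u} (t + 1)).card +
        (W ∩ outerBoundary H (closedBall (isolate H W) {u} t)).card := by
  have hd : Disjoint {u} W := disjoint_singleton_left.2 hu
  rw [← card_union_of_disjoint (disjoint_outerBoundary _ _)]
  refine (card_le_card fun y hy => ?_).trans (card_union_le _ _)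
  have hyW : y ∈ closedBall (isolate H W) {u} t → y ∉ W :=
    fun h => disjoint_left.1 (disjoint_closedBall_isolate t hd) h
  have := closedBall_union_outerBoundary_subset t hd hy
  grind

lemma LocalExpander.hasLargeBall (hLE : LocalExpander H D) (hmin : ∀ v, D ≤ degIn H univ v)
    (hu : u ∉ W) {loss : ℕ → ℕ} (hn : 2 ^ j * D ≤ Fintype.card V)
    (hloss : ∀ t < radius j,
      (W ∩ outerBoundary H (closedBall (isolate H W) {u} t)).card ≤ loss t)
    (hloss_zero : 4 * loss 0 ≤ 3 * D)
    (hloss_le : ∀ i < j, ∀ t < radius (i + 1), 128 * (i + 4) ^ 2 * loss t ≤ 2 ^ i * D)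
    (hβ : 4 * β ≤ 2 ^ j * D) (hR : radius j ≤ R) : HasLargeBall H β R u W := by
  set X := closedBall (isolate H W) {u} with hX
  have hstep (t) (ht : t < radius j) :
      (X t).card + (outerBoundary H (X t)).card ≤ (X (t + 1)).card + loss t :=
    (card_add_card_outerBoundary_le hu t).trans (Nat.add_le_add_left (hloss t ht) _)
  have hdeg : degIn H univ u ≤ (outerBoundary H (X 0)).card := by
    refine card_le_card fun y hy => ?_
    have hy := (mem_filter.1 hy).2
    rw [hX, closedBall_zero, mem_outerBoundary]
    exact ⟨by simpa using hy.ne', u, mem_singleton_self u, hy⟩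
  have key : ∀ i ≤ j, 2 ^ i * D ≤ 4 * (X (radius i)).card := by
    intro i
    induction i with
    | zero =>
      intro _
      have := hmin u
      have : (X 0).card + (outerBoundary H (X 0)).card ≤ (X 1).card + loss 0 :=
        hstep 0 (radius_pos j)
      rw [radius]
      omega
    | succ i ih =>
      intro hij
      refine hLE.double (fun t => card_le_card (closedBall_mono le_rfl subset_rfl t.le_succ))
        (fun t ht => hstep t (lt_of_lt_of_le ht (radius_mono hij))) (hloss_le i hij) (ih (by omega))
        ((Nat.mul_le_mul_right _ (Nat.pow_le_pow_right two_pos hij)).trans hn)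
  have := key j le_rfl
  have : (X (radius j)).card ≤ (X R).card := card_le_card (closedBall_mono le_rfl subset_rfl hR)
  exact ⟨hu, show β ≤ (X R).card by omega⟩

lemma card_closedBall_le (hΔ : ∀ v, degIn H univ v ≤ Δ) (X : Finset V) (t : ℕ) :
    (closedBall H X t).card ≤ X.card * (Δ + 1) ^ t := by
  induction t with
  | zero => simp [closedBall_zero]
  | succ t ih =>
    have hsub : closedBall H X (t + 1) ⊆
        (closedBall H X t).biUnion fun x => insert x (univ.filter fun y => H.Adj x y) := by
      intro y hy
      obtain ⟨x, hx, p, hp⟩ := mem_closedBall.1 hy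
      obtain ⟨p, rfl⟩ : ∃ q : H.Walk y x, p = q.reverse := ⟨p.reverse, by simp⟩
      rw [Walk.length_reverse] at hp
      cases p with
      | nil => exact mem_biUnion.2 ⟨y, subset_closedBall _ _ _ hx, mem_insert_self _ _⟩
      | cons h q => exact mem_biUnion.2 ⟨_, mem_closedBall.2 ⟨x, hx, q.reverse, by simpa using hp⟩,
          mem_insert_of_mem (by simpa using h.symm)⟩
    calc (closedBall H X (t + 1)).card
        ≤ (closedBall H X t).card * (Δ + 1) :=
          (card_le_card hsub).trans (card_biUnion_le_card_mul _ _ _ fun x _ =>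
            (card_insert_le _ _).trans (Nat.succ_le_succ (hΔ x)))
      _ ≤ X.card * (Δ + 1) ^ t * (Δ + 1) := Nat.mul_le_mul_right _ ih
      _ = X.card * (Δ + 1) ^ (t + 1) := by ring

lemma outerBoundary_closedBall_isolate_subset (t : ℕ) :
    outerBoundary H (closedBall (isolate H W) {u} t) ⊆ closedBall H {u} (t + 1) := by
  intro y hy
  obtain ⟨-, x, hx, hxy⟩ := mem_outerBoundary.1 hy
  exact mem_closedBall_succ (closedBall_mono (isolate_le H W) subset_rfl le_rfl hx) hxy

lemma RobustMinDegree.hasAdjusters_of_localExpander {L M ρ w A d ω : ℕ}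
    (hrob : RobustMinDegree H d ω) (χ : H.Coloring Bool) (hE : Expander H D L M ρ)
    (hLE : LocalExpander H D) (hmin : ∀ v, D ≤ degIn H univ v) (hΔ : ∀ v, degIn H univ v ≤ Δ)
    (hd : 2 ≤ d) (hβ : 2 * M * w ≤ β) (hβD : D ≤ β) (hwV : 12 * w ≤ Fintype.card V)
    (hA : 2 * (R + 2 * ρ) + 2 ≤ A) (hω : w * (Δ + 1) ^ (radius j) + 1 + β ≤ ω) (hD : 8 ≤ D)
    (hloss : ∀ i < j, ∀ t < radius (i + 1), 128 * (i + 4) ^ 2 * (2 * (t + 3)) ≤ 2 ^ i * D)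
    (hn : 2 ^ j * D ≤ Fintype.card V) (hβj : 4 * β ≤ 2 ^ j * D) (hR : radius j ≤ R) :
    HasAdjusters H w A β R := by
  intro b W F hWF hb
  have hball := card_closedBall_le hΔ (W ∪ F) (radius j)
  have hball' := Nat.mul_le_mul_right ((Δ + 1) ^ radius j) hWF
  obtain ⟨S, hSB, -, y, hyS, O, hO, hOW, hOA, hdist⟩ := hrob.exists_adjuster χ hE hd hβ hβD hwV hA
    hb ((card_le_card subset_union_left).trans hWF) (B := closedBall H (W ∪ F) (radius j))
    (subset_union_left.trans (subset_closedBall _ _ _)) (by omega)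
  have hyB := disjoint_left.1 hSB hyS
  have hyW : y ∉ W ∪ F ∪ O := fun h => (mem_union.1 h).elim
    (fun h => hyB (subset_closedBall _ _ _ h)) hO.target_notMem
  refine ⟨y, O, hO, hOW, hOA, hdist, hLE.hasLargeBall hmin hyW hn (loss := fun t => 2 * (t + 3))
    (fun t ht => ?_) (by omega) hloss hβj hR⟩
  refine (card_le_card fun x hx => ?_).trans
    (hO.card_inter_outerBoundary_le hOW (W' := W ∪ F ∪ O) (by grind) hyW t)
  obtain ⟨hxW, hx⟩ := mem_inter.1 hx
  refine mem_inter.2 ⟨(mem_union.1 hxW).resolve_left fun hxWF => hyB ?_, hx⟩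
  exact closedBall_mono le_rfl (singleton_subset_iff.2 hxWF) ht
    (mem_closedBall_singleton_symm (outerBoundary_closedBall_isolate_subset t hx))

/-- `S` is a set of at most `q * (A + 1)` vertices avoiding `u` that meets each sphere of radius at
most `r` around `u` in `H` minus `S` in few vertices, as the union of `q` geodesics from `u` does
when each of them is shortest after the deletion of the previous ones. -/
structure Thin (H : SimpleGraph V) (u : V) (r A q : ℕ) (S : Finset V) : Prop where
  notMem : u ∉ S
  card_le : S.card ≤ q * (A + 1)
  card_inter_outerBoundary_le : ∀ t < r,
    (S ∩ outerBoundary H (closedBall (isolate H S) {u} t)).card ≤ q * (t + 1)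

variable {r A q : ℕ} {S : Finset V}

lemma Thin.card_inter_outerBoundary_le_of_subset (h : Thin H u r A q S) (hSW : S ⊆ W) {t : ℕ}
    (ht : t < r) : (S ∩ outerBoundary H (closedBall (isolate H W) {u} t)).card ≤ q * (t + 1) := by
  refine (card_le_card fun y hy => ?_).trans (h.card_inter_outerBoundary_le t ht)
  obtain ⟨hyS, hy⟩ := mem_inter.1 hy
  obtain ⟨-, x, hx, hxy⟩ := mem_outerBoundary.1 hy
  refine mem_inter.2 ⟨hyS, mem_outerBoundary.2 ⟨fun hyX => ?_, x,
    closedBall_mono (isolate_anti hSW) subset_rfl le_rfl hx, hxy⟩⟩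
  exact disjoint_left.1 (disjoint_closedBall_isolate t (disjoint_singleton_left.2 h.notMem)) hyX hyS

lemma IsShortGeodesic.card_inter_outerBoundary_le (h : IsShortGeodesic (isolate H W) A u S)
    (hu : u ∉ W) {U : Finset V} (huU : u ∉ U) (hWU : W ∩ closedBall H {u} r ⊆ U) {t : ℕ}
    (ht : t < r) :
    ((S ∩ closedBall H {u} r).erase u ∩
      outerBoundary H (closedBall (isolate H U) {u} t)).card ≤ t + 1 := by
  obtain ⟨x, g, hg, -, rfl⟩ := h
  refine (card_le_card (t := (Icc 1 (t + 1)).image g.getVert) fun y hy => ?_).trans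
    (card_image_le.trans (by simp))
  obtain ⟨hyu, hyg, -, hy⟩ : y ≠ u ∧ y ∈ g.support ∧ _ := by simpa using hy
  obtain ⟨-, z, hz, hzy⟩ := mem_outerBoundary.1 hy
  obtain ⟨p, hp⟩ := mem_closedBall_singleton.1 hz
  have hpW : ∀ v ∈ p.support, v ∉ W := fun v hv hvW => by
    refine notMem_of_mem_support_isolate p huU v hv (hWU (mem_inter.2 ⟨hvW, ?_⟩))
    have := Walk.length_takeUntil_le_length p hv
    exact mem_closedBall_singleton.2 ⟨(p.takeUntil v hv).mapLe (isolate_le _ _), by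
      rw [Walk.length_mapLe]; omega⟩
  have hyW := notMem_of_mem_support_isolate g hu y hyg
  obtain ⟨p', hp'⟩ := exists_walk_isolate (p.mapLe (isolate_le H U)) (W := W) (by simpa using hpW)
  rw [Walk.length_mapLe] at hp'
  have hadj : (isolate H W).Adj z y := ⟨hzy, hpW z p.end_mem_support, hyW⟩
  have hdist := dist_le (p'.concat hadj)
  rw [Walk.length_concat] at hdist
  have hpos := (g.takeUntil y hyg).reachable.pos_dist_of_ne hyu.symm
  exact mem_image.2 ⟨_, mem_Icc.2 ⟨hpos, by omega⟩, getVert_dist_of_mem_support hg hyg⟩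

lemma Thin.succ (h : Thin H u r A q (W ∩ closedBall H {u} r)) (hu : u ∉ W)
    (hS : IsShortGeodesic (isolate H W) A u S) :
    Thin H u r A (q + 1) (W ∩ closedBall H {u} r ∪ (S ∩ closedBall H {u} r).erase u) := by
  have hnotMem : u ∉ W ∩ closedBall H {u} r ∪ (S ∩ closedBall H {u} r).erase u := by simp [hu]
  refine ⟨hnotMem, (card_union_le _ _).trans ?_, fun t ht => ?_⟩ <;> rw [add_one_mul]
  · exact Nat.add_le_add h.card_le
      ((card_le_card ((erase_subset _ _).trans inter_subset_left)).trans hS.card_le)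
  · rw [union_inter_distrib_right]
    exact (card_union_le _ _).trans (Nat.add_le_add
      (h.card_inter_outerBoundary_le_of_subset subset_union_left ht)
      (hS.card_inter_outerBoundary_le hu hnotMem subset_union_left ht))

lemma RobustMinDegree.exists_disjoint_closedBalls {k d ω : ℕ} (hrob : RobustMinDegree H d ω)
    (χ : H.Coloring Bool) (hΔ : ∀ v, degIn H univ v ≤ Δ) (hd : 1 ≤ d) (r : ℕ)
    (hω : k * (Δ + 1) ^ r * (Δ + 1) ^ r ≤ ω) :
    ∃ f : Fin k → V, (∀ m, χ (f m) = true) ∧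
      Pairwise fun m m' => Disjoint (closedBall H {f m} r) (closedBall H {f m'} r) := by
  refine exists_fin_pairwise_disjoint (p := fun v => χ v = true) (E := fun v => closedBall H {v} r)
    (c := (Δ + 1) ^ r) (fun v _ => by simpa using card_closedBall_le hΔ {v} r) fun B hB => ?_
  have hball := card_closedBall_le hΔ B r
  have hball' := Nat.mul_le_mul_right ((Δ + 1) ^ r) hB
  obtain ⟨c, E, hc, -, -, hcB⟩ := hrob.exists_star χ hd (Nat.zero_le d) (B := closedBall H B r)
    (by omega)
  refine ⟨c, hc, disjoint_left.2 fun x hx hxB => ?_⟩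
  exact disjoint_left.1 hcB (mem_insert_self _ _) (closedBall_mono le_rfl
    (singleton_subset_iff.2 hxB) le_rfl (mem_closedBall_singleton_symm hx))

lemma card_inter_outerBoundary_le_of_pairwise_disjoint {k w₁ R : ℕ} {f : Fin k → V}
    (hf : Pairwise fun m m' => Disjoint (closedBall H {f m} R) (closedBall H {f m'} R))
    (hrR : r ≤ R) (hW : (W \ univ.biUnion fun m => closedBall H {f m} r).card ≤ w₁) (m : Fin k)
    {t : ℕ} (ht : t < R) :
    (W ∩ outerBoundary H (closedBall (isolate H W) {f m} t)).card ≤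
      (W ∩ closedBall H {f m} r).card + w₁ := by
  refine (card_le_card fun y hy => ?_).trans
    ((card_union_le _ _).trans (Nat.add_le_add_left hW _))
  obtain ⟨hyW, hy⟩ := mem_inter.1 hy
  have hyR := closedBall_mono le_rfl subset_rfl ht (outerBoundary_closedBall_isolate_subset t hy)
  by_cases hym : y ∈ closedBall H {f m} r
  · exact mem_union_left _ (mem_inter.2 ⟨hyW, hym⟩)
  refine mem_union_right _ (mem_sdiff.2 ⟨hyW, fun hcore => ?_⟩)
  obtain ⟨m', -, hm'⟩ := mem_biUnion.1 hcore
  have hne : m' ≠ m := by rintro rfl; exact hym hm'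
  exact disjoint_left.1 (hf hne) (closedBall_mono le_rfl subset_rfl hrR hm') hyR

lemma RobustMinDegree.nonempty_ports_of_localExpander {k w₁ w d ω j₁ : ℕ}
    (hrob : RobustMinDegree H d ω) (χ : H.Coloring Bool) (hLE : LocalExpander H D)
    (hmin : ∀ v, D ≤ degIn H univ v) (hΔ : ∀ v, degIn H univ v ≤ Δ) (hd : 1 ≤ d) (hj : j₁ ≤ j)
    (hω : k * (Δ + 1) ^ radius j * (Δ + 1) ^ radius j ≤ ω)
    (hw : k * (Δ + 1) ^ radius j₁ + w₁ ≤ w) (hkD : 8 * k ≤ 3 * D)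
    (hnear : ∀ i < j, ∀ t < radius (i + 1), 128 * (i + 4) ^ 2 * (2 * k * (t + 1)) ≤ 2 ^ i * D)
    (hfar : ∀ i < j, j₁ ≤ i → 128 * (i + 4) ^ 2 * (2 * k * (A + 1) + w₁) ≤ 2 ^ i * D)
    (hn : 2 ^ j * D ≤ Fintype.card V) (hβ : 4 * β ≤ 2 ^ j * D) (hR : radius j ≤ R) :
    Nonempty (Ports H χ k w₁ w A β R) := by
  obtain ⟨f, hf, hdisj⟩ := hrob.exists_disjoint_closedBalls χ hΔ hd (radius j) hω
  set r := radius j₁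
  have hr : 0 < r := radius_pos j₁
  have hrj : r ≤ radius j := radius_mono hj
  have hcore (m) : closedBall H {f m} r ⊆ closedBall H {f m} (radius j) :=
    closedBall_mono le_rfl subset_rfl hrj
  have hcard : (univ.biUnion fun m => closedBall H {f m} r).card ≤ k * (Δ + 1) ^ r := by
    simpa using card_biUnion_le_card_mul univ (fun m => closedBall H {f m} r) ((Δ + 1) ^ r)
      fun m _ => (card_closedBall_le hΔ _ _).trans (by simp)
  refine ⟨⟨f, fun m => closedBall H {f m} r, fun m q S => Thin H (f m) r A q S,
    fun m => subset_closedBall _ _ _ (mem_singleton_self _),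
    fun m m' hm => (hdisj hm).mono (hcore m) (hcore m'), hf, by omega,
    fun m => ⟨by simp, by simp, by simp⟩, fun m q W hS hq hu hW => ?_,
    fun m q W S hS hu hshort => hS.succ hu hshort⟩⟩
  refine hLE.hasLargeBall hmin hu hn (loss := fun t => if t < r then 2 * k * (t + 1) else
      2 * k * (A + 1) + w₁) (fun t ht => ?_) (by simp only [hr, if_true]; omega)
    (fun i hi t ht => ?_) hβ hR
  · split_ifs with htr
    · refine (card_le_card fun y hy => ?_).trans ((hS.card_inter_outerBoundary_le_of_subset
        inter_subset_left htr).trans (Nat.mul_le_mul_right _ hq))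
      obtain ⟨hyW, hy⟩ := mem_inter.1 hy
      have := closedBall_mono le_rfl subset_rfl htr (outerBoundary_closedBall_isolate_subset t hy)
      exact mem_inter.2 ⟨mem_inter.2 ⟨hyW, this⟩, hy⟩
    · exact (card_inter_outerBoundary_le_of_pairwise_disjoint hdisj hrj hW m ht).trans
        (Nat.add_le_add_right (hS.card_le.trans (Nat.mul_le_mul_right _ hq)) _)
  · split_ifs with htr
    · exact hnear i hi t ht
    · refine hfar i hi ?_
      by_contra! hlt
      exact htr (ht.trans_le (radius_mono hlt))

end LocalGrowth

section Sparse

lemma add_five_pow_le (i : ℕ) : (i + 5) ^ 5 ≤ 4300 * 2 ^ i := by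
  induction i with
  | zero => norm_num
  | succ i ih =>
    rcases Nat.lt_or_ge i 2 with h | h
    · interval_cases i <;> norm_num
    obtain ⟨m, rfl⟩ := Nat.exists_eq_add_of_le h
    have : (2 + m + 1 + 5) ^ 5 ≤ 2 * (2 + m + 5) ^ 5 := by
      ring_nf
      nlinarith [Nat.zero_le (m ^ 2), Nat.zero_le (m ^ 3), Nat.zero_le (m ^ 4),
        Nat.zero_le (m ^ 5)]
    rw [pow_succ 2 (2 + m)]
    omega

variable {k D L a : ℕ}

lemma mul_le_two_pow_mul_of_lt_radius {i t : ℕ} (hkD : 10 ^ 8 * k ≤ D) (ht : t < radius (i + 1)) :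
    128 * (i + 4) ^ 2 * (2 * k * (t + 3)) ≤ 2 ^ i * D := by
  have hradius := radius_le (i + 1)
  rw [show i + 1 + 4 = i + 5 by ring] at hradius
  have hone : 1 ≤ (i + 5) ^ 3 := Nat.one_le_pow _ _ (by omega)
  have ht' : t + 3 ≤ 35 * (i + 5) ^ 3 := by omega
  calc 128 * (i + 4) ^ 2 * (2 * k * (t + 3))
      ≤ 128 * (i + 5) ^ 2 * (2 * k * (35 * (i + 5) ^ 3)) := by gcongr; omega
    _ = 8960 * k * (i + 5) ^ 5 := by ring
    _ ≤ 8960 * k * (4300 * 2 ^ i) := Nat.mul_le_mul_left _ (add_five_pow_le i)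
    _ ≤ 2 ^ i * (10 ^ 8 * k) := by nlinarith [Nat.zero_le (2 ^ i * k)]
    _ ≤ 2 ^ i * D := Nat.mul_le_mul_left _ hkD

lemma mul_two_pow_le_two_pow_of_sq_le {i : ℕ} (ha : 10 ^ 6 ≤ a) (hi : a ^ 2 ≤ i) :
    128 * (i + 4) ^ 2 * 2 ^ (281 * a) ≤ 2 ^ i := by
  induction i, hi using Nat.le_induction with
  | base =>
    have h4 : a ^ 2 + 4 ≤ 2 * a ^ 2 := by nlinarith
    calc 128 * (a ^ 2 + 4) ^ 2 * 2 ^ (281 * a)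
        ≤ 128 * (2 * a ^ 2) ^ 2 * 2 ^ (281 * a) := by gcongr
      _ = 2 ^ 9 * a ^ 4 * 2 ^ (281 * a) := by ring
      _ ≤ 2 ^ 9 * (2 ^ a) ^ 4 * 2 ^ (281 * a) := by gcongr; exact Nat.lt_two_pow_self.le
      _ = 2 ^ (9 + a * 4 + 281 * a) := by rw [pow_add, pow_add, pow_mul 2 a 4]
      _ ≤ 2 ^ (a ^ 2) := Nat.pow_le_pow_right two_pos (by nlinarith)
  | succ i hi ih =>
    have : (i + 1 + 4) ^ 2 ≤ 2 * (i + 4) ^ 2 := by nlinarith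
    calc 128 * (i + 1 + 4) ^ 2 * 2 ^ (281 * a)
        ≤ 128 * (2 * (i + 4) ^ 2) * 2 ^ (281 * a) := by gcongr
      _ = 2 * (128 * (i + 4) ^ 2 * 2 ^ (281 * a)) := by ring
      _ ≤ 2 * 2 ^ i := Nat.mul_le_mul_left _ ih
      _ = 2 ^ (i + 1) := (pow_succ' ..).symm

lemma radius_pow_le (ha : 10 ^ 6 ≤ a) {m : ℕ} (hm : m ≠ 0) : radius (a ^ m) ≤ a ^ (3 * m + 1) := by
  have ham : a ≤ a ^ m := Nat.le_self_pow hm a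
  calc radius (a ^ m) ≤ 33 * (a ^ m + 4) ^ 3 := radius_le _
    _ ≤ 33 * (2 * a ^ m) ^ 3 := by gcongr; omega
    _ = 264 * a ^ (3 * m) := by ring
    _ ≤ a * a ^ (3 * m) := by gcongr; omega
    _ = a ^ (3 * m + 1) := (pow_succ' ..).symm

lemma radius_pow_le_three_mul (ha : 10 ^ 6 ≤ a) (haL : a ^ 100 ≤ L) :
    radius (a ^ 12) ≤ 3 * L ^ 5 := by
  have : radius (a ^ 12) ≤ a ^ 37 := radius_pow_le ha (by norm_num)
  have := scale_pow_le ha (show 37 < 100 by norm_num)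
  have := Nat.le_self_pow (show 5 ≠ 0 by norm_num) L
  omega

lemma pow_le_two_pow_mul (hLa : L ≤ 2 ^ a) (c : ℕ) : L ^ c ≤ 2 ^ (c * a) := by
  rw [mul_comm, pow_mul]
  exact Nat.pow_le_pow_left hLa c

lemma succ_pow_radius_le (ha : 10 ^ 6 ≤ a) (hLa : L ≤ 2 ^ a) {m : ℕ} (hm : m ≠ 0) :
    (L ^ 600 + 1) ^ radius (a ^ m) ≤ 2 ^ (601 * a ^ (3 * m + 2)) := by
  have hbase : L ^ 600 + 1 ≤ 2 ^ (601 * a) := by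
    have hsplit : 2 ^ (601 * a) = 2 ^ (600 * a) * 2 ^ a := by rw [← pow_add]; congr 1; ring
    have := pow_le_two_pow_mul hLa 600
    have : a < 2 ^ a := Nat.lt_two_pow_self
    have : 1 ≤ 2 ^ (600 * a) := Nat.one_le_two_pow
    nlinarith
  calc (L ^ 600 + 1) ^ radius (a ^ m) ≤ (2 ^ (601 * a)) ^ a ^ (3 * m + 1) :=
        (Nat.pow_le_pow_left hbase _).trans
          (Nat.pow_le_pow_right (by positivity) (radius_pow_le ha hm))
    _ = 2 ^ (601 * a ^ (3 * m + 2)) := by rw [← pow_mul]; congr 1; ring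

lemma two_pow_le_of_mul_two_pow_le {n x : ℕ} (hD : 1 ≤ D) (hn : D * 2 ^ L ≤ 2 * n) (hx : x < L) :
    2 ^ x ≤ n := by
  have hxL : 2 * 2 ^ x ≤ 2 ^ L := by
    rw [← pow_succ']
    exact Nat.pow_le_pow_right two_pos hx
  have := Nat.le_mul_of_pos_left (2 ^ L) hD
  omega

variable {V : Type*} [Fintype V] {H : SimpleGraph V}

lemma two_pow_pow_mul_le_card (ha : 10 ^ 6 ≤ a) (haL : a ^ 100 ≤ L) (hLa : L ≤ 2 ^ a)
    (hD : 1 ≤ D) (hDL : D ≤ L ^ 250) (hn : D * 2 ^ L ≤ 2 * Fintype.card V) :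
    2 ^ a ^ 12 * D ≤ Fintype.card V := by
  have := scale_pow_le ha (show 12 < 100 by norm_num)
  have : a ≤ a ^ 12 := Nat.le_self_pow (by norm_num) a
  calc 2 ^ a ^ 12 * D ≤ 2 ^ a ^ 12 * 2 ^ (250 * a) :=
        Nat.mul_le_mul_left _ (hDL.trans (pow_le_two_pow_mul hLa 250))
    _ = 2 ^ (a ^ 12 + 250 * a) := (pow_add ..).symm
    _ ≤ Fintype.card V := two_pow_le_of_mul_two_pow_le hD hn (by omega)

lemma four_mul_two_pow_pow_le (ha : 10 ^ 6 ≤ a) (hD : 1 ≤ D) :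
    4 * 2 ^ a ^ 11 ≤ 2 ^ a ^ 12 * D := by
  have := scale_pow_le ha (show 11 < 12 by norm_num)
  have : a ≤ a ^ 11 := Nat.le_self_pow (by norm_num) a
  calc 4 * 2 ^ a ^ 11 = 2 ^ (2 + a ^ 11) := (pow_add 2 2 _).symm
    _ ≤ 2 ^ a ^ 12 := Nat.pow_le_pow_right two_pos (by omega)
    _ ≤ 2 ^ a ^ 12 * D := Nat.le_mul_of_pos_right _ hD

lemma robustMinDegree_of_sparse (ha : 10 ^ 6 ≤ a) (haL : a ^ 100 ≤ L) (hLa : L ≤ 2 ^ a)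
    (hD : 2 ≤ D) (hn : D * 2 ^ L ≤ 2 * Fintype.card V) (hmin : ∀ v, D ≤ degIn H univ v)
    (hΔ : ∀ v, degIn H univ v ≤ L ^ 600) : RobustMinDegree H (D / 2 / 2) (2 ^ a ^ 40) := by
  intro W hW
  have hsum : D * Fintype.card V ≤ degSum H univ := by
    rw [mul_comm, ← smul_eq_mul, ← card_univ]
    exact card_nsmul_le_sum _ _ _ fun v _ => hmin v
  refine exists_disjoint_half_le_degIn (le_trans (by gcongr; omega) hsum) ?_
  have := scale_pow_le ha (show 40 < 100 by norm_num)
  have : a ≤ a ^ 40 := Nat.le_self_pow (by norm_num) a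
  calc 2 * ∑ v ∈ W, degIn H univ v ≤ 2 * (W.card * L ^ 600) :=
        Nat.mul_le_mul_left _ (sum_le_card_nsmul _ _ _ fun v _ => hΔ v)
    _ ≤ 2 ^ 1 * (2 ^ a ^ 40 * 2 ^ (600 * a)) :=
        Nat.mul_le_mul_left _ (Nat.mul_le_mul hW (pow_le_two_pow_mul hLa 600))
    _ = 2 ^ (1 + (a ^ 40 + 600 * a)) := by rw [pow_add, pow_add]
    _ < 2 ^ (2 + (a ^ 40 + 600 * a)) := Nat.pow_lt_pow_right one_lt_two (by omega)
    _ ≤ Fintype.card V := two_pow_le_of_mul_two_pow_le (by omega) hn (by omega)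
    _ ≤ D / 2 * Fintype.card V := Nat.le_mul_of_pos_left _ (by omega)

lemma two_mul_pow_mul_le_two_pow (ha : 10 ^ 6 ≤ a) (hLa : L ≤ 2 ^ a) :
    2 * L ^ 3 * 2 ^ a ^ 10 ≤ 2 ^ a ^ 11 := by
  have := scale_pow_le ha (show 10 < 11 by norm_num)
  have : a ≤ a ^ 10 := Nat.le_self_pow (by norm_num) a
  calc 2 * L ^ 3 * 2 ^ a ^ 10 ≤ 2 ^ 1 * 2 ^ (3 * a) * 2 ^ a ^ 10 :=
        Nat.mul_le_mul_right _ (Nat.mul_le_mul_left _ (pow_le_two_pow_mul hLa 3))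
    _ = 2 ^ (1 + 3 * a + a ^ 10) := by rw [pow_add, pow_add]
    _ ≤ 2 ^ a ^ 11 := Nat.pow_le_pow_right two_pos (by omega)

lemma twelve_mul_two_pow_le_card (ha : 10 ^ 6 ≤ a) (haL : a ^ 100 ≤ L) (hD : 1 ≤ D)
    (hn : D * 2 ^ L ≤ 2 * Fintype.card V) : 12 * 2 ^ a ^ 10 ≤ Fintype.card V := by
  have := scale_pow_le ha (show 10 < 100 by norm_num)
  have : a ≤ a ^ 10 := Nat.le_self_pow (by norm_num) a
  calc 12 * 2 ^ a ^ 10 ≤ 2 ^ 4 * 2 ^ a ^ 10 := Nat.mul_le_mul_right _ (by norm_num)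
    _ = 2 ^ (4 + a ^ 10) := (pow_add ..).symm
    _ ≤ Fintype.card V := two_pow_le_of_mul_two_pow_le hD hn (by omega)

lemma le_two_pow_pow (ha : 10 ^ 6 ≤ a) (hLa : L ≤ 2 ^ a) (hDL : D ≤ L ^ 250) : D ≤ 2 ^ a ^ 11 := by
  have : 10 ^ 6 * a ≤ a ^ 11 := by simpa using scale_pow_le ha (show 1 < 11 by norm_num)
  exact (hDL.trans (pow_le_two_pow_mul hLa 250)).trans (Nat.pow_le_pow_right two_pos (by omega))

lemma hasAdjusters_of_sparse (χ : H.Coloring Bool) (ha : 10 ^ 6 ≤ a) (haL : a ^ 100 ≤ L)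
    (hLa : L ≤ 2 ^ a) (hD : 10 ^ 8 ≤ D) (hDL : D ≤ L ^ 250)
    (hn : D * 2 ^ L ≤ 2 * Fintype.card V) (hE : Expander H D L (L ^ 3) (L ^ 5))
    (hLE : LocalExpander H D) (hmin : ∀ v, D ≤ degIn H univ v)
    (hΔ : ∀ v, degIn H univ v ≤ L ^ 600) :
    HasAdjusters H (2 ^ a ^ 10) (12 * L ^ 5) (2 ^ a ^ 11) (3 * L ^ 5) := by
  have hrob := robustMinDegree_of_sparse ha haL hLa (by omega) hn hmin hΔ
  have hL : 10 ^ 6 ≤ L := ha.trans ((Nat.le_self_pow (by norm_num) a).trans haL)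
  have hL5 : L ≤ L ^ 5 := Nat.le_self_pow (by norm_num) L
  refine hrob.hasAdjusters_of_localExpander χ hE hLE hmin hΔ (by omega)
    (two_mul_pow_mul_le_two_pow ha hLa) (le_two_pow_pow ha hLa hDL)
    (twelve_mul_two_pow_le_card ha haL (by omega) hn) (by omega) ?_ (by omega)
    (fun i _ t ht => by simpa using mul_le_two_pow_mul_of_lt_radius (k := 1) (by omega) ht)
    (two_pow_pow_mul_le_card ha haL hLa (by omega) hDL hn) (four_mul_two_pow_pow_le ha (by omega))
    (radius_pow_le_three_mul ha haL)
  have hpow {x y : ℕ} (h : x ≤ y) : 2 ^ x ≤ 2 ^ y := Nat.pow_le_pow_right two_pos h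
  have hscale {x y : ℕ} (h : x < y) := scale_pow_le ha h
  have hball : 2 ^ a ^ 10 * (L ^ 600 + 1) ^ radius (a ^ 12) ≤ 2 ^ a ^ 39 := calc
    _ ≤ 2 ^ a ^ 10 * 2 ^ (601 * a ^ 38) :=
      Nat.mul_le_mul_left _ (succ_pow_radius_le ha hLa (by norm_num))
    _ = 2 ^ (a ^ 10 + 601 * a ^ 38) := (pow_add ..).symm
    _ ≤ 2 ^ a ^ 39 := hpow (by
      have := hscale (show 10 < 39 by norm_num)
      have := hscale (show 38 < 39 by norm_num)
      omega)
  have hβ : 2 ^ a ^ 11 ≤ 2 ^ a ^ 39 := hpow (Nat.pow_le_pow_right (by omega) (by norm_num))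
  have hω : 2 ^ (a ^ 39 + 2) ≤ 2 ^ a ^ 40 := hpow (by
    have := hscale (show 39 < 40 by norm_num)
    have : a ≤ a ^ 39 := Nat.le_self_pow (by norm_num) a
    omega)
  rw [pow_add] at hω
  have := Nat.one_le_two_pow (n := a ^ 39)
  omega

set_option exponentiation.threshold 1000 in
lemma two_mul_mul_add_le_two_pow (hL : 10 ^ 6 ≤ L) (hLa : L ≤ 2 ^ a) (hkL : k ≤ L ^ 250) :
    2 * k * (12 * L ^ 5 + 1) + L ^ 280 ≤ 2 ^ (281 * a) := by
  have h5 : 12 * L ^ 5 + 1 ≤ L ^ 6 := by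
    have := scale_pow_le hL (show 5 < 6 by norm_num)
    have := Nat.le_self_pow (show 5 ≠ 0 by norm_num) L
    omega
  have hk : 2 * k * (12 * L ^ 5 + 1) ≤ 2 * L ^ 256 := calc
    _ ≤ 2 * L ^ 250 * L ^ 6 := by gcongr
    _ = 2 * L ^ 256 := by ring
  have := scale_pow_le hL (show 256 < 281 by norm_num)
  have := scale_pow_le hL (show 280 < 281 by norm_num)
  have := pow_le_two_pow_mul hLa 281
  omega

lemma nonempty_ports_of_sparse (χ : H.Coloring Bool) (hk : 1 ≤ k) (hkD : 10 ^ 8 * k ≤ D)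
    (ha : 10 ^ 6 ≤ a) (haL : a ^ 100 ≤ L) (hLa : L ≤ 2 ^ a) (hDL : D ≤ L ^ 250)
    (hn : D * 2 ^ L ≤ 2 * Fintype.card V) (hLE : LocalExpander H D)
    (hmin : ∀ v, D ≤ degIn H univ v) (hΔ : ∀ v, degIn H univ v ≤ L ^ 600) :
    Nonempty (Ports H χ k (L ^ 280) (2 ^ a ^ 10) (12 * L ^ 5) (2 ^ a ^ 11) (3 * L ^ 5)) := by
  have hrob := robustMinDegree_of_sparse ha haL hLa (by omega) hn hmin hΔ
  have hL : 10 ^ 6 ≤ L := ha.trans ((Nat.le_self_pow (by norm_num) a).trans haL)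
  have hkL : k ≤ L ^ 250 := le_trans (by omega) hDL
  have hpow {x y : ℕ} (h : x ≤ y) : 2 ^ x ≤ 2 ^ y := Nat.pow_le_pow_right two_pos h
  have hscale {x y : ℕ} (h : x < y) := scale_pow_le ha h
  have hk2 : k ≤ 2 ^ (250 * a) := hkL.trans (pow_le_two_pow_mul hLa 250)
  refine hrob.nonempty_ports_of_localExpander (j := a ^ 12) (j₁ := a ^ 2) χ hLE hmin hΔ (by omega)
    (Nat.pow_le_pow_right (by omega) (by norm_num)) ?_ ?_ (by omega)
    (fun i _ t ht => ?_) (fun i _ hi => ?_)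
    (two_pow_pow_mul_le_card ha haL hLa (by omega) hDL hn) (four_mul_two_pow_pow_le ha (by omega))
    (radius_pow_le_three_mul ha haL)
  · have hball : (L ^ 600 + 1) ^ radius (a ^ 12) ≤ 2 ^ (601 * a ^ 38) :=
      succ_pow_radius_le ha hLa (by norm_num)
    calc k * (L ^ 600 + 1) ^ radius (a ^ 12) * (L ^ 600 + 1) ^ radius (a ^ 12)
        ≤ 2 ^ (250 * a) * 2 ^ (601 * a ^ 38) * 2 ^ (601 * a ^ 38) := by gcongr
      _ = 2 ^ (250 * a + 601 * a ^ 38 + 601 * a ^ 38) := by rw [pow_add, pow_add]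
      _ ≤ 2 ^ a ^ 40 := hpow (by
        have : 10 ^ 6 * a ≤ a ^ 40 := by simpa using hscale (show 1 < 40 by norm_num)
        have := hscale (show 38 < 40 by norm_num)
        omega)
  · have : 10 ^ 6 * a ≤ a ^ 9 := by simpa using hscale (show 1 < 9 by norm_num)
    have := hscale (show 8 < 9 by norm_num)
    have hball : k * (L ^ 600 + 1) ^ radius (a ^ 2) ≤ 2 ^ a ^ 9 := calc
      _ ≤ 2 ^ (250 * a) * 2 ^ (601 * a ^ 8) :=
        Nat.mul_le_mul hk2 (succ_pow_radius_le ha hLa (by norm_num))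
      _ = 2 ^ (250 * a + 601 * a ^ 8) := (pow_add ..).symm
      _ ≤ 2 ^ a ^ 9 := hpow (by omega)
    have hw₁ : L ^ 280 ≤ 2 ^ a ^ 9 := (pow_le_two_pow_mul hLa 280).trans (hpow (by omega))
    have hw : 2 ^ (a ^ 9 + 1) ≤ 2 ^ a ^ 10 := hpow (by
      have := hscale (show 9 < 10 by norm_num)
      have : a ≤ a ^ 9 := Nat.le_self_pow (by norm_num) a
      omega)
    rw [pow_succ] at hw
    omega
  · exact le_trans (by gcongr; omega) (mul_le_two_pow_mul_of_lt_radius hkD ht)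
  · calc _ ≤ 128 * (i + 4) ^ 2 * 2 ^ (281 * a) :=
          Nat.mul_le_mul_left _ (two_mul_mul_add_le_two_pow hL hLa hkL)
      _ ≤ 2 ^ i := mul_two_pow_le_two_pow_of_sq_le ha hi
      _ ≤ 2 ^ i * D := Nat.le_mul_of_pos_right _ (by omega)

set_option exponentiation.threshold 1000 in
lemma exists_hasTK_of_sparse (χ : H.Coloring Bool) (hk : 1 ≤ k) (hkk : k * k ≤ D)
    (hkD : 10 ^ 8 * k ≤ D) (ha : 10 ^ 6 ≤ a) (haL : a ^ 100 ≤ L) (hLa : L ≤ 2 ^ a)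
    (hDL : D ≤ L ^ 250) (hn : D * 2 ^ L ≤ 2 * Fintype.card V)
    (hE : Expander H D L (L ^ 3) (L ^ 5)) (hLE : LocalExpander H D)
    (hmin : ∀ v, D ≤ degIn H univ v) (hΔ : ∀ v, degIn H univ v ≤ L ^ 600) :
    ∃ l, HasTK H k l := by
  obtain ⟨P⟩ := nonempty_ports_of_sparse χ hk hkD ha haL hLa hDL hn hLE hmin hΔ
  have hadj := hasAdjusters_of_sparse χ ha haL hLa (by omega) hDL hn hE hLE hmin hΔ
  have hL : 10 ^ 6 ≤ L := ha.trans ((Nat.le_self_pow (by norm_num) a).trans haL)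
  have hL5 : L ≤ L ^ 5 := Nat.le_self_pow (by norm_num) L
  refine ⟨_, P.hasTK hE (two_mul_pow_mul_le_two_pow ha hLa) (le_two_pow_pow ha hLa hDL)
    (twelve_mul_two_pow_le_card ha haL (by omega) hn) (by omega) ⟨6 * L ^ 5, by ring⟩ (by omega)
    hadj ?_⟩
  set A := 12 * L ^ 5 with hA
  have hAL : A ≤ L ^ 6 := by
    have := scale_pow_le hL (show 5 < 6 by norm_num)
    omega
  have hk2 : k * k + 2 ≤ 3 * L ^ 250 := by omega
  have hlength : pathLength A ≤ 5 * A * A := by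
    rw [pathLength]
    nlinarith
  calc (k * k + 2) * (pathLength A * A) ≤ 3 * L ^ 250 * (5 * A * A * A) :=
        Nat.mul_le_mul hk2 (Nat.mul_le_mul_right _ hlength)
    _ ≤ 3 * L ^ 250 * (5 * L ^ 6 * L ^ 6 * L ^ 6) := by gcongr
    _ = 15 * L ^ 268 := by ring
    _ ≤ L ^ 280 := by
      have := scale_pow_le hL (show 268 < 280 by norm_num)
      omega

end Sparse

/-! ### The densest subgraph for a slowly decreasing weight -/

/-- The factor by which the average degree of a subgraph on `x` vertices is multiplied when
selecting an extremal subgraph. It decreases from `2` to `1`, so slowly that a subgraph of maximal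
weighted average degree expands with only logarithmic loss. -/
noncomputable def weight (D x : ℕ) : ℝ := 1 + 1 / (1 + Real.log (1 + (x : ℝ) / D))

section Weight
variable {D m n j : ℕ}

lemma log_one_add_div_nonneg (D x : ℕ) : 0 ≤ Real.log (1 + (x : ℝ) / D) :=
  Real.log_nonneg (le_add_of_nonneg_right (by positivity))

lemma one_le_weight (D x : ℕ) : 1 ≤ weight D x :=
  have := log_one_add_div_nonneg D x
  le_add_of_nonneg_right (by positivity)

lemma weight_le_two (D x : ℕ) : weight D x ≤ 2 := by
  have hlog := log_one_add_div_nonneg D x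
  have : 1 / (1 + Real.log (1 + (x : ℝ) / D)) ≤ 1 := by
    rw [div_le_one (by linarith)]
    linarith
  rw [weight]
  linarith

lemma weight_antitone (D : ℕ) : Antitone (weight D) := fun x y h => by
  have hlog := log_one_add_div_nonneg D x
  unfold weight
  gcongr

lemma one_sub_inv_le_sq_mul_weight_sub (hD : 1 ≤ D) {r : ℝ} (hr1 : 1 ≤ r)
    (hr : r * (D + m) ≤ D + n) (hn : D + n ≤ 2 ^ j * D) :
    1 - r⁻¹ ≤ (1 + j) ^ 2 * (weight D m - weight D n) := by
  have hD0 : (0 : ℝ) < D := by exact_mod_cast hD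
  set x := Real.log (1 + (m : ℝ) / D) with hx
  set y := Real.log (1 + (n : ℝ) / D) with hy
  have hx0 : 0 ≤ x := log_one_add_div_nonneg D m
  have hlog : 1 - r⁻¹ ≤ Real.log r := Real.one_sub_inv_le_log_of_pos (by linarith)
  have hxy : Real.log r + x ≤ y := by
    rw [hx, hy, ← Real.log_mul (by linarith) (by positivity)]
    refine Real.log_le_log (by positivity) ?_
    rw [one_add_div hD0.ne', one_add_div hD0.ne', mul_div_assoc']
    gcongr
  have hyj : y ≤ j := calc
    y ≤ Real.log (2 ^ j) := by
      refine Real.log_le_log (by positivity) ?_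
      rw [one_add_div hD0.ne', div_le_iff₀ hD0]
      exact_mod_cast hn
    _ = j * Real.log 2 := Real.log_pow ..
    _ ≤ j := mul_le_of_le_one_right (by positivity) (by linarith [Real.log_two_lt_d9])
  have hr0 : 0 ≤ 1 - r⁻¹ := sub_nonneg.2 (inv_le_one_of_one_le₀ hr1)
  have hsub : weight D m - weight D n = (y - x) / ((1 + x) * (1 + y)) := by
    have : 1 + x ≠ 0 := by linarith
    have : 1 + y ≠ 0 := by linarith
    simp only [weight, ← hx, ← hy]
    field_simp
    ring
  have hden : (1 + x) * (1 + y) ≤ (1 + j) ^ 2 := by nlinarith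
  rw [hsub, mul_div_assoc', le_div_iff₀ (by nlinarith)]
  calc (1 - r⁻¹) * ((1 + x) * (1 + y)) ≤ (y - x) * (1 + j) ^ 2 :=
        mul_le_mul (by linarith) hden (by nlinarith) (by linarith)
    _ = (1 + j) ^ 2 * (y - x) := mul_comm _ _

end Weight

section IsWeightMaximal
variable {V : Type*} [Fintype V] {H : SimpleGraph V} {D : ℕ}

/-- `H` has the largest weighted average degree among its induced subgraphs; both sides are
multiplied by the numbers of vertices. -/
def IsWeightMaximal (H : SimpleGraph V) (D : ℕ) : Prop :=
  ∀ T : Finset V, T.Nonempty → (degSum H T : ℝ) * weight D #T * Fintype.card V ≤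
    degSum H univ * weight D (Fintype.card V) * #T

lemma degSum_univ_le (H : SimpleGraph V) (X : Finset V) :
    degSum H univ ≤ degSum H (univ \ X) + degSum H (X ∪ outerBoundary H X) := by
  have hsplit : degSum H univ =
      degSum H X + degSum H (univ \ X) + 2 * ∑ v ∈ X, degIn H (univ \ X) v := by
    rw [← degSum_union disjoint_sdiff, union_sdiff_of_subset (subset_univ X)]
  have hunion := degSum_union (H := H) (disjoint_outerBoundary H X)
  have hout : ∑ v ∈ X, degIn H (univ \ X) v ≤ ∑ v ∈ X, degIn H (outerBoundary H X) v := by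
    refine sum_le_sum fun v hv => card_le_card fun y hy => ?_
    simp only [mem_filter, mem_sdiff, mem_univ, true_and, mem_outerBoundary] at hy ⊢
    exact ⟨⟨hy.1, v, hv, hy.2⟩, hy.2⟩
  omega

namespace IsWeightMaximal

lemma degSum_sdiff_mul_card_le (h : IsWeightMaximal H D) (X : Finset V) :
    (degSum H (univ \ X) : ℝ) * Fintype.card V ≤ degSum H univ * (Fintype.card V - #X) := by
  have hcard : (#(univ \ X) : ℝ) = Fintype.card V - #X := by
    rw [card_sdiff_of_subset (subset_univ X), card_univ, Nat.cast_sub (card_le_univ X)]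
  rw [← hcard]
  rcases (univ \ X).eq_empty_or_nonempty with hX | hX
  · simp [hX, degSum_empty]
  have hweight := weight_antitone D (card_le_univ (univ \ X))
  have hpos : 0 < weight D (Fintype.card V) := by linarith [one_le_weight D (Fintype.card V)]
  refine le_of_mul_le_mul_right (a := weight D (Fintype.card V)) ?_ hpos
  calc (degSum H (univ \ X) : ℝ) * Fintype.card V * weight D (Fintype.card V)
      ≤ degSum H (univ \ X) * Fintype.card V * weight D #(univ \ X) := by gcongr
    _ = degSum H (univ \ X) * weight D #(univ \ X) * Fintype.card V := by ring
    _ ≤ degSum H univ * weight D (Fintype.card V) * #(univ \ X) := h _ hX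
    _ = degSum H univ * #(univ \ X) * weight D (Fintype.card V) := by ring

lemma card_mul_weight_sub_le (h : IsWeightMaximal H D) (hpos : 0 < degSum H univ) {X : Finset V}
    (hX : X.Nonempty) :
    (#X : ℝ) * (weight D #(X ∪ outerBoundary H X) - weight D (Fintype.card V)) ≤
      2 * #(outerBoundary H X) := by
  have hsdiff := h.degSum_sdiff_mul_card_le X
  have hunion := h (X ∪ outerBoundary H X) (hX.mono subset_union_left)
  have hdeg : (degSum H univ : ℝ) ≤ degSum H (univ \ X) + degSum H (X ∪ outerBoundary H X) := by
    exact_mod_cast degSum_univ_le H X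
  have : (0 : ℝ) < Fintype.card V := by exact_mod_cast Fintype.card_pos_iff.2 ⟨hX.choose⟩
  have hE : (0 : ℝ) < degSum H univ := by exact_mod_cast hpos
  have hcard : (#(X ∪ outerBoundary H X) : ℝ) = #X + #(outerBoundary H X) := by
    exact_mod_cast card_union_of_disjoint (disjoint_outerBoundary H X)
  have hm := one_le_weight D #(X ∪ outerBoundary H X)
  have hn := weight_le_two D (Fintype.card V)
  set fm := weight D #(X ∪ outerBoundary H X)
  set fn := weight D (Fintype.card V)
  have hXdeg : (degSum H univ : ℝ) * #X ≤ degSum H (X ∪ outerBoundary H X) * Fintype.card V := by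
    nlinarith
  have hmul : (degSum H univ : ℝ) * (#X * fm) ≤
      degSum H univ * (fn * #(X ∪ outerBoundary H X)) := by nlinarith
  have hXm := le_of_mul_le_mul_left hmul hE
  rw [hcard] at hXm
  nlinarith [(#(outerBoundary H X)).cast_nonneg (α := ℝ)]

lemma le_degIn (h : IsWeightMaximal H D) (hsum : 2 * D * Fintype.card V ≤ degSum H univ) (v : V) :
    D ≤ degIn H univ v := by
  have hsdiff := h.degSum_sdiff_mul_card_le {v}
  rw [sdiff_singleton_eq_erase, card_singleton, Nat.cast_one] at hsdiff
  have hV : (0 : ℝ) < Fintype.card V := by exact_mod_cast Fintype.card_pos_iff.2 ⟨v⟩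
  have herase : (degSum H univ : ℝ) = degSum H (univ.erase v) + 2 * degIn H univ v := by
    exact_mod_cast degSum_erase (H := H) (mem_univ v)
  have hsum' : (2 : ℝ) * D * Fintype.card V ≤ degSum H univ := by exact_mod_cast hsum
  have : (D : ℝ) * Fintype.card V ≤ degIn H univ v * Fintype.card V := by nlinarith
  exact_mod_cast le_of_mul_le_mul_right this hV

lemma expander (h : IsWeightMaximal H D) (hD : 1 ≤ D) (hpos : 0 < degSum H univ) {L : ℕ}
    (hL : 100 ≤ L) (hV : Fintype.card V ≤ D * 2 ^ L) (hDV : D ≤ Fintype.card V) :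
    Expander H D L (L ^ 3) (L ^ 5) := by
  refine ⟨Nat.one_le_pow _ _ (by omega), ?_, hV, by omega, fun X hX => ?_⟩
  · calc 2 * L ^ 3 * L ≤ L * L ^ 3 * L := by gcongr; omega
      _ = L ^ 5 := by ring
  rcases X.eq_empty_or_nonempty with rfl | hX0
  · simp
  have hkey := h.card_mul_weight_sub_le hpos hX0
  have hLR : (100 : ℝ) ≤ L := by exact_mod_cast hL
  have hdiff := one_sub_inv_le_sq_mul_weight_sub (r := 8 / 7) (j := L + 1) hD (by norm_num)
    (m := #(X ∪ outerBoundary H X)) (n := Fintype.card V)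
    (by
      have : (D : ℝ) ≤ Fintype.card V := by exact_mod_cast hDV
      have : 4 * (#(X ∪ outerBoundary H X) : ℝ) ≤ 3 * Fintype.card V := by exact_mod_cast hX
      linarith)
    (by
      have : D ≤ D * 2 ^ L := Nat.le_mul_of_pos_right _ (by positivity)
      have : 2 ^ (L + 1) * D = 2 * (D * 2 ^ L) := by ring
      omega)
  set δ := weight D #(X ∪ outerBoundary H X) - weight D (Fintype.card V)
  have hL3 : 16 * (1 + (L + 1 : ℕ) : ℝ) ^ 2 ≤ L ^ 3 := by
    push_cast
    nlinarith
  have hcard : (#X : ℝ) ≤ L ^ 3 * #(outerBoundary H X) := calc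
    (#X : ℝ) = 8 * (#X * (1 - (8 / 7)⁻¹)) := by ring
    _ ≤ 8 * (#X * ((1 + (L + 1 : ℕ)) ^ 2 * δ)) := by gcongr
    _ = 8 * (1 + (L + 1 : ℕ)) ^ 2 * (#X * δ) := by ring
    _ ≤ 8 * (1 + (L + 1 : ℕ)) ^ 2 * (2 * #(outerBoundary H X)) := by gcongr
    _ = 16 * (1 + (L + 1 : ℕ)) ^ 2 * #(outerBoundary H X) := by ring
    _ ≤ L ^ 3 * #(outerBoundary H X) := by gcongr
  exact_mod_cast hcard

lemma localExpander (h : IsWeightMaximal H D) (hD : 1 ≤ D) (hpos : 0 < degSum H univ) :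
    LocalExpander H D := by
  intro i X hDX hXi hXV
  rcases X.eq_empty_or_nonempty with rfl | hX
  · simp
  by_cases hN : #X ≤ #(outerBoundary H X)
  · exact hN.trans (Nat.le_mul_of_pos_left _ (by positivity))
  have hkey := h.card_mul_weight_sub_le hpos hX
  have hcard : #(X ∪ outerBoundary H X) = #X + #(outerBoundary H X) :=
    card_union_of_disjoint (disjoint_outerBoundary H X)
  set m := #(X ∪ outerBoundary H X)
  have hanti := weight_antitone D (show 2 * m ≤ Fintype.card V by omega)
  have hdiff := one_sub_inv_le_sq_mul_weight_sub (r := 6 / 5) (j := i + 3) hD (by norm_num)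
    (m := m) (n := 2 * m)
    (by
      have : (D : ℝ) ≤ 4 * m := by exact_mod_cast show D ≤ 4 * m by omega
      push_cast
      linarith)
    (by
      have : D ≤ 2 ^ i * D := Nat.le_mul_of_pos_left _ (by positivity)
      have : 2 ^ (i + 3) * D = 8 * (2 ^ i * D) := by ring
      omega)
  have hX16 : (#X : ℝ) ≤ 16 * (i + 4) ^ 2 * #(outerBoundary H X) := calc
    (#X : ℝ) = 6 * (#X * (1 - (6 / 5)⁻¹)) := by ring
    _ ≤ 6 * (#X * ((1 + (i + 3 : ℕ)) ^ 2 * (weight D m - weight D (2 * m)))) := by gcongr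
    _ ≤ 6 * (#X * ((1 + (i + 3 : ℕ)) ^ 2 * (weight D m - weight D (Fintype.card V)))) := by gcongr
    _ = 6 * (i + 4) ^ 2 * (#X * (weight D m - weight D (Fintype.card V))) := by push_cast; ring
    _ ≤ 6 * (i + 4) ^ 2 * (2 * #(outerBoundary H X)) := by gcongr
    _ ≤ 16 * (i + 4) ^ 2 * #(outerBoundary H X) := by
      have : (0 : ℝ) ≤ (i + 4) ^ 2 * #(outerBoundary H X) := by positivity
      linarith
  exact_mod_cast hX16

end IsWeightMaximal

end IsWeightMaximal

/-! ### Bipartite graphs of maximal weight -/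

section Scales

lemma exists_forall_two_mul_pow_le_two_pow (c : ℕ) : ∃ N, ∀ n ≥ N, 2 * n ^ c ≤ 2 ^ n := by
  have htendsto := tendsto_pow_const_div_const_pow_of_one_lt c (one_lt_two (α := ℝ))
  obtain ⟨N, hN⟩ := Filter.eventually_atTop.1
    (htendsto.eventually_lt_const (show (0 : ℝ) < 1 / 2 by norm_num))
  refine ⟨N, fun n hn => ?_⟩
  have hlt := hN n hn
  rw [div_lt_iff₀ (by positivity)] at hlt
  have : (2 : ℝ) * (n : ℝ) ^ c ≤ 2 ^ n := by linarith
  exact_mod_cast this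

lemma exists_scales : ∃ L₀ : ℕ, ∀ L ≥ L₀, 10 ^ 6 ≤ L ∧ L ^ 600 ≤ 2 ^ L ∧
    ∃ a, 10 ^ 6 ≤ a ∧ a ^ 100 ≤ L ∧ L ≤ 2 ^ a := by
  obtain ⟨N₁, hN₁⟩ := exists_forall_two_mul_pow_le_two_pow 600
  obtain ⟨N₂, hN₂⟩ := exists_forall_two_mul_pow_le_two_pow 100
  refine ⟨N₁ + 2 ^ (N₂ + 10 ^ 6), fun L hL => ?_⟩
  have hN₂L : N₂ + 10 ^ 6 < 2 ^ (N₂ + 10 ^ 6) := Nat.lt_two_pow_self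
  have hL600 := hN₁ L (by omega)
  have hlog : N₂ + 10 ^ 6 ≤ Nat.log 2 L := Nat.le_log_of_pow_le (by norm_num) (by omega)
  refine ⟨by omega, by omega, Nat.log 2 L + 1, by omega, ?_,
    (Nat.lt_pow_succ_log_self (by norm_num) L).le⟩
  have ha := hN₂ (Nat.log 2 L + 1) (by omega)
  have : 2 ^ Nat.log 2 L ≤ L := Nat.pow_log_le_self 2 (by omega)
  rw [pow_succ 2] at ha
  omega

lemma exists_le_mul_two_pow {D n : ℕ} (hD : 0 < D) (hDn : D ≤ n) :
    ∃ L, n ≤ D * 2 ^ L ∧ D * 2 ^ L ≤ 2 * n := by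
  have hlow : 2 ^ Nat.log 2 (n / D) ≤ n / D :=
    Nat.pow_log_le_self 2 (Nat.div_pos hDn hD).ne'
  refine ⟨Nat.log 2 (n / D) + 1, ?_, ?_⟩
  · exact (Nat.lt_mul_div_succ n hD).le.trans
      (Nat.mul_le_mul_left _ (Nat.lt_pow_succ_log_self (by norm_num) _))
  · calc D * 2 ^ (Nat.log 2 (n / D) + 1) = 2 * (D * 2 ^ Nat.log 2 (n / D)) := by ring
      _ ≤ 2 * (D * (n / D)) := by gcongr
      _ ≤ 2 * n := Nat.mul_le_mul_left _ (Nat.mul_div_le n D)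

end Scales

lemma hasTK_one_of_card_le {V : Type*} [Fintype V] {G : SimpleGraph V} {k D P : ℕ} (hk : 1 ≤ k)
    (hP : 2 ≤ P) (hPD : 2 * P ^ 9 * (k * k) ≤ D) (hDV : D ≤ Fintype.card V)
    (hV : Fintype.card V ≤ D * P) (hsum : D * Fintype.card V ≤ degSum G univ) : HasTK G k 1 := by
  have hPV := hPD.trans hDV
  have hpos : 0 < 2 * P ^ 9 * (k * k) := by positivity
  refine hasTK_one_of_dense hP (W := univ) (by rw [card_univ]; omega) ?_ ?_ ?_
  · calc #(univ : Finset V) * Fintype.card V ≤ D * P * Fintype.card V :=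
          Nat.mul_le_mul_right _ (by rwa [card_univ])
      _ = P * (D * Fintype.card V) := by ring
      _ ≤ _ := Nat.mul_le_mul_left _ hsum
  · calc 2 * k * k * P ^ 9 = 2 * P ^ 9 * (k * k) := by ring
      _ ≤ Fintype.card V := hPV
  · rw [card_univ]
    have hP55 : 2 ^ 2 ≤ P ^ 55 :=
      (Nat.pow_le_pow_left hP 2).trans (Nat.pow_le_pow_right (by omega) (by norm_num))
    calc 2 * (2 * k * P) ^ 8 = 128 * (k ^ 8 * P ^ 8) * (2 ^ 2 * 1) := by ring
      _ ≤ 128 * (k ^ 8 * P ^ 8) * (P ^ 55 * k ^ 6) :=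
          Nat.mul_le_mul_left _ (Nat.mul_le_mul hP55 (Nat.one_le_pow _ _ hk))
      _ = (2 * P ^ 9 * (k * k)) ^ 7 := by ring
      _ ≤ Fintype.card V ^ 7 := Nat.pow_le_pow_left hPV 7

set_option exponentiation.threshold 1000 in
theorem exists_hasTK_of_isWeightMaximal : ∃ C : ℕ, 1 ≤ C ∧
    ∀ (V : Type*) [Fintype V] [Nonempty V] (H : SimpleGraph V) (_ : H.Coloring Bool) (k D : ℕ),
      1 ≤ k → C * (k * k) ≤ D → IsWeightMaximal H D → 2 * D * Fintype.card V ≤ degSum H univ →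
      (∀ v, degIn H univ v ≤ 10 ^ 6 * D ^ 2) → ∃ l, HasTK H k l := by
  obtain ⟨L₀, hL₀⟩ := exists_scales
  refine ⟨2 * (2 ^ (L₀ + 1)) ^ 9 + 10 ^ 8, by omega, ?_⟩
  intro V _ _ H χ k D hk hCD hmax hsum hΔ
  rw [add_mul] at hCD
  have hkk : k ≤ k * k := Nat.le_mul_self k
  have hmin := hmax.le_degIn hsum
  have hV : 0 < Fintype.card V := Fintype.card_pos
  have hDV : D ≤ Fintype.card V := (hmin (Classical.arbitrary V)).trans (degIn_le_card univ _)
  have hpos : 0 < degSum H univ := lt_of_lt_of_le (Nat.mul_pos (by omega) hV) hsum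
  obtain ⟨L, hVL, hLV⟩ := exists_le_mul_two_pow (by omega) hDV
  rcases Nat.lt_or_ge L L₀ with hL | hL
  · have hL' : 2 ^ L ≤ 2 ^ (L₀ + 1) := Nat.pow_le_pow_right (by norm_num) (by omega)
    refine ⟨1, hasTK_one_of_card_le (P := 2 ^ (L₀ + 1)) hk (Nat.le_self_pow (by omega) 2)
      (by omega) hDV (hVL.trans (Nat.mul_le_mul_left _ hL')) (le_trans ?_ hsum)⟩
    exact Nat.mul_le_mul_right _ (by omega)
  obtain ⟨hL6, hL600, a, ha6, haL, hLa⟩ := hL₀ L hL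
  have hE := hmax.expander (by omega) hpos (by omega) hVL hDV
  rcases Nat.le_total (L ^ 250) D with hDL | hDL
  · exact exists_hasTK_of_dense χ (by omega) hL6 hL600 hDL hLV hE hsum
  · refine exists_hasTK_of_sparse χ hk (by omega) (by omega) ha6 haL hLa hDL hLV hE
      (hmax.localExpander (by omega) hpos) hmin fun v => (hΔ v).trans ?_
    calc 10 ^ 6 * D ^ 2 ≤ 10 ^ 6 * (L ^ 250) ^ 2 := by gcongr
      _ = 10 ^ 6 * L ^ 500 := by rw [← pow_mul]
      _ ≤ L ^ 600 := scale_pow_le hL6 (by norm_num)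

/-! ### Balanced subdivisions in larger graphs and in 1-subdivisions -/

section Maps
variable {U V : Type*} {G : SimpleGraph V} {k l : ℕ}

lemma hasTK_map {A : SimpleGraph U} (f : A →g G) (hf : Function.Injective f) (h : HasTK A k l) :
    HasTK G k l := by
  obtain ⟨S, b, hb, P, hP, hlen, hdisj, -⟩ := h
  refine ⟨_, fun i => f (b i), hf.comp hb, fun i j h => (P i j h).map f,
    fun i j h => (hP i j h).map hf,
    fun i j h => by rw [Walk.length_map, hlen], fun i j h i' j' h' hne v hv hv' => ?_, rfl⟩
  rw [Walk.support_map, List.mem_map] at hv hv'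
  obtain ⟨x, hx, rfl⟩ := hv
  obtain ⟨y, hy, hyx⟩ := hv'
  obtain rfl := hf hyx
  obtain ⟨hx₁, hx₂⟩ := hdisj i j h i' j' h' hne y hx hy
  exact ⟨hx₁.imp (congrArg f) (congrArg f), hx₂.imp (congrArg f) (congrArg f)⟩

lemma hasTK_mono {G' : SimpleGraph V} (hle : G ≤ G') (h : HasTK G k l) : HasTK G' k l :=
  hasTK_map (Hom.ofLE hle) Function.injective_id h

lemma hasTK_comap (f : U ↪ V) (h : HasTK (G.comap f) k l) : HasTK G k l :=
  hasTK_map (Hom.comap f G) f.injective h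

lemma hasTK_zero_of_isNClique {S : Finset V} (h : G.IsNClique k S) : HasTK G k 0 := by
  let b := (S.equivFinOfCardEq h.card_eq).symm
  have hb : Function.Injective fun i => (b i : V) := Subtype.val_injective.comp b.injective
  refine ⟨_, fun i => b i, hb,
    fun i j hij => (h.isClique (b i).2 (b j).2 (hb.ne hij.ne)).toWalk,
    fun i j hij => Walk.IsPath.of_adj _, fun i j hij => by simp,
    fun i j hij i' j' hij' _ v hv hv' => ?_, rfl⟩
  simp only [Walk.support_cons, Walk.support_nil, List.mem_cons, List.not_mem_nil, or_false]
    at hv hv'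
  exact ⟨hv, hv'⟩

end Maps

section MidpointMap
variable {U V : Type*} {G : SimpleGraph V} {A : SimpleGraph U} {f : U ↪ V} {Y : Finset V}
  {m : Sym2 U → V} {k l : ℕ}

/-- The map `m` sends the edges of `A` injectively to vertices in `Y` adjacent to both ends of the
edge under `f`; for `Y` disjoint from the range of `f` this is a 1-subdivision of `A` in `G`. -/
structure IsMidpointMap (G : SimpleGraph V) (A : SimpleGraph U) (f : U ↪ V) (Y : Finset V)
    (m : Sym2 U → V) : Prop where
  mem : ∀ e ∈ A.edgeSet, m e ∈ Y
  adj : ∀ x y, A.Adj x y → G.Adj (f x) (m s(x, y))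
  injOn : Set.InjOn m A.edgeSet

namespace IsMidpointMap

lemma exists_isPath (h : IsMidpointMap G A f Y m) (hY : ∀ x, f x ∉ Y) {x y : U} (p : A.Walk x y)
    (hp : p.IsPath) : ∃ q : G.Walk (f x) (f y), q.IsPath ∧ q.length = 2 * p.length ∧
      ∀ v ∈ q.support, (∃ z ∈ p.support, v = f z) ∨ ∃ e ∈ p.edges, v = m e := by
  induction p with
  | nil => exact ⟨Walk.nil, by simp, by simp, by simp⟩
  | @cons x y z hxy p ih =>
    rw [Walk.cons_isPath_iff] at hp
    obtain ⟨q, hq, hlen, hsupp⟩ := ih hp.1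
    have hmid : G.Adj (m s(x, y)) (f y) := Sym2.eq_swap (a := x) ▸ (h.adj y x hxy.symm).symm
    have hmY : m s(x, y) ∈ Y := h.mem _ hxy
    have hmq : m s(x, y) ∉ q.support := fun hmem => by
      rcases hsupp _ hmem with ⟨w, -, hw⟩ | ⟨e, he, hme⟩
      · exact hY w (hw ▸ hmY)
      · rw [← h.injOn hxy (p.edges_subset_edgeSet he) hme] at he
        exact hp.2 (p.fst_mem_support_of_mem_edges he)
    have hxq : f x ∉ q.support := fun hmem => by
      rcases hsupp _ hmem with ⟨w, hw, hxw⟩ | ⟨e, he, hxe⟩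
      · exact hp.2 (f.injective hxw ▸ hw)
      · exact hY x (hxe ▸ h.mem e (p.edges_subset_edgeSet he))
    have hxm : f x ≠ m s(x, y) := (h.adj x y hxy).ne
    refine ⟨Walk.cons (h.adj x y hxy) (Walk.cons hmid q), ?_, ?_, fun v hv => ?_⟩
    · simp [Walk.cons_isPath_iff, hq, hmq, hxm, hxq]
    · simp only [Walk.length_cons, hlen]
      ring
    · simp only [Walk.support_cons, List.mem_cons, Walk.edges_cons] at hv ⊢
      grind

lemma eq_of_mem_edges {b : Fin k → U} (hb : Function.Injective b) {i j i' j' : Fin k}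
    (hij : i < j) (hij' : i' < j') {p : A.Walk (b i) (b j)} {p' : A.Walk (b i') (b j')}
    (hdisj : ∀ v ∈ p.support, v ∈ p'.support → (v = b i ∨ v = b j) ∧ (v = b i' ∨ v = b j'))
    {e : Sym2 U} (he : e ∈ p.edges) (he' : e ∈ p'.edges) : (i, j) = (i', j') := by
  induction e using Sym2.ind with
  | _ x y =>
    have hxy := (p.adj_of_mem_edges he).ne
    have hx := hdisj x (p.fst_mem_support_of_mem_edges he) (p'.fst_mem_support_of_mem_edges he')
    have hy := hdisj y (p.snd_mem_support_of_mem_edges he) (p'.snd_mem_support_of_mem_edges he')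
    have hends : s(b i, b j) = s(b i', b j') := by grind
    have : i = i' ∧ j = j' ∨ i = j' ∧ j = i' := by simpa [hb.eq_iff] using hends
    grind

lemma hasTK (h : IsMidpointMap G A f Y m) (hY : ∀ x, f x ∉ Y) (hA : HasTK A k l) :
    HasTK G k (2 * l + 1) := by
  obtain ⟨S, b, hb, P, hP, hlen, hdisj, -⟩ := hA
  choose Q hQ hQlen hQsupp using fun i j (hij : i < j) =>
    h.exists_isPath hY (P i j hij) (hP i j hij)
  refine ⟨_, fun i => f (b i), f.injective.comp hb, Q, hQ,
    fun i j hij => by rw [hQlen, hlen]; ring, fun i j hij i' j' hij' hne v hv hv' => ?_, rfl⟩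
  have hmem {i j : Fin k} (hij : i < j) {e} (he : e ∈ (P i j hij).edges) : e ∈ A.edgeSet :=
    (P i j hij).edges_subset_edgeSet he
  rcases hQsupp i j hij v hv with ⟨z, hz, rfl⟩ | ⟨e, he, rfl⟩ <;>
    rcases hQsupp i' j' hij' _ hv' with ⟨z', hz', hzz'⟩ | ⟨e', he', hee'⟩
  · obtain rfl := f.injective hzz'
    obtain ⟨hz₁, hz₂⟩ := hdisj i j hij i' j' hij' hne z hz hz'
    exact ⟨hz₁.imp (congrArg f) (congrArg f), hz₂.imp (congrArg f) (congrArg f)⟩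
  · exact absurd (hee' ▸ h.mem e' (hmem hij' he')) (hY z)
  · exact absurd (hzz' ▸ h.mem e (hmem hij he)) (hY z')
  · obtain rfl := h.injOn (hmem hij he) (hmem hij' he') hee'
    exact absurd (eq_of_mem_edges hb hij hij' (hdisj i j hij i' j' hij' hne) he he') hne

lemma sup_edge (h : IsMidpointMap G A f Y m) {x y : U} (hxy : x ≠ y) (hA : ¬ A.Adj x y) {v : V}
    (hv : v ∈ Y) (hvm : ∀ e ∈ A.edgeSet, m e ≠ v) (hx : G.Adj v (f x)) (hy : G.Adj v (f y)) :
    IsMidpointMap G (A ⊔ edge x y) f Y (Function.update m s(x, y) v) := by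
  have hupdate : ∀ e ∈ A.edgeSet, Function.update m s(x, y) v e = m e := fun e he =>
    Function.update_of_ne (by rintro rfl; exact hA he) ..
  have hedge {e} (he : e ∈ (A ⊔ edge x y).edgeSet) : e ∈ A.edgeSet ∨ e = s(x, y) := by
    simpa [edgeSet_edge_of_ne hxy, or_comm] using he
  refine ⟨fun e he => ?_, fun a b hab => ?_, fun e he e' he' hee' => ?_⟩
  · rcases hedge he with he | rfl
    · exact hupdate e he ▸ h.mem e he
    · rwa [Function.update_self]
  · rcases hedge (e := s(a, b)) hab with hab | hab
    · exact hupdate _ hab ▸ h.adj a b hab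
    · rw [hab, Function.update_self]
      rcases Sym2.eq_iff.1 hab with ⟨rfl, rfl⟩ | ⟨rfl, rfl⟩
      · exact hx.symm
      · exact hy.symm
  · rcases hedge he with he | rfl <;> rcases hedge he' with he' | rfl
    · rw [hupdate e he, hupdate e' he'] at hee'
      exact h.injOn he he' hee'
    · rw [hupdate e he, Function.update_self] at hee'
      exact absurd hee' (hvm e he)
    · rw [hupdate e' he', Function.update_self] at hee'
      exact absurd hee'.symm (hvm e' he')
    · rfl

end IsMidpointMap

-- A maximal 1-subdivision either uses all of `Y` as midpoints, or the neighbours in `Z` of an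
-- unused vertex form a clique, since any missing edge could still be subdivided.
lemma exists_isMidpointMap (G : SimpleGraph V) {Z Y : Finset V} (hY : ∀ v ∈ Y, k ≤ degIn G Z v) :
    ∃ (A : SimpleGraph Z) (m : Sym2 Z → V), IsMidpointMap G A (.subtype _) Y m ∧
      (HasTK A k 0 ∨ 2 * #Y ≤ degSum A univ) := by
  obtain ⟨A, ⟨m, hm⟩, hmax⟩ := Set.Finite.exists_maximal
    (s := {A : SimpleGraph Z | ∃ m, IsMidpointMap G A (.subtype _) Y m}) (Set.toFinite _)
    ⟨⊥, fun e => e.out.1, by simp, by simp, by simp⟩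
  refine ⟨A, m, hm, ?_⟩
  by_cases hcard : #Y ≤ #A.edgeFinset
  · refine .inr ((Nat.mul_le_mul_left 2 hcard).trans_eq ?_)
    rw [← sum_degrees_eq_twice_card_edges]
    refine sum_congr rfl fun v _ => ?_
    rw [degIn, ← card_neighborFinset_eq_degree, neighborFinset_eq_filter]
  left
  obtain ⟨v, hvY, hv⟩ := exists_mem_notMem_of_card_lt_card
    (card_image_le.trans_lt (not_le.1 hcard) : #(A.edgeFinset.image m) < #Y)
  have hvm : ∀ e ∈ A.edgeSet, m e ≠ v := fun e he hev =>
    hv (mem_image.2 ⟨e, mem_edgeFinset.2 he, hev⟩)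
  have hadj {x y : Z} (hxy : x ≠ y) (hx : G.Adj v x) (hy : G.Adj v y) : A.Adj x y := by
    by_contra hA
    have hle : A ⊔ edge x y ≤ A := hmax ⟨_, hm.sup_edge hxy hA hvY hvm hx hy⟩ le_sup_left
    exact hA (hle (Or.inr (by simp [edge_adj, hxy])))
  have hcardN : k ≤ #(univ.filter fun x : Z => G.Adj v x) := by
    refine (hY v hvY).trans_eq ?_
    rw [degIn, ← card_map (Function.Embedding.subtype _)]
    congr 1
    ext x
    simp [and_comm]
  obtain ⟨T, hT, hTk⟩ := exists_subset_card_eq hcardN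
  exact hasTK_zero_of_isNClique (S := T) ⟨fun x hx y hy hxy =>
    hadj hxy (mem_filter.1 (hT hx)).2 (mem_filter.1 (hT hy)).2, hTk⟩

end MidpointMap

/-! ### Extremal induced subgraphs and bipartite subgraphs -/

section Subgraphs
variable {U V : Type*} {G : SimpleGraph V}

lemma degIn_le_of_le {H : SimpleGraph V} (hle : H ≤ G) (S : Finset V) (v : V) :
    degIn H S v ≤ degIn G S v :=
  card_le_card (monotone_filter_right _ fun _ _ h => hle h)

lemma degIn_comap (f : U ↪ V) (T : Finset U) (v : U) :
    degIn (G.comap f) T v = degIn G (T.map f) (f v) := by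
  rw [degIn, degIn, filter_map, card_map]
  rfl

lemma degSum_comap (f : U ↪ V) (T : Finset U) : degSum (G.comap f) T = degSum G (T.map f) := by
  rw [degSum, degSum, sum_map]
  exact sum_congr rfl fun v _ => degIn_comap f T v

lemma degSum_comap_subtype (S : Finset V) :
    degSum (G.comap (Function.Embedding.subtype (· ∈ S))) univ = degSum G S := by
  rw [degSum_comap, univ_eq_attach, attach_map_val]

lemma exists_max_weighted_degSum [Finite V] [Nonempty V] (G : SimpleGraph V) (g : ℕ → ℝ) :
    ∃ S : Finset V, S.Nonempty ∧ ∀ T : Finset V, T.Nonempty →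
      (degSum G T : ℝ) * g #T * #S ≤ degSum G S * g #S * #T := by
  obtain ⟨S, hS, hmax⟩ := Set.exists_max_image {S : Finset V | S.Nonempty}
    (fun S => (degSum G S : ℝ) * g #S / #S) (Set.toFinite _)
    ⟨{Classical.arbitrary V}, singleton_nonempty _⟩
  have hpos {T : Finset V} (hT : T.Nonempty) : (0 : ℝ) < #T := Nat.cast_pos.2 hT.card_pos
  exact ⟨S, hS, fun T hT => (div_le_div_iff₀ (hpos hT) (hpos hS)).1 (hmax T hT)⟩

lemma exists_max_degSum [Finite V] [Nonempty V] (G : SimpleGraph V) :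
    ∃ S : Finset V, S.Nonempty ∧ ∀ T : Finset V, degSum G T * #S ≤ degSum G S * #T := by
  obtain ⟨S, hS, hmax⟩ := exists_max_weighted_degSum G 1
  refine ⟨S, hS, fun T => ?_⟩
  rcases T.eq_empty_or_nonempty with rfl | hT
  · simp [degSum_empty]
  · simpa [← Nat.cast_mul] using hmax T hT

lemma exists_isWeightMaximal_comap [Fintype V] [Nonempty V] (G : SimpleGraph V) (D : ℕ) :
    ∃ S : Finset V, S.Nonempty ∧
      IsWeightMaximal (G.comap (Function.Embedding.subtype (· ∈ S))) D ∧
      degSum G univ * #S ≤ 2 * degSum G S * Fintype.card V := by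
  obtain ⟨S, hS, hmax⟩ := exists_max_weighted_degSum G (weight D)
  refine ⟨S, hS, fun T hT => ?_, ?_⟩
  · have := hmax (T.map (.subtype _)) (hT.map)
    rwa [degSum_comap_subtype, degSum_comap, Fintype.card_coe, ← card_map (.subtype (· ∈ S))]
  · have hreal : (degSum G univ : ℝ) * #S ≤ 2 * degSum G S * Fintype.card V := calc
      (degSum G univ : ℝ) * #S ≤ degSum G univ * weight D #(univ : Finset V) * #S := by
        gcongr
        exact le_mul_of_one_le_right (Nat.cast_nonneg _) (one_le_weight D _)
      _ ≤ degSum G S * weight D #S * #(univ : Finset V) := hmax univ univ_nonempty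
      _ ≤ degSum G S * 2 * #(univ : Finset V) := by
        gcongr
        exact weight_le_two D _
      _ = 2 * degSum G S * Fintype.card V := by rw [card_univ]; ring
    exact_mod_cast hreal

lemma two_mul_card_filter_ne [Fintype V] {x y : V} (hxy : x ≠ y) :
    2 * #{χ : V → Bool | χ x ≠ χ y} = #(univ : Finset (V → Bool)) := by
  have hflip : #{χ : V → Bool | χ x ≠ χ y} = #{χ : V → Bool | ¬ χ x ≠ χ y} := by
    refine card_nbij' (fun χ => Function.update χ x (!χ x))
      (fun χ => Function.update χ x (!χ x)) ?_ ?_ ?_ ?_ <;> intro χ <;>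
      simp +contextual [Function.update_of_ne hxy.symm, Bool.not_eq_eq_eq_not, ← Bool.not_eq]
  have := card_filter_add_card_filter_not (s := (univ : Finset (V → Bool))) fun χ => χ x ≠ χ y
  omega

lemma exists_degSum_le_two_mul_degSum_inf_comap [Fintype V] (G : SimpleGraph V) :
    ∃ χ : V → Bool, degSum G univ ≤ 2 * degSum (G ⊓ (⊤ : SimpleGraph Bool).comap χ) univ := by
  have hsum : ∑ _χ : V → Bool, degSum G univ =
      ∑ χ : V → Bool, 2 * degSum (G ⊓ (⊤ : SimpleGraph Bool).comap χ) univ := by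
    simp only [degSum, degIn, card_filter, mul_sum]
    rw [sum_comm, sum_comm (s := (univ : Finset (V → Bool)))]
    refine sum_congr rfl fun x _ => ?_
    rw [sum_comm, sum_comm (s := (univ : Finset (V → Bool)))]
    refine sum_congr rfl fun y _ => ?_
    rw [← mul_sum]
    by_cases hxy : G.Adj x y
    · simpa only [hxy, inf_adj, comap_adj, top_adj, true_and, if_true, card_filter, sum_const,
        smul_eq_mul, mul_one] using (two_mul_card_filter_ne hxy.ne).symm
    · simp [hxy]
  obtain ⟨χ, -, hχ⟩ := exists_le_of_sum_le univ_nonempty hsum.le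
  exact ⟨χ, hχ⟩

end Subgraphs

/-! ### Removing or subdividing at vertices of large degree -/

section LargeDegree

theorem exists_hasTK_of_degIn_le : ∃ C : ℕ, 1 ≤ C ∧
    ∀ (V : Type*) [Fintype V] [Nonempty V] (G : SimpleGraph V) (k d : ℕ), 1 ≤ k → C * (k * k) ≤ d →
      d * Fintype.card V ≤ 2 * degSum G univ → (∀ v, degIn G univ v ≤ 64 * d ^ 2) →
      ∃ l, HasTK G k l := by
  obtain ⟨C, hC, hTK⟩ := exists_hasTK_of_isWeightMaximal
  refine ⟨16 * C, by omega, fun V _ _ G k d hk hkd hsum hΔ => ?_⟩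
  have hd : 16 ≤ d := by
    have : 0 < C * (k * k) := by positivity
    rw [mul_assoc] at hkd
    omega
  obtain ⟨χ, hχ⟩ := exists_degSum_le_two_mul_degSum_inf_comap G
  set B := G ⊓ (⊤ : SimpleGraph Bool).comap χ
  obtain ⟨S, hS, hmax, hBS⟩ := exists_isWeightMaximal_comap B (d / 16)
  have hSd : d * #S ≤ 8 * degSum B S := by
    refine Nat.le_of_mul_le_mul_right ?_ (Fintype.card_pos (α := V))
    calc d * #S * Fintype.card V = d * Fintype.card V * #S := by ring
      _ ≤ 4 * degSum B univ * #S := Nat.mul_le_mul_right _ (by omega)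
      _ = 4 * (degSum B univ * #S) := by ring
      _ ≤ 4 * (2 * degSum B S * Fintype.card V) := by gcongr
      _ = 8 * degSum B S * Fintype.card V := by ring
  let f : S ↪ V := .subtype _
  have hdeg (v : S) : degIn (B.comap f) univ v ≤ 10 ^ 6 * (d / 16) ^ 2 := calc
    degIn (B.comap f) univ v
        ≤ degIn B univ v := (degIn_comap _ _ v).trans_le (degIn_mono (subset_univ _) _)
    _ ≤ degIn G univ v := degIn_le_of_le inf_le_left _ _
    _ ≤ 64 * d ^ 2 := hΔ v
    _ ≤ 64 * (31 * (d / 16)) ^ 2 := by gcongr; omega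
    _ ≤ 10 ^ 6 * (d / 16) ^ 2 := by rw [mul_pow]; omega
  have : Nonempty S := hS.to_subtype
  have hsumS : 2 * (d / 16) * Fintype.card S ≤ degSum (B.comap f) univ := by
    rw [degSum_comap_subtype, Fintype.card_coe]
    have : 16 * (d / 16) * #S ≤ d * #S := Nat.mul_le_mul_right _ (Nat.mul_div_le d 16)
    rw [mul_assoc] at this ⊢
    omega
  have hkD : C * (k * k) ≤ d / 16 := by
    rw [mul_assoc] at hkd
    omega
  obtain ⟨l, hl⟩ := hTK S (B.comap f) (.mk (fun v => χ v) fun h => h.2) k _ hk hkD hmax hsumS hdeg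
  exact ⟨l, hasTK_mono inf_le_left (hasTK_comap f hl)⟩

variable {V : Type*} [Fintype V] {G : SimpleGraph V} {Z Y : Finset V} {k d : ℕ}

lemma sum_degIn_le (hY : ∀ v ∉ Z, k ≤ degIn G Z v → v ∈ Y) :
    ∑ v ∈ Z, degIn G univ v ≤ degSum G (Z ∪ Y) + k * Fintype.card V := by
  have hle (v : V) : degIn G Z v ≤ (if v ∈ Z ∪ Y then degIn G (Z ∪ Y) v else 0) + k := by
    split_ifs with hv
    · exact le_add_right (degIn_mono subset_union_left v)
    · rw [mem_union, not_or] at hv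
      have := mt (hY v hv.1) hv.2
      omega
  calc ∑ v ∈ Z, degIn G univ v = ∑ v, degIn G Z v := sum_degIn_comm _ _
    _ ≤ ∑ v, ((if v ∈ Z ∪ Y then degIn G (Z ∪ Y) v else 0) + k) := sum_le_sum fun v _ => hle v
    _ = degSum G (Z ∪ Y) + k * Fintype.card V := by
      rw [sum_add_distrib, sum_ite_mem, univ_inter, degSum, sum_const, card_univ, smul_eq_mul,
        mul_comm k]

lemma card_le_of_le_degIn (hd : 1 ≤ d) (hG : degSum G univ ≤ 2 * d * Fintype.card V)
    (hZ : ∀ v ∈ Z, 64 * d ^ 2 ≤ degIn G univ v) : 32 * d * #Z ≤ Fintype.card V := by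
  refine Nat.le_of_mul_le_mul_left ?_ (show 0 < 2 * d by omega)
  calc 2 * d * (32 * d * #Z) = #Z * (64 * d ^ 2) := by ring
    _ ≤ ∑ v ∈ Z, degIn G univ v := card_nsmul_le_sum _ _ _ hZ
    _ ≤ degSum G univ := sum_le_sum_of_subset (subset_univ Z)
    _ ≤ 2 * d * Fintype.card V := hG

lemma card_le_card_of_le_sum_degIn (hd : 1 ≤ d) (hkd : 64 * k ≤ d)
    (hG : ∀ T, degSum G T ≤ 2 * d * #T) (hZ : ∀ v ∈ Z, 64 * d ^ 2 ≤ degIn G univ v)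
    (hsum : d * Fintype.card V ≤ 4 * ∑ v ∈ Z, degIn G univ v)
    (hY : ∀ v ∉ Z, k ≤ degIn G Z v → v ∈ Y) : 2 * d * #Z ≤ #Y := by
  have hZV := card_le_of_le_degIn hd (hG univ) hZ
  have hYV : Fintype.card V ≤ 16 * #Y := by
    refine Nat.le_of_mul_le_mul_left ?_ hd
    have hZY := (hG (Z ∪ Y)).trans (Nat.mul_le_mul_left _ (card_union_le Z Y))
    have := sum_degIn_le hY
    have : 64 * k * Fintype.card V ≤ d * Fintype.card V := Nat.mul_le_mul_right _ hkd
    have : Fintype.card V ≤ d * Fintype.card V := Nat.le_mul_of_pos_left _ hd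
    nlinarith
  nlinarith

lemma hasTK_one_or_exists_dense (hd : 1 ≤ d) (hkd : 64 * k ≤ d)
    (hG : ∀ T, degSum G T ≤ 2 * d * #T) (hZ : ∀ v ∈ Z, 64 * d ^ 2 ≤ degIn G univ v)
    (hsum : d * Fintype.card V ≤ 4 * ∑ v ∈ Z, degIn G univ v) :
    HasTK G k 1 ∨ ∃ A : SimpleGraph Z, 4 * d * #Z ≤ degSum A univ ∧
      ∀ l, HasTK A k l → HasTK G k (2 * l + 1) := by
  let Y : Finset V := {v | v ∉ Z ∧ k ≤ degIn G Z v}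
  obtain ⟨A, m, hm, hA⟩ := exists_isMidpointMap G fun v (hv : v ∈ Y) => (mem_filter.1 hv).2.2
  have hAG (l) : HasTK A k l → HasTK G k (2 * l + 1) :=
    hm.hasTK fun x hx => (mem_filter.1 hx).2.1 x.2
  refine hA.imp (hAG 0) fun hA => ⟨A, ?_, hAG⟩
  have hZY : 2 * d * #Z ≤ #Y := card_le_card_of_le_sum_degIn hd hkd hG hZ hsum
    fun v hvZ hv => mem_filter.2 ⟨mem_univ v, hvZ, hv⟩
  calc 4 * d * #Z = 2 * (2 * d * #Z) := by ring
    _ ≤ 2 * #Y := by gcongr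
    _ ≤ degSum A univ := hA

end LargeDegree

theorem exists_hasTK_or_exists_dense : ∃ C : ℕ, 1 ≤ C ∧
    ∀ (V : Type*) [Fintype V] [Nonempty V] (G : SimpleGraph V) (k d : ℕ), 1 ≤ k → C * (k * k) ≤ d →
      d * Fintype.card V ≤ degSum G univ → (∀ T, degSum G T ≤ 2 * d * #T) →
      (∃ l, HasTK G k l) ∨ ∃ (Z : Finset V) (A : SimpleGraph Z), Z.Nonempty ∧
        #Z < Fintype.card V ∧ 4 * d * #Z ≤ degSum A univ ∧
        ∀ l, HasTK A k l → HasTK G k (2 * l + 1) := by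
  obtain ⟨C, hC, hTK⟩ := exists_hasTK_of_degIn_le
  refine ⟨64 * C, by omega, fun V _ _ G k d hk hkd hsum hT => ?_⟩
  have hkC : k ≤ C * (k * k) := (Nat.le_mul_self k).trans (Nat.le_mul_of_pos_left _ hC)
  rw [mul_assoc] at hkd
  have hdV : 0 < d * Fintype.card V := Nat.mul_pos (by omega) Fintype.card_pos
  let Z : Finset V := {v | 64 * d ^ 2 ≤ degIn G univ v}
  have hZ : ∀ v ∈ Z, 64 * d ^ 2 ≤ degIn G univ v := fun v hv => (mem_filter.1 hv).2
  rcases lt_or_ge (4 * ∑ v ∈ Z, degIn G univ v) (d * Fintype.card V) with hlow | hhigh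
  · left
    have hcompl := degSum_univ_le_compl_add (H := G) Z
    have : Nonempty ↥Zᶜ := by
      refine (nonempty_iff_ne_empty.2 fun h => ?_).to_subtype
      rw [h, degSum_empty] at hcompl
      omega
    let f : ↥Zᶜ ↪ V := .subtype _
    have hsumZ : d * Fintype.card ↥Zᶜ ≤ 2 * degSum (G.comap f) univ := by
      rw [degSum_comap_subtype, Fintype.card_coe]
      have : d * #Zᶜ ≤ d * Fintype.card V := Nat.mul_le_mul_left _ (card_le_univ _)
      omega
    have hdegZ (v : ↥Zᶜ) : degIn (G.comap f) univ v ≤ 64 * d ^ 2 := by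
      have hv : ¬ 64 * d ^ 2 ≤ degIn G univ v := by simpa [Z] using v.2
      exact (degIn_comap f _ v).trans_le ((degIn_mono (subset_univ _) _).trans (not_le.1 hv).le)
    obtain ⟨l, hl⟩ := hTK ↥Zᶜ (G.comap f) k d hk (by omega) hsumZ hdegZ
    exact ⟨l, hasTK_comap f hl⟩
  · obtain h | ⟨A, hA, hAG⟩ := hasTK_one_or_exists_dense (k := k) (by omega) (by omega) hT hZ
        hhigh
    · exact .inl ⟨1, h⟩
    have hZne : Z.Nonempty := nonempty_iff_ne_empty.2 fun h => by simp [h] at hhigh; omega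
    have hZV := card_le_of_le_degIn (by omega) (hT univ) hZ
    have hdZ : #Z ≤ d * #Z := Nat.le_mul_of_pos_left _ (by omega)
    have hZ0 := hZne.card_pos
    rw [mul_assoc] at hZV
    exact .inr ⟨Z, A, hZne, by omega, hA, hAG⟩

/-! ### Every dense graph contains a balanced subdivision -/

theorem exists_hasTK_of_le_degSum : ∃ C : ℕ, 1 ≤ C ∧
    ∀ (V : Type*) [Fintype V] [Nonempty V] (G : SimpleGraph V) (k : ℕ), 1 ≤ k →
      C * (k * k) * Fintype.card V ≤ degSum G univ → ∃ l, HasTK G k l := by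
  obtain ⟨C, hC, hstep⟩ := exists_hasTK_or_exists_dense
  refine ⟨C, hC, fun V _ _ G k hk hG => ?_⟩
  induction hn : Fintype.card V using Nat.strong_induction_on generalizing V with
  | _ n ih =>
  obtain ⟨S, hS, hmax⟩ := exists_max_degSum G
  have : Nonempty S := hS.to_subtype
  have hS0 : 0 < #S := hS.card_pos
  let f : S ↪ V := .subtype _
  let d := degSum G S / #S
  have hkd : C * (k * k) ≤ d := by
    rw [Nat.le_div_iff_mul_le hS0]
    refine Nat.le_of_mul_le_mul_right ?_ (Fintype.card_pos (α := V))
    calc C * (k * k) * #S * Fintype.card V = C * (k * k) * Fintype.card V * #S := by ring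
      _ ≤ degSum G univ * #S := Nat.mul_le_mul_right _ hG
      _ ≤ degSum G S * Fintype.card V := hmax univ
  have hd : 1 ≤ d := le_trans (Nat.mul_pos hC (by positivity)) hkd
  have hsum : d * Fintype.card S ≤ degSum (G.comap f) univ := by
    rw [degSum_comap_subtype, Fintype.card_coe]
    exact Nat.div_mul_le_self _ _
  have hT (T : Finset S) : degSum (G.comap f) T ≤ 2 * d * #T := by
    rw [degSum_comap]
    refine Nat.le_of_mul_le_mul_right ((hmax _).trans ?_) hS0
    calc degSum G S * #(T.map f) = degSum G S * #T := by rw [card_map]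
      _ ≤ #S * (d + 1) * #T := Nat.mul_le_mul_right _ (Nat.lt_mul_div_succ _ hS0).le
      _ ≤ #S * (2 * d) * #T := by gcongr; omega
      _ = 2 * d * #T * #S := by ring
  obtain h | ⟨Z, A, hZ, hZS, hA, hAG⟩ := hstep S (G.comap f) k d hk hkd hsum hT
  · exact h.imp fun l => hasTK_comap f
  · have hZn : #Z < n := hn ▸ hZS.trans_le (Fintype.card_le_of_embedding f)
    have hAC : C * (k * k) * Fintype.card Z ≤ degSum A univ := by
      rw [Fintype.card_coe]
      exact (Nat.mul_le_mul_right _ (by omega)).trans hA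
    obtain ⟨l, hl⟩ := ih _ hZn Z inferInstance hZ.to_subtype A hAC (Fintype.card_coe Z)
    exact ⟨_, hasTK_comap f (hAG l hl)⟩

/-! ### Disjoint isomorphic copies -/

section Copies
variable {V : Type*} {G : SimpleGraph V}

lemma avgDeg_eq [Fintype V] (G : SimpleGraph V) :
    avgDeg G = (degSum G univ : ℝ) / Fintype.card V := by
  simp only [avgDeg, Nat.card_eq_fintype_card, finsum_eq_sum_of_fintype, degSum, degIn,
    Nat.cast_sum, ← Set.ncard_coe_finset, coe_filter, mem_univ, true_and]
  rfl

lemma exists_disjoint_isTK_of_hasTK {t k l : ℕ} (h : HasTK G (t * k) l) :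
    ∃ S : Fin t → Set V, (∀ s, IsTK G k l (S s)) ∧ ∀ s s', s ≠ s' → Disjoint (S s) (S s') := by
  obtain ⟨-, b, hb, P, hP, hlen, hdisj, -⟩ := h
  let index (s : Fin t) (i : Fin k) : Fin (t * k) := finProdFinEquiv (s, i)
  have hinj {s s' i i'} (h : index s i = index s' i') : s = s' ∧ i = i' := by
    simpa [index] using h
  have hlt {s i j} (h : i < j) : index s i < index s j := by
    rw [Fin.lt_def] at h ⊢
    exact Nat.add_lt_add_right h _
  refine ⟨fun s => {v | ∃ (i j : Fin k) (h : i < j), v ∈ (P _ _ (hlt (s := s) h)).support},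
    fun s => ⟨fun i => b (index s i), fun i j hij => (hinj (hb hij)).2, fun i j h => P _ _ (hlt h),
      fun i j h => hP _ _ _, fun i j h => hlen _ _ _, fun i j h i' j' h' hne => ?_, rfl⟩,
    fun s s' hne => Set.disjoint_left.2 ?_⟩
  · exact hdisj _ _ _ _ _ _ (by grind)
  · rintro v ⟨i, j, h, hv⟩ ⟨i', j', h', hv'⟩
    obtain ⟨hvs, hvs'⟩ := hdisj _ _ _ _ _ _ (by grind) v hv hv'
    grind [Function.Injective]

end Copies

end BalancedSubdivision

theorem statement_1_general :
    ∃ C : Real, 0 < C ∧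
      ∀ t k : Nat, 1 ≤ t → 1 ≤ k →
        ∀ (V : Type*) [Fintype V] (G : SimpleGraph V),
          C * ((t : Real) * (k : Real)) ^ 2 ≤ avgDeg G →
          ∃ (l : Nat) (S : Fin t → Set V),
            (∀ s, IsTK G k l (S s)) ∧
            (∀ s s', s ≠ s' → Disjoint (S s) (S s')) := by
  obtain ⟨C, hC, hTK⟩ := BalancedSubdivision.exists_hasTK_of_le_degSum
  refine ⟨C, by positivity, fun t k ht hk V _ G hG => ?_⟩
  have htk : (0 : ℝ) < C * ((t : ℝ) * k) ^ 2 := by positivity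
  rw [BalancedSubdivision.avgDeg_eq] at hG
  have hV : (0 : ℝ) < Fintype.card V := by
    refine Nat.cast_pos.2 (Nat.pos_of_ne_zero fun h => ?_)
    rw [h, Nat.cast_zero, div_zero] at hG
    exact hG.not_gt htk
  have : Nonempty V := Fintype.card_pos_iff.1 (Nat.cast_pos.1 hV)
  rw [le_div_iff₀ hV] at hG
  obtain ⟨l, hl⟩ := hTK V G (t * k) (Nat.mul_pos ht hk) (by
    rw [sq] at hG
    exact_mod_cast hG)
  exact ⟨l, BalancedSubdivision.exists_disjoint_isTK_of_hasTK hl⟩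

theorem statement_1 :
    ∃ C : Real, 0 < C ∧
      ∀ t k : Nat, 1 ≤ t → 1 ≤ k →
        ∀ (V : Type) [Fintype V] (G : SimpleGraph V),
          C * ((t : Real) * (k : Real)) ^ 2 ≤ avgDeg G →
          ∃ (l : Nat) (S : Fin t → Set V),
            (∀ s, IsTK G k l (S s)) ∧
            (∀ s s', s ≠ s' → Disjoint (S s) (S s')) :=
  statement_1_general
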